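/- Let G be a finite group satisfying the two-prime hypothesis with normal subgroups N ≤ M such that M/N ≅ PSL_2(9) (the alternating group A_6) and the centralizer of M/N in G/N is trivial. Then |cd(G)| ≤ 16. -/

import Mathlib

open CategoryTheory

/-- The set of degrees of the complex irreducible characters of `G`. -/
def charDegrees (G : Type) [Group G] : Set ℕ :=
  {n | ∃ V : FDRep ℂ G, Simple V ∧ Module.finrank ℂ V = n}

/-- `G` satisfies the two-prime hypothesis: for any distinct irreducible character degrees
`a`, `b`, the gcd `gcd a b` has at most two prime divisors counted with multiplicity. -/
def TwoPrimeHypothesis (G : Type) [Group G] : Prop :=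
  ∀ a ∈ charDegrees G, ∀ b ∈ charDegrees G, a ≠ b →
    (Nat.gcd a b).primeFactorsList.length ≤ 2

/-- `PSL₂(F)`: the quotient of `SL₂(F)` by its center. -/
abbrev PSL2 (F : Type) [Field F] : Type :=
  Matrix.SpecialLinearGroup (Fin 2) F ⧸
    Subgroup.center (Matrix.SpecialLinearGroup (Fin 2) F)

namespace CDB

section basics

variable {G : Type} [Group G] {U V W : Type} [AddCommGroup U] [Module ℂ U]
  [AddCommGroup V] [Module ℂ V] [AddCommGroup W] [Module ℂ W]

/-- A submodule is stable under a representation. -/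
def Stab (ρ : Representation ℂ G V) (S : Submodule ℂ V) : Prop :=
  ∀ g v, v ∈ S → ρ g v ∈ S

/-- Irreducibility in elementary terms. -/
def Irr (ρ : Representation ℂ G V) : Prop :=
  Nontrivial V ∧ ∀ S : Submodule ℂ V, Stab ρ S → S = ⊥ ∨ S = ⊤

/-- restriction of a representation to a stable submodule -/
def sub (ρ : Representation ℂ G V) (S : Submodule ℂ V) (h : Stab ρ S) :
    Representation ℂ G S where
  toFun g := (ρ g).restrict (h g)
  map_one' := by ext; simp
  map_mul' x y := by ext; simp

@[simp] lemma sub_apply (ρ : Representation ℂ G V) (S : Submodule ℂ V) (h : Stab ρ S) (g : G)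
    (v : S) : ((sub ρ S h g v : S) : V) = ρ g v := rfl

/-- intertwining maps -/
def Hm (σ : Representation ℂ G U) (ρ : Representation ℂ G V) : Submodule ℂ (U →ₗ[ℂ] V) where
  carrier := {φ | ∀ g u, φ (σ g u) = ρ g (φ u)}
  add_mem' := by intro a b ha hb g u; simp [ha g u, hb g u]
  zero_mem' := by intro g u; simp
  smul_mem' := by intro c a ha g u; simp [ha g u]

lemma mem_Hm {σ : Representation ℂ G U} {ρ : Representation ℂ G V} {φ : U →ₗ[ℂ] V} :
    φ ∈ Hm σ ρ ↔ ∀ g u, φ (σ g u) = ρ g (φ u) := Iff.rfl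

lemma rinv (ρ : Representation ℂ G V) (g : G) (v : V) : ρ g⁻¹ (ρ g v) = v := by
  rw [← Module.End.mul_apply, ← map_mul]; simp

lemma rinv' (ρ : Representation ℂ G V) (g : G) (v : V) : ρ g (ρ g⁻¹ v) = v := by
  rw [← Module.End.mul_apply, ← map_mul]; simp

lemma rmul (ρ : Representation ℂ G V) (g h : G) (v : V) : ρ (g * h) v = ρ g (ρ h v) := by
  rw [map_mul]; rfl

/-- Maschke -/
lemma exists_proj [Finite G] (ρ : Representation ℂ G V) (S : Submodule ℂ V) (h : Stab ρ S) :
    ∃ p ∈ Hm ρ (sub ρ S h), ∀ v : S, p v = v := by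
  classical
  have := Fintype.ofFinite G
  obtain ⟨p, hp⟩ := LinearMap.exists_leftInverse_of_injective S.subtype (by simp)
  have hp' : ∀ v : S, p v = v := fun v => by simpa using LinearMap.congr_fun hp v
  refine ⟨(Fintype.card G : ℂ)⁻¹ • ∑ g : G, (sub ρ S h g⁻¹) ∘ₗ p ∘ₗ (ρ g), ?_, ?_⟩
  · intro x v
    simp only [LinearMap.smul_apply, LinearMap.sum_apply, LinearMap.comp_apply, map_smul, map_sum]
    congr 1
    refine Fintype.sum_equiv (Equiv.mulRight x) _ _ fun g => ?_
    simp only [Equiv.coe_mulRight, mul_inv_rev]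
    rw [rmul (sub ρ S h), rinv', rmul]
  · intro v
    simp only [LinearMap.smul_apply, LinearMap.sum_apply, LinearMap.comp_apply]
    have : ∀ g : G, (sub ρ S h g⁻¹) (p (ρ g v)) = v := by
      intro g
      have : ρ g v = ((sub ρ S h g v : S) : V) := rfl
      rw [this, hp', rinv]
    have h0 : (Fintype.card G : ℂ) ≠ 0 := Nat.cast_ne_zero.2 Fintype.card_ne_zero
    simp only [this, Finset.sum_const, Finset.card_univ]
    rw [← Nat.cast_smul_eq_nsmul ℂ, smul_smul, inv_mul_cancel₀ h0, one_smul]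

lemma Irr.nontriv {ρ : Representation ℂ G V} (h : Irr ρ) : Nontrivial V := h.1

lemma stab_ker {σ : Representation ℂ G U} {ρ : Representation ℂ G V} {φ : U →ₗ[ℂ] V}
    (h : φ ∈ Hm σ ρ) : Stab σ (LinearMap.ker φ) := by
  intro g v hv
  rw [LinearMap.mem_ker] at *
  rw [h g v, hv, map_zero]

lemma stab_range {σ : Representation ℂ G U} {ρ : Representation ℂ G V} {φ : U →ₗ[ℂ] V}
    (h : φ ∈ Hm σ ρ) : Stab ρ (LinearMap.range φ) := by
  rintro g _ ⟨v, rfl⟩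
  exact ⟨σ g v, h g v⟩

lemma Irr.inj {σ : Representation ℂ G U} {ρ : Representation ℂ G V} (hσ : Irr σ) {φ : U →ₗ[ℂ] V}
    (h : φ ∈ Hm σ ρ) (h0 : φ ≠ 0) : Function.Injective φ := by
  rcases hσ.2 _ (stab_ker h) with h1 | h1
  · exact LinearMap.ker_eq_bot.1 h1
  · exact absurd (LinearMap.ker_eq_top.1 h1) h0

lemma Irr.surj {σ : Representation ℂ G U} {ρ : Representation ℂ G V} (hρ : Irr ρ) {φ : U →ₗ[ℂ] V}
    (h : φ ∈ Hm σ ρ) (h0 : φ ≠ 0) : Function.Surjective φ := by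
  rcases hρ.2 _ (stab_range h) with h1 | h1
  · exact absurd (LinearMap.range_eq_bot.1 h1) h0
  · exact LinearMap.range_eq_top.1 h1

/-- an irreducible family of operators: Schur -/
lemma schur_family [FiniteDimensional ℂ V] [Nontrivial V] {ι : Type} (B : ι → V →ₗ[ℂ] V)
    (hB : ∀ S : Submodule ℂ V, (∀ i v, v ∈ S → B i v ∈ S) → S = ⊥ ∨ S = ⊤)
    (f : V →ₗ[ℂ] V) (hf : ∀ i v, f (B i v) = B i (f v)) : ∃ c : ℂ, ∀ v, f v = c • v := by
  obtain ⟨c, hc⟩ := Module.End.exists_eigenvalue f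
  refine ⟨c, ?_⟩
  rcases hB (Module.End.eigenspace f c) (by
    intro i v hv
    rw [Module.End.mem_eigenspace_iff] at *
    rw [hf, hv, map_smul]) with h | h
  · exact absurd h hc
  · intro v
    have : v ∈ Module.End.eigenspace f c := by rw [h]; trivial
    exact Module.End.mem_eigenspace_iff.1 this

lemma schur [FiniteDimensional ℂ V] {ρ : Representation ℂ G V} (hρ : Irr ρ) {f : V →ₗ[ℂ] V}
    (hf : f ∈ Hm ρ ρ) : ∃ c : ℂ, ∀ v, f v = c • v :=
  have := hρ.1
  schur_family (fun g => ρ g) hρ.2 f hf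

lemma finrank_Hm_self [FiniteDimensional ℂ V] {ρ : Representation ℂ G V} (hρ : Irr ρ) :
    Module.finrank ℂ (Hm ρ ρ) = 1 := by
  have := hρ.1
  refine finrank_eq_one (⟨LinearMap.id, fun g u => rfl⟩ : Hm ρ ρ) ?_ ?_
  · intro h
    obtain ⟨v, hv⟩ := exists_ne (0 : V)
    exact hv (LinearMap.congr_fun (Subtype.ext_iff.1 h) v)
  · rintro ⟨f, hf⟩
    obtain ⟨c, hc⟩ := schur hρ hf
    exact ⟨c, by ext v; simp [hc v]⟩

/-- post-composition with an isomorphism -/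
lemma finrank_Hm_congr_left {σ : Representation ℂ G U} {τ : Representation ℂ G W}
    {ρ : Representation ℂ G V} (e : U ≃ₗ[ℂ] W) (he : ∀ g u, e (σ g u) = τ g (e u)) :
    Module.finrank ℂ (Hm σ ρ) = Module.finrank ℂ (Hm τ ρ) := by
  have he' : ∀ g u, e.symm (τ g u) = σ g (e.symm u) := fun g u => by
    rw [LinearEquiv.symm_apply_eq, he]; simp
  refine LinearEquiv.finrank_eq
    { toFun := fun φ => ⟨φ.1 ∘ₗ e.symm.toLinearMap, fun g u => by
        simp [he', φ.2 g]⟩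
      invFun := fun φ => ⟨φ.1 ∘ₗ e.toLinearMap, fun g u => by simp [he, φ.2 g]⟩
      map_add' := fun a b => by ext; simp
      map_smul' := fun a b => by ext; simp
      left_inv := fun a => by ext; simp
      right_inv := fun a => by ext; simp }

lemma finrank_Hm_congr_right {σ : Representation ℂ G U} {τ : Representation ℂ G W}
    {ρ : Representation ℂ G V} (e : U ≃ₗ[ℂ] W) (he : ∀ g u, e (σ g u) = τ g (e u)) :
    Module.finrank ℂ (Hm ρ σ) = Module.finrank ℂ (Hm ρ τ) := by
  have he' : ∀ g u, e.symm (τ g u) = σ g (e.symm u) := fun g u => by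
    rw [LinearEquiv.symm_apply_eq, he]; simp
  refine LinearEquiv.finrank_eq
    { toFun := fun φ => ⟨e.toLinearMap ∘ₗ φ.1, fun g u => by
        simp [he, φ.2 g]⟩
      invFun := fun φ => ⟨e.symm.toLinearMap ∘ₗ φ.1, fun g u => by simp [he', φ.2 g]⟩
      map_add' := fun a b => by ext; simp
      map_smul' := fun a b => by ext; simp
      left_inv := fun a => by ext; simp
      right_inv := fun a => by ext; simp }

lemma finrank_Hm_irr [FiniteDimensional ℂ U] {σ : Representation ℂ G U} {ρ : Representation ℂ G V}
    (hσ : Irr σ) (hρ : Irr ρ) {φ : U →ₗ[ℂ] V} (h : φ ∈ Hm σ ρ) (h0 : φ ≠ 0) :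
    Module.finrank ℂ (Hm σ ρ) = 1 := by
  let e := LinearEquiv.ofBijective φ ⟨hσ.inj h h0, hρ.surj h h0⟩
  rw [← finrank_Hm_congr_right (σ := σ) (τ := ρ) e h]
  exact finrank_Hm_self hσ

/-- every nonzero stable submodule contains an irreducible one -/
lemma exists_irr_sub [FiniteDimensional ℂ V] (ρ : Representation ℂ G V) (S : Submodule ℂ V)
    (hS : Stab ρ S) (h0 : S ≠ ⊥) :
    ∃ (T : Submodule ℂ V) (hT : Stab ρ T), T ≤ S ∧ Irr (sub ρ T hT) := by
  classical
  have key : ∀ d (S : Submodule ℂ V), Stab ρ S → S ≠ ⊥ → Module.finrank ℂ S ≤ d →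
      ∃ (T : Submodule ℂ V) (hT : Stab ρ T), T ≤ S ∧ Irr (sub ρ T hT) := by
    intro d
    induction d with
    | zero =>
      intro S _ h0 hd
      exact absurd (Submodule.finrank_eq_zero.1 (Nat.le_zero.1 hd)) h0
    | succ d ih =>
      intro S hS h0 hd
      by_cases hirr : Irr (sub ρ S hS)
      · exact ⟨S, hS, le_rfl, hirr⟩
      · have hnt : Nontrivial S := Submodule.nontrivial_iff_ne_bot.2 h0
        simp only [Irr, not_and, not_forall, not_or] at hirr
        obtain ⟨R, hR, hR0, hR1⟩ := hirr hnt
        have hR' : Stab ρ (R.map S.subtype) := by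
          rintro g _ ⟨v, hv, rfl⟩
          exact ⟨sub ρ S hS g v, hR g v hv, rfl⟩
        have hlt : Module.finrank ℂ (R.map S.subtype) < Module.finrank ℂ S := by
          rw [Submodule.finrank_map_subtype_eq]
          exact Submodule.finrank_lt (lt_top_iff_ne_top.2 hR1).ne
        obtain ⟨T, hT, hTR, hi⟩ := ih _ hR' (by
          intro h
          refine hR0 ((Submodule.eq_bot_iff R).2 fun x hx => Subtype.ext ?_)
          have : (x : V) ∈ R.map S.subtype := ⟨x, hx, rfl⟩
          rw [h] at this
          exact (Submodule.mem_bot ℂ).1 this)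
          (by omega)
        exact ⟨T, hT, hTR.trans (Submodule.map_subtype_le S R), hi⟩
  exact key _ S hS h0 le_rfl

/-- complete reducibility, in the form of an equivariant isomorphism with a finite product of
irreducible representations -/
lemma exists_decomp [Finite G] [FiniteDimensional ℂ V] (ρ : Representation ℂ G V) :
    ∃ (ι : Type) (_ : Fintype ι) (S : ι → Submodule ℂ V) (hS : ∀ i, Stab ρ (S i)),
      (∀ i, Irr (sub ρ (S i) (hS i))) ∧ ∃ e : V ≃ₗ[ℂ] (∀ i, S i),
        ∀ g v i, e (ρ g v) i = sub ρ (S i) (hS i) g (e v i) := by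
  classical
  have key : ∀ d (Y : Submodule ℂ V) (hY : Stab ρ Y), Module.finrank ℂ Y ≤ d →
      ∃ (ι : Type) (_ : Fintype ι) (S : ι → Submodule ℂ V) (hS : ∀ i, Stab ρ (S i)),
      (∀ i, Irr (sub ρ (S i) (hS i))) ∧ ∃ e : Y ≃ₗ[ℂ] (∀ i, S i),
        ∀ g v i, e (sub ρ Y hY g v) i = sub ρ (S i) (hS i) g (e v i) := by
    intro d
    induction d with
    | zero =>
      intro Y hY hd
      have h0 := Submodule.finrank_eq_zero.1 (Nat.le_zero.1 hd)
      subst h0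
      refine ⟨Empty, inferInstance, fun _ => ⊥, fun i => i.elim, fun i => i.elim,
        LinearEquiv.ofBijective 0 ⟨fun a b _ => Subsingleton.elim _ _,
          fun b => ⟨0, Subsingleton.elim _ _⟩⟩, fun g v i => i.elim⟩
    | succ d ih =>
      intro Y hY hd
      by_cases h0 : Y = ⊥
      · exact ih Y hY (by rw [h0]; simp)
      · obtain ⟨T, hT, hTY, hTi⟩ := exists_irr_sub ρ Y hY h0
        obtain ⟨p, hp, hpT⟩ := exists_proj ρ T hT
        let C : Submodule ℂ V := LinearMap.ker p ⊓ Y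
        have hC : Stab ρ C := fun g v hv => ⟨stab_ker hp g v hv.1, hY g v hv.2⟩
        have hmem : ∀ v : Y, (v : V) - (p v : V) ∈ C := by
          intro v
          refine ⟨?_, Y.sub_mem v.2 (hTY (p v).2)⟩
          show (v : V) - (p v : V) ∈ LinearMap.ker p
          rw [LinearMap.mem_ker, map_sub, hpT, sub_self]
        let q : Y →ₗ[ℂ] C := LinearMap.codRestrict C
          (Y.subtype - T.subtype ∘ₗ p ∘ₗ Y.subtype) hmem
        have hq : ∀ v : Y, (q v : V) = v - p v := fun v => rfl
        let E : Y ≃ₗ[ℂ] T × C := LinearEquiv.ofBijective ((p ∘ₗ Y.subtype).prod q) (by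
          constructor
          · intro a b hab
            have h1 : p a = p b := congrArg Prod.fst hab
            have h2 : (q a : V) = q b := congrArg (fun x => ((Prod.snd x : C) : V)) hab
            rw [hq, hq, h1] at h2
            exact Subtype.ext (sub_left_injective h2)
          · rintro ⟨t, c⟩
            refine ⟨⟨t + c, Y.add_mem (hTY t.2) c.2.2⟩, ?_⟩
            have h1 : p (t + c : V) = t := by
              rw [map_add, hpT, LinearMap.mem_ker.1 c.2.1, add_zero]
            refine Prod.ext h1 (Subtype.ext ?_)
            show ((t : V) + c) - (p (t + c : V) : V) = c
            rw [h1]; abel)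
        have hfin : Module.finrank ℂ Y = Module.finrank ℂ T + Module.finrank ℂ C := by
          rw [E.finrank_eq, Module.finrank_prod]
        have hT0 : 0 < Module.finrank ℂ T := by
          have := hTi.1
          exact Module.finrank_pos
        obtain ⟨ι, _, S, hS, hSi, e, he⟩ := ih C hC (by omega)
        refine ⟨Option ι, inferInstance, fun o => o.elim T S,
          fun o => by cases o <;> simp [hT, hS], fun o => ?_, ?_⟩
        · cases o
          · exact hTi
          · exact hSi _
        · refine ⟨E ≪≫ₗ (LinearEquiv.prodCongr (LinearEquiv.refl ℂ T) e) ≪≫ₗ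
            (LinearEquiv.piOptionEquivProd ℂ (M := fun o : Option ι =>
              ((o.elim T S : Submodule ℂ V) : Type))).symm, ?_⟩
          intro g v o
          cases o with
          | none => exact hp g v
          | some i =>
            have h1 : q (sub ρ Y hY g v) = sub ρ C hC g (q v) := by
              apply Subtype.ext
              rw [hq, sub_apply, sub_apply, hq, map_sub, hp g v]
              rfl
            show e (q (sub ρ Y hY g v)) i = _
            rw [h1]
            exact he g (q v) i
  obtain ⟨ι, _, S, hS, hSi, e, he⟩ := key _ ⊤ (fun g v _ => trivial) le_rfl
  refine ⟨ι, inferInstance, S, hS, hSi, Submodule.topEquiv.symm ≪≫ₗ e, fun g v i => ?_⟩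
  exact he g ⟨v, trivial⟩ i

/-- additivity in the second argument -/
lemma finrank_Hm_pi_right {ι : Type} [Fintype ι] {S : ι → Type} [∀ i, AddCommGroup (S i)]
    [∀ i, Module ℂ (S i)] [∀ i, FiniteDimensional ℂ (S i)] [FiniteDimensional ℂ U]
    (σ : Representation ℂ G U) (ρ : Representation ℂ G V)
    (τ : ∀ i, Representation ℂ G (S i)) (e : V ≃ₗ[ℂ] (∀ i, S i))
    (he : ∀ g v i, e (ρ g v) i = τ i g (e v i)) :
    Module.finrank ℂ (Hm σ ρ) = ∑ i, Module.finrank ℂ (Hm σ (τ i)) := by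
  have he' : ∀ g (s : ∀ i, S i), e.symm (fun i => τ i g (s i)) = ρ g (e.symm s) := fun g s => by
    rw [LinearEquiv.symm_apply_eq]; ext i; simp [he]
  rw [← Module.finrank_pi_fintype]
  refine LinearEquiv.finrank_eq
    { toFun := fun φ i => ⟨LinearMap.proj i ∘ₗ e.toLinearMap ∘ₗ φ.1, fun g u => by
        simp [φ.2 g, he]⟩
      invFun := fun ψ => ⟨e.symm.toLinearMap ∘ₗ LinearMap.pi (fun i => (ψ i).1), fun g u => by
        simp only [LinearMap.comp_apply, LinearEquiv.coe_coe]
        rw [← he']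
        congr 1
        ext i
        simp only [LinearMap.pi_apply]
        exact (ψ i).2 g u⟩
      map_add' := fun a b => by ext; simp
      map_smul' := fun a b => by ext; simp
      left_inv := fun a => by ext; simp
      right_inv := fun a => by ext; simp }

/-- additivity in the first argument -/
lemma finrank_Hm_pi_left {ι : Type} [Fintype ι] {S : ι → Type} [∀ i, AddCommGroup (S i)]
    [∀ i, Module ℂ (S i)] [∀ i, FiniteDimensional ℂ (S i)] [FiniteDimensional ℂ U]
    (σ : Representation ℂ G U) (ρ : Representation ℂ G V)
    (τ : ∀ i, Representation ℂ G (S i)) (e : V ≃ₗ[ℂ] (∀ i, S i))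
    (he : ∀ g v i, e (ρ g v) i = τ i g (e v i)) :
    Module.finrank ℂ (Hm ρ σ) = ∑ i, Module.finrank ℂ (Hm (τ i) σ) := by
  classical
  have he' : ∀ g (s : ∀ i, S i), e.symm (fun i => τ i g (s i)) = ρ g (e.symm s) := fun g s => by
    rw [LinearEquiv.symm_apply_eq]; ext i; simp [he]
  have hsing : ∀ g i (s : S i), e.symm (Pi.single i (τ i g s)) = ρ g (e.symm (Pi.single i s)) := by
    intro g i s
    rw [← he']
    congr 1
    ext j
    rcases eq_or_ne j i with rfl | h
    · simp
    · simp [h]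
  rw [← Module.finrank_pi_fintype]
  refine LinearEquiv.finrank_eq
    { toFun := fun φ i => ⟨φ.1 ∘ₗ e.symm.toLinearMap ∘ₗ LinearMap.single ℂ S i, fun g u => by
        simp [hsing, φ.2 g]⟩
      invFun := fun ψ => ⟨(LinearMap.lsum ℂ S ℂ (fun i => (ψ i).1)) ∘ₗ e.toLinearMap, fun g u => by
        simp only [LinearMap.comp_apply, LinearEquiv.coe_coe, LinearMap.lsum_apply,
          LinearMap.sum_apply, LinearMap.proj_apply, map_sum]
        refine Finset.sum_congr rfl fun i _ => ?_
        rw [he]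
        exact (ψ i).2 g _⟩
      map_add' := fun a b => by ext; simp
      map_smul' := fun a b => by ext; simp
      left_inv := fun a => by
        ext v
        simp only [LinearMap.comp_apply, LinearEquiv.coe_coe, LinearMap.lsum_apply,
          LinearMap.sum_apply, LinearMap.proj_apply, LinearMap.single_apply]
        rw [← map_sum, ← map_sum, Finset.univ_sum_single, LinearEquiv.symm_apply_apply]
      right_inv := fun a => by
        ext i v
        simp only [LinearMap.comp_apply, LinearEquiv.coe_coe, LinearMap.lsum_apply,
          LinearMap.sum_apply, LinearMap.proj_apply, LinearMap.single_apply,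
          LinearEquiv.apply_symm_apply]
        rw [Finset.sum_eq_single i]
        · simp
        · intro j _ hj; simp [hj]
        · simp }

lemma irr_iff_simple [Finite G] (X : FDRep ℂ G) : Simple X ↔ Irr X.ρ := by
  rw [FDRep.simple_iff_end_is_rank_one]
  have h1 : Module.finrank ℂ (X ⟶ X) = Module.finrank ℂ (Hm X.ρ X.ρ) := by
    rw [← (FDRep.forget₂HomLinearEquiv X X).finrank_eq]
    refine LinearEquiv.finrank_eq
      { toFun := fun f => ⟨f.hom.toLinearMap, fun g u => by
          exact LinearMap.congr_fun (f.hom.2 g) u⟩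
        invFun := fun φ => Rep.ofHom ⟨φ.1, fun g => by ext u; exact φ.2 g u⟩
        map_add' := fun a b => rfl
        map_smul' := fun a b => rfl
        left_inv := fun a => rfl
        right_inv := fun a => rfl }
  rw [h1]
  constructor
  · intro h
    have hnt : Nontrivial X := by
      by_contra hn
      rw [not_nontrivial_iff_subsingleton] at hn
      have : Subsingleton (Hm X.ρ X.ρ) := ⟨fun a b => by
        ext v; exact Subsingleton.elim _ _⟩
      rw [Module.finrank_zero_of_subsingleton] at h
      omega
    refine ⟨hnt, fun S hS => ?_⟩
    obtain ⟨p, hp, hpS⟩ := exists_proj X.ρ S hS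
    have hP : S.subtype ∘ₗ p ∈ Hm X.ρ X.ρ := fun g u => by
      simp only [LinearMap.comp_apply, Submodule.subtype_apply, hp g u, sub_apply]
    have hI : LinearMap.id ∈ Hm X.ρ X.ρ := fun g u => rfl
    have hI0 : (⟨LinearMap.id, hI⟩ : Hm X.ρ X.ρ) ≠ 0 := by
      intro h
      obtain ⟨v, hv⟩ := exists_ne (0 : X)
      exact hv (LinearMap.congr_fun (Subtype.ext_iff.1 h) v)
    obtain ⟨c, hc⟩ := (finrank_eq_one_iff_of_nonzero' _ hI0).1 h ⟨_, hP⟩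
    have hc' : ∀ v, c • v = (p v : X) := fun v => LinearMap.congr_fun (Subtype.ext_iff.1 hc) v
    by_cases h0 : S = ⊥
    · exact Or.inl h0
    · right
      obtain ⟨s, hs, hs0⟩ := (Submodule.ne_bot_iff S).1 h0
      have h2 : c • s = s := by rw [hc']; exact congrArg Subtype.val (hpS ⟨s, hs⟩)
      have hc1 : c = 1 := by
        by_contra hne
        have : (c - 1) • s = 0 := by rw [sub_smul, h2, one_smul, sub_self]
        rcases smul_eq_zero.1 this with h3 | h3
        · exact hne (sub_eq_zero.1 h3)
        · exact hs0 h3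
      rw [eq_top_iff]
      intro v _
      have := hc' v
      rw [hc1, one_smul] at this
      rw [this]
      exact (p v).2
  · intro h
    exact finrank_Hm_self h

lemma mem_charDegrees_iff [Finite G] (n : ℕ) : n ∈ charDegrees G ↔
    ∃ (V : Type) (_ : AddCommGroup V) (_ : Module ℂ V) (_ : FiniteDimensional ℂ V)
      (ρ : Representation ℂ G V), Irr ρ ∧ Module.finrank ℂ V = n := by
  constructor
  · rintro ⟨X, hX, hn⟩
    exact ⟨X, inferInstance, inferInstance, inferInstance, X.ρ, (irr_iff_simple X).1 hX, hn⟩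
  · rintro ⟨V, _, _, _, ρ, hρ, hn⟩
    exact ⟨FDRep.of ρ, (irr_iff_simple _).2 hρ, hn⟩

end basics
end CDB

namespace CDB

section projective

variable {H : Type} [AddCommGroup H] [Module ℂ H] [FiniteDimensional ℂ H]

lemma trace_integral (f : H →ₗ[ℂ] H) (n : ℕ) (hn : 0 < n) (hf : f ^ n = 1) :
    IsIntegral ℤ (LinearMap.trace ℂ H f) := by
  rw [Module.End.trace_eq_sum_roots_charpoly_of_splits (IsAlgClosed.splits _)]
  refine Multiset.sum_induction (fun x => IsIntegral ℤ x) _ (fun a b => IsIntegral.add)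
    isIntegral_zero ?_
  intro μ hμ
  have h1 : Module.End.HasEigenvalue f μ := by
    rw [Module.End.hasEigenvalue_iff_isRoot_charpoly]
    exact Polynomial.isRoot_of_mem_roots hμ
  obtain ⟨v, hv⟩ := h1.exists_hasEigenvector
  have h2 : μ ^ n = 1 := by
    have := hv.pow_apply n
    rw [hf, Module.End.one_apply] at this
    have h3 : (μ ^ n - 1) • v = 0 := by rw [sub_smul, one_smul, ← this, sub_self]
    rcases smul_eq_zero.1 h3 with h | h
    · exact sub_eq_zero.1 h
    · exact absurd h hv.2
  exact IsIntegral.of_pow hn (by rw [h2]; exact isIntegral_one)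

variable {Q : Type} [Group Q]

lemma sum_quot {A : Type} [AddCommGroup A] [Fintype Q] (N : Subgroup Q) [Fintype (Q ⧸ N)]
    (f : Q → A)
    (hf : ∀ g, ∀ n ∈ N, f (g * n) = f g) :
    ∑ g, f g = Nat.card N • ∑ q : Q ⧸ N, f q.out := by
  classical
  rw [← Finset.sum_fiberwise (Finset.univ) (fun g : Q => (g : Q ⧸ N)) f, Finset.smul_sum]
  refine Finset.sum_congr rfl fun q _ => ?_
  have h1 : ∀ g ∈ Finset.univ.filter (fun g : Q => (g : Q ⧸ N) = q), f g = f q.out := by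
    intro g hg
    rw [Finset.mem_filter] at hg
    have h2 : q.out⁻¹ * g ∈ N := by
      rw [← QuotientGroup.eq, hg.2]; simp
    have := hf q.out _ h2
    rwa [mul_inv_cancel_left] at this
  rw [Finset.sum_congr rfl h1, Finset.sum_const]
  congr 1
  rw [← Fintype.card_subtype, ← Nat.card_eq_fintype_card]
  refine Nat.card_congr
    { toFun := fun g => ⟨q.out⁻¹ * g.1, by rw [← QuotientGroup.eq, g.2]; simp⟩
      invFun := fun n => ⟨q.out * n.1, by
        rw [QuotientGroup.mk_mul_of_mem _ n.2]; simp⟩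
      left_inv := fun g => by simp
      right_inv := fun g => by simp }

/-- the degree of an irreducible projective representation divides the index of a normal
subgroup acting by scalars; normalised version -/
lemma proj_dvd_aux [Finite Q] (N : Subgroup Q) [Nontrivial H]
    (B : Q → H ≃ₗ[ℂ] H) (hdet : ∀ g, LinearMap.det (B g : H →ₗ[ℂ] H) = 1)
    (hmul : ∀ g h, ∃ c : ℂ, ∀ v, B g (B h v) = c • B (g * h) v)
    (hN : ∀ g, ∀ n ∈ N, ∃ c : ℂ, ∀ v, B (g * n) v = c • B g v)
    (hirr : ∀ S : Submodule ℂ H, (∀ g v, v ∈ S → B g v ∈ S) → S = ⊥ ∨ S = ⊤) :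
    Module.finrank ℂ H ∣ N.index := by
  classical
  have := Fintype.ofFinite Q
  have := Fintype.ofFinite (Q ⧸ N)
  set e := Module.finrank ℂ H with he
  have he0 : 0 < e := Module.finrank_pos
  -- scalars are roots of unity
  have hroot : ∀ (f f' : H →ₗ[ℂ] H) (c : ℂ), LinearMap.det f = 1 → LinearMap.det f' = 1 →
      (∀ v, f v = c • f' v) → c ^ e = 1 := by
    intro f f' c h1 h2 h
    have h3 : f = c • f' := by ext v; exact h v
    rw [h3, LinearMap.det_smul, h2, mul_one] at h1
    exact h1
  have hIntg : ∀ c : ℂ, c ^ e = 1 → IsIntegral ℤ c := fun c hc =>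
    IsIntegral.of_pow he0 (by rw [hc]; exact isIntegral_one)
  have hmul' : ∀ g h, ∃ c : ℂ, c ^ e = 1 ∧ ∀ v, B g (B h v) = c • B (g * h) v := by
    intro g h
    obtain ⟨c, hc⟩ := hmul g h
    refine ⟨c, hroot ((B g : H →ₗ[ℂ] H) * (B h : H →ₗ[ℂ] H)) (B (g * h)) c ?_ (hdet _) hc, hc⟩
    rw [map_mul, hdet, hdet, one_mul]
  have hB1 : ∃ c : ℂ, ∀ v, B 1 v = c • v := by
    obtain ⟨c, hc⟩ := hmul 1 1
    refine ⟨c, fun v => ?_⟩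
    have := hc ((B 1).symm v)
    rw [mul_one] at this
    simpa using this
  -- finite order
  have hpow : ∀ g (k : ℕ), ∃ c : ℂ, ∀ v, ((B g : H →ₗ[ℂ] H) ^ k) v = c • B (g ^ k) v := by
    intro g k
    induction k with
    | zero =>
      obtain ⟨c, hc⟩ := hB1
      have hc0 : c ≠ 0 := by
        rintro rfl
        obtain ⟨v, hv⟩ := exists_ne (0 : H)
        apply hv
        apply (B 1).injective
        rw [hc]; simp
      refine ⟨c⁻¹, fun v => ?_⟩
      simp [hc, smul_smul, inv_mul_cancel₀ hc0]
    | succ k ih =>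
      obtain ⟨c, hc⟩ := ih
      obtain ⟨d, hd⟩ := hmul (g ^ k) g
      refine ⟨c * d, fun v => ?_⟩
      rw [pow_succ, Module.End.mul_apply, hc, LinearEquiv.coe_coe, hd, smul_smul, pow_succ]
  have htr : ∀ g, IsIntegral ℤ (LinearMap.trace ℂ H (B g : H →ₗ[ℂ] H)) := by
    intro g
    obtain ⟨c, hc⟩ := hpow g (Fintype.card Q)
    obtain ⟨d, hd⟩ := hB1
    have h1 : ∀ v, ((B g : H →ₗ[ℂ] H) ^ Fintype.card Q) v = (c * d) • v := by
      intro v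
      rw [hc, pow_card_eq_one, hd, smul_smul]
    have h2 : (c * d) ^ e = 1 := hroot _ (1 : H →ₗ[ℂ] H) (c * d)
      (by rw [map_pow, hdet, one_pow]) (by simp) h1
    apply trace_integral _ (Fintype.card Q * e) (Nat.mul_pos Fintype.card_pos he0)
    rw [pow_mul]
    have h3 : (B g : H →ₗ[ℂ] H) ^ Fintype.card Q = (c * d) • 1 := by ext v; exact h1 v
    rw [h3, smul_pow, h2, one_pow, one_smul]
  -- orthogonality
  have horth : ∀ (Y : H →ₗ[ℂ] H) (v : H), (e : ℂ) • ∑ g, (B g).symm (Y (B g v)) =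
      ((Fintype.card Q : ℂ) * LinearMap.trace ℂ H Y) • v := by
    intro Y v
    let Z : H →ₗ[ℂ] H := ∑ g, (B g).symm.toLinearMap ∘ₗ Y ∘ₗ (B g).toLinearMap
    have hZ : ∀ h v, Z (B h v) = B h (Z v) := by
      intro h v
      simp only [Z, LinearMap.sum_apply, LinearMap.comp_apply, LinearEquiv.coe_coe, map_sum]
      refine Fintype.sum_equiv (Equiv.mulRight h) _ _ fun g => ?_
      obtain ⟨c, hc1, hc⟩ := hmul' g h
      have hc0 : c ≠ 0 := by rintro rfl; rw [zero_pow he0.ne'] at hc1; exact zero_ne_one hc1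
      simp only [Equiv.coe_mulRight]
      rw [LinearEquiv.symm_apply_eq, hc, hc, map_smul, LinearEquiv.apply_symm_apply]
    obtain ⟨z, hz⟩ := schur_family (fun g => (B g : H →ₗ[ℂ] H)) hirr Z hZ
    have h1 : LinearMap.trace ℂ H Z = z * e := by
      have : Z = z • 1 := by ext v; exact hz v
      rw [this, map_smul, LinearMap.trace_one, smul_eq_mul]
    have h2 : LinearMap.trace ℂ H Z = Fintype.card Q * LinearMap.trace ℂ H Y := by
      simp only [Z, map_sum]
      rw [Finset.sum_congr rfl (fun g _ => ?_), Finset.sum_const, Finset.card_univ, nsmul_eq_mul]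
      have := LinearMap.trace_conj' Y (B g).symm
      rw [LinearEquiv.conj_apply] at this
      simpa [LinearMap.comp_assoc] using this
    have h3 : ∑ g, (B g).symm (Y (B g v)) = Z v := by
      simp [Z, LinearMap.sum_apply]
    rw [h3, hz, smul_smul, ← h2, h1, mul_comm]
  have hsum : ∀ w : H, (e : ℂ) • ∑ g, LinearMap.trace ℂ H (B g : H →ₗ[ℂ] H) • (B g).symm w =
      (Fintype.card Q : ℂ) • w := by
    intro w
    let b := Module.finBasis ℂ H
    have h1 : ∀ g, LinearMap.trace ℂ H (B g : H →ₗ[ℂ] H) = ∑ j, b.coord j (B g (b j)) := by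
      intro g
      rw [LinearMap.trace_eq_matrix_trace ℂ b, Matrix.trace]
      simp [LinearMap.toMatrix_apply]
    simp only [h1, Finset.sum_smul]
    rw [Finset.sum_comm, Finset.smul_sum]
    have h2 : ∀ j, (e : ℂ) • ∑ g, b.coord j (B g (b j)) • (B g).symm w =
        ((Fintype.card Q : ℂ) * b.coord j w) • b j := by
      intro j
      have := horth ((b.coord j).smulRight w) (b j)
      rw [LinearMap.trace_smulRight] at this
      simpa using this
    rw [Finset.sum_congr rfl (fun j _ => h2 j)]
    simp only [← smul_smul]
    rw [← Finset.smul_sum]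
    congr 1
    exact b.sum_repr w
  -- pass to cosets
  have hcos : ∀ w : H, (e : ℂ) • ∑ q : Q ⧸ N,
      LinearMap.trace ℂ H (B q.out : H →ₗ[ℂ] H) • (B q.out).symm w = (N.index : ℂ) • w := by
    intro w
    have h1 := hsum w
    rw [sum_quot N (fun g => LinearMap.trace ℂ H (B g : H →ₗ[ℂ] H) • (B g).symm w)] at h1
    · have hc : (Nat.card N : ℂ) ≠ 0 := Nat.cast_ne_zero.2 Nat.card_pos.ne'
      have h2 : Fintype.card Q = Nat.card N * N.index := by
        rw [← Nat.card_eq_fintype_card, Subgroup.card_mul_index]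
      rw [h2, ← Nat.cast_smul_eq_nsmul ℂ, smul_comm, Nat.cast_mul, ← smul_smul] at h1
      exact smul_right_injective H hc h1
    · intro g n hn
      obtain ⟨c, hc⟩ := hN g n hn
      have h2 : (B (g * n) : H →ₗ[ℂ] H) = c • (B g : H →ₗ[ℂ] H) := by ext v; exact hc v
      have hc0 : c ≠ 0 := by
        rintro rfl
        obtain ⟨v, hv⟩ := exists_ne (0 : H)
        apply hv
        apply (B (g * n)).injective
        rw [hc]; simp
      have h3 : (B (g * n)).symm w = c⁻¹ • (B g).symm w := by
        rw [LinearEquiv.symm_apply_eq, hc, map_smul, LinearEquiv.apply_symm_apply, smul_smul,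
          mul_inv_cancel₀ hc0, one_smul]
      simp only [h2, h3, map_smul, smul_smul, smul_eq_mul]
      congr 1
      field_simp
  -- integrality
  obtain ⟨v0, hv0⟩ := exists_ne (0 : H)
  let O := integralClosure ℤ ℂ
  let L : Submodule O H := Submodule.span O (Set.range fun g => B g v0)
  have hOs : ∀ (c : ℂ), IsIntegral ℤ c → ∀ x ∈ L, c • x ∈ L := fun c hc x hx =>
    L.smul_mem (⟨c, hc⟩ : O) hx
  have hx : IsIntegral O ((N.index : ℂ) / e) := by
    refine isIntegral_of_smul_mem_submodule L ?_ ?_ _ ?_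
    · intro h
      have h1 : B 1 v0 ∈ L := Submodule.subset_span ⟨1, rfl⟩
      rw [h, Submodule.mem_bot] at h1
      exact hv0 ((B 1).map_eq_zero_iff.1 h1)
    · exact Submodule.fg_span (Set.finite_range _)
    · intro n hn
      have hec : (e : ℂ) ≠ 0 := Nat.cast_ne_zero.2 he0.ne'
      have h1 : ((N.index : ℂ) / e) • n = ∑ q : Q ⧸ N,
          LinearMap.trace ℂ H (B q.out : H →ₗ[ℂ] H) • (B q.out).symm n := by
        rw [div_eq_inv_mul, ← smul_smul, ← hcos n, smul_smul, inv_mul_cancel₀ hec, one_smul]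
      rw [h1]
      refine Submodule.sum_mem _ fun q _ => hOs _ (htr _) _ ?_
      have h2 : ∀ g : Q, ∀ x ∈ L, (B g).symm x ∈ L := by
        intro g x hx
        induction hx using Submodule.span_induction with
        | mem x hx =>
          obtain ⟨h, rfl⟩ := hx
          obtain ⟨c, hc1, hc⟩ := hmul' g (g⁻¹ * h)
          have hc0 : c ≠ 0 := by rintro rfl; rw [zero_pow he0.ne'] at hc1; exact zero_ne_one hc1
          have h3 : (B g).symm (B h v0) = c⁻¹ • B (g⁻¹ * h) v0 := by
            rw [LinearEquiv.symm_apply_eq, map_smul, hc, mul_inv_cancel_left, smul_smul,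
              inv_mul_cancel₀ hc0, one_smul]
          show (B g).symm (B h v0) ∈ L
          rw [h3]
          exact hOs _ (hIntg _ (by rw [inv_pow, hc1, inv_one])) _ (Submodule.subset_span ⟨_, rfl⟩)
        | zero => simp
        | add x y _ _ hx hy => rw [map_add]; exact L.add_mem hx hy
        | smul a x _ hx =>
          have h3 : (B g).symm (a • x) = a • (B g).symm x := by
            show (B g).symm ((a : ℂ) • x) = (a : ℂ) • (B g).symm x
            rw [map_smul]
          rw [h3]; exact L.smul_mem a hx
      exact h2 _ _ hn
  have hx' : IsIntegral ℤ ((N.index : ℂ) / e) := isIntegral_trans _ hx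
  have hx'' : IsIntegral ℤ ((N.index : ℚ) / e) := by
    rw [← isIntegral_algebraMap_iff (algebraMap ℚ ℂ).injective]
    simpa using hx'
  obtain ⟨k, hk⟩ := IsIntegrallyClosed.isIntegral_iff.1 hx''
  have heq : (e : ℚ) ≠ 0 := Nat.cast_ne_zero.2 he0.ne'
  have h4 : (N.index : ℤ) = e * k := by
    have h5 : (k : ℚ) = (N.index : ℚ) / e := by simpa using hk
    have h6 : (N.index : ℚ) = e * k := by rw [h5]; field_simp
    exact_mod_cast h6
  exact Int.natCast_dvd_natCast.1 ⟨k, h4⟩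

/-- the degree of an irreducible projective representation divides the index of a normal
subgroup acting by scalars -/
lemma proj_dvd [Finite Q] (N : Subgroup Q) [Nontrivial H]
    (B : Q → H ≃ₗ[ℂ] H)
    (hmul : ∀ g h, ∃ c : ℂ, ∀ v, B g (B h v) = c • B (g * h) v)
    (hN : ∀ n ∈ N, ∃ c : ℂ, ∀ v, B n v = c • v)
    (hirr : ∀ S : Submodule ℂ H, (∀ g v, v ∈ S → B g v ∈ S) → S = ⊥ ∨ S = ⊤) :
    Module.finrank ℂ H ∣ N.index := by
  have he0 : 0 < Module.finrank ℂ H := Module.finrank_pos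
  have h1 : ∀ g, ∃ c : ℂ, c ≠ 0 ∧
      c ^ Module.finrank ℂ H * LinearMap.det (B g : H →ₗ[ℂ] H) = 1 := by
    intro g
    have hd : LinearMap.det (B g : H →ₗ[ℂ] H) ≠ 0 := by
      rw [← LinearEquiv.coe_det]; exact Units.ne_zero _
    obtain ⟨c, hc⟩ := IsAlgClosed.exists_pow_nat_eq (LinearMap.det (B g : H →ₗ[ℂ] H))⁻¹ he0
    refine ⟨c, ?_, by rw [hc, inv_mul_cancel₀ hd]⟩
    rintro rfl
    rw [zero_pow he0.ne'] at hc
    exact inv_ne_zero hd hc.symm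
  choose c hc0 hc using h1
  let B' : Q → H ≃ₗ[ℂ] H := fun g => (B g).trans (LinearEquiv.smulOfNeZero ℂ H (c g) (hc0 g))
  have hB' : ∀ g v, B' g v = c g • B g v := fun g v => rfl
  have hmul' : ∀ g h, ∃ c : ℂ, ∀ v, B' g (B' h v) = c • B' (g * h) v := by
    intro g h
    obtain ⟨d, hd⟩ := hmul g h
    refine ⟨c g * c h * d * (c (g * h))⁻¹, fun v => ?_⟩
    rw [hB', hB', hB', map_smul, hd, smul_smul, smul_smul, smul_smul]
    congr 1
    have := hc0 (g * h)
    field_simp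
  refine proj_dvd_aux N B' ?_ hmul' ?_ ?_
  · intro g
    have : (B' g : H →ₗ[ℂ] H) = c g • (B g : H →ₗ[ℂ] H) := by ext v; rfl
    rw [this, LinearMap.det_smul, hc]
  · intro g n hn
    obtain ⟨d, hd⟩ := hmul g n
    obtain ⟨x, hx⟩ := hN n hn
    have hd0 : d ≠ 0 := by
      rintro rfl
      obtain ⟨v, hv⟩ := exists_ne (0 : H)
      apply hv
      apply (B n).injective
      apply (B g).injective
      rw [hd]; simp
    refine ⟨c (g * n) * d⁻¹ * x * (c g)⁻¹, fun v => ?_⟩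
    have h2 : B (g * n) v = d⁻¹ • B g (B n v) := by
      rw [hd, smul_smul, inv_mul_cancel₀ hd0, one_smul]
    rw [hB', hB', h2, hx, map_smul, smul_smul, smul_smul, smul_smul]
    congr 1
    have := hc0 g
    field_simp
  · intro S hS
    refine hirr S fun g v hv => ?_
    have := S.smul_mem (c g)⁻¹ (hS g v hv)
    rwa [hB', smul_smul, inv_mul_cancel₀ (hc0 g), one_smul] at this

end projective
end CDB

namespace CDB

section clifford

variable {K G : Type} [Group K] [Group G] {U V W : Type} [AddCommGroup U] [Module ℂ U]
  [AddCommGroup V] [Module ℂ V] [AddCommGroup W] [Module ℂ W]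

/-- an injective homomorphism with normal image, with its conjugation action -/
structure CX (K G : Type) [Group K] [Group G] where
  /-- the embedding -/
  i : K →* G
  /-- the conjugation action -/
  c : G →* MulAut K
  hc : ∀ g k, i (c g k) = g * i k * g⁻¹
  inj : Function.Injective i

namespace CX

variable (X : CX K G)

/-- restriction -/
def res (ρ : Representation ℂ G V) : Representation ℂ K V := MonoidHom.comp ρ X.i

@[simp] lemma res_apply (ρ : Representation ℂ G V) (k : K) : X.res ρ k = ρ (X.i k) := rfl

/-- conjugate representation -/
def tw (σ : Representation ℂ K U) (g : G) : Representation ℂ K U :=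
  MonoidHom.comp σ (X.c g⁻¹).toMonoidHom

@[simp] lemma tw_apply (σ : Representation ℂ K U) (g : G) (k : K) :
    X.tw σ g k = σ (X.c g⁻¹ k) := rfl

lemma c_inv_c (g : G) (k : K) : X.c g⁻¹ (X.c g k) = k := by
  rw [map_inv]; exact (X.c g).symm_apply_apply k

lemma c_c_inv (g : G) (k : K) : X.c g (X.c g⁻¹ k) = k := by
  rw [map_inv]; exact (X.c g).apply_symm_apply k

lemma c_mul (g h : G) (k : K) : X.c (g * h) k = X.c g (X.c h k) := by
  rw [map_mul]; rfl

lemma c_i (k l : K) : X.c (X.i k) l = k * l * k⁻¹ := by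
  apply X.inj; rw [X.hc]; simp

/-- inertia subgroup -/
def inertia (σ : Representation ℂ K U) : Subgroup G where
  carrier := {g | ∃ A : U ≃ₗ[ℂ] U, ∀ k u, A (σ k u) = σ (X.c g k) (A u)}
  one_mem' := ⟨LinearEquiv.refl ℂ U, fun k u => by simp⟩
  mul_mem' := by
    rintro g h ⟨A, hA⟩ ⟨B, hB⟩
    exact ⟨B.trans A, fun k u => by simp [hA, hB]⟩
  inv_mem' := by
    rintro g ⟨A, hA⟩
    refine ⟨A.symm, fun k u => ?_⟩
    rw [LinearEquiv.symm_apply_eq, hA, X.c_c_inv]; simp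

lemma mem_inertia {σ : Representation ℂ K U} {g : G} :
    g ∈ X.inertia σ ↔ ∃ A : U ≃ₗ[ℂ] U, ∀ k u, A (σ k u) = σ (X.c g k) (A u) := Iff.rfl

lemma range_le_inertia (σ : Representation ℂ K U) : X.i.range ≤ X.inertia σ := by
  rintro _ ⟨k, rfl⟩
  refine ⟨LinearEquiv.ofLinearMap (σ k) (σ k⁻¹) ?_ ?_, fun l u => ?_⟩
  · ext u; simp
  · ext u; simp
  · simp only [LinearEquiv.coe_ofLinearMap, X.c_i]
    rw [← rmul, ← rmul]; simp

lemma irr_tw {σ : Representation ℂ K U} (hσ : Irr σ) (g : G) : Irr (X.tw σ g) := by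
  refine ⟨hσ.1, fun S hS => hσ.2 S fun k v hv => ?_⟩
  have := hS (X.c g k) v hv
  rwa [tw_apply, c_inv_c] at this

lemma comp_mem {σ : Representation ℂ K U} {ρ : Representation ℂ G V} {φ : U →ₗ[ℂ] V}
    (h : φ ∈ Hm σ (X.res ρ)) (g : G) : (ρ g) ∘ₗ φ ∈ Hm (X.tw σ g) (X.res ρ) := by
  intro k u
  simp only [LinearMap.comp_apply, tw_apply, res_apply]
  rw [h, res_apply, X.hc, ← rmul, ← rmul]
  congr 2; group

lemma finrank_tw (σ : Representation ℂ K U) (ρ : Representation ℂ G V) (g : G) :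
    Module.finrank ℂ (Hm (X.tw σ g) (X.res ρ)) = Module.finrank ℂ (Hm σ (X.res ρ)) := by
  symm
  refine LinearEquiv.finrank_eq
    { toFun := fun φ => ⟨(ρ g) ∘ₗ φ.1, X.comp_mem φ.2 g⟩
      invFun := fun φ => ⟨(ρ g⁻¹) ∘ₗ φ.1, fun k u => by
        have := X.comp_mem φ.2 g⁻¹ k u
        simpa [X.c_inv_c, X.c_c_inv] using this⟩
      map_add' := fun a b => by ext; simp
      map_smul' := fun a b => by ext; simp
      left_inv := fun a => by ext; simp
      right_inv := fun a => by ext; simp }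

end CX

lemma iso_of_ne {σ : Representation ℂ K U} {ρ : Representation ℂ K V} (hσ : Irr σ) (hρ : Irr ρ)
    {φ : U →ₗ[ℂ] V} (h : φ ∈ Hm σ ρ) (h0 : φ ≠ 0) :
    ∃ E : U ≃ₗ[ℂ] V, ∀ g u, E (σ g u) = ρ g (E u) :=
  ⟨LinearEquiv.ofBijective φ ⟨hσ.inj h h0, hρ.surj h h0⟩, h⟩

lemma exists_ne_of_finrank {σ : Representation ℂ K U} {ρ : Representation ℂ K V}
    (h : Module.finrank ℂ (Hm σ ρ) ≠ 0) : ∃ φ ∈ Hm σ ρ, φ ≠ 0 := by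
  by_contra! hn
  apply h
  have : Hm σ ρ = ⊥ := by
    rw [eq_bot_iff]; intro φ hφ; exact hn φ hφ
  rw [this]; simp

lemma finrank_ne_of_exists [FiniteDimensional ℂ U] [FiniteDimensional ℂ V]
    {σ : Representation ℂ K U} {ρ : Representation ℂ K V}
    {φ : U →ₗ[ℂ] V} (h : φ ∈ Hm σ ρ) (h0 : φ ≠ 0) : Module.finrank ℂ (Hm σ ρ) ≠ 0 := by
  intro h1
  rw [Submodule.finrank_eq_zero] at h1
  rw [h1] at h
  exact h0 ((Submodule.mem_bot ℂ).1 h)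

/-- translates of a nonzero subspace span an irreducible module -/
lemma span_translates {ρ : Representation ℂ G V} (hρ : Irr ρ) (s : Set V) (v : V) (hv : v ∈ s)
    (h0 : v ≠ 0) : Submodule.span ℂ {w | ∃ g, ∃ x ∈ s, w = ρ g x} = ⊤ := by
  have hst : Stab ρ (Submodule.span ℂ {w | ∃ g, ∃ x ∈ s, w = ρ g x}) := by
    intro g w hw
    induction hw using Submodule.span_induction with
    | mem x hx =>
      obtain ⟨h, y, hy, rfl⟩ := hx
      exact Submodule.subset_span ⟨g * h, y, hy, by rw [rmul]⟩
    | zero => simp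
    | add x y _ _ hx hy => rw [map_add]; exact Submodule.add_mem _ hx hy
    | smul a x _ hx => rw [map_smul]; exact Submodule.smul_mem _ _ hx
  rcases hρ.2 _ hst with h | h
  · exfalso
    have h1 : v ∈ Submodule.span ℂ {w | ∃ g, ∃ x ∈ s, w = ρ g x} :=
      Submodule.subset_span ⟨1, v, hv, by simp⟩
    rw [h] at h1
    exact h0 ((Submodule.mem_bot ℂ).1 h1)
  · exact h

namespace CX
variable (X : CX K G)

lemma clifford_decomp [Finite K] [FiniteDimensional ℂ V]
    {σ : Representation ℂ K U} (hσ : Irr σ) {ρ : Representation ℂ G V} (hρ : Irr ρ)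
    {φ : U →ₗ[ℂ] V} (h : φ ∈ Hm σ (X.res ρ)) (h0 : φ ≠ 0) :
    ∃ (ι : Type) (_ : Fintype ι) (S : ι → Submodule ℂ V) (hS : ∀ i, Stab (X.res ρ) (S i)),
      (∀ i, Irr (sub (X.res ρ) (S i) (hS i))) ∧ (∃ e : V ≃ₗ[ℂ] (∀ i, S i),
        ∀ g v i, e (X.res ρ g v) i = sub (X.res ρ) (S i) (hS i) g (e v i)) ∧
      ∃ γ : ι → G, ∀ i, ∃ E : U ≃ₗ[ℂ] S i,
        ∀ k u, E (X.tw σ (γ i) k u) = sub (X.res ρ) (S i) (hS i) k (E u) := by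
  obtain ⟨ι, _, S, hS, hirr, e, he⟩ := exists_decomp (X.res ρ)
  refine ⟨ι, inferInstance, S, hS, hirr, ⟨e, he⟩, ?_⟩
  have hex : ∀ i, ∃ g, ∃ E : U ≃ₗ[ℂ] S i,
        ∀ k u, E (X.tw σ g k u) = sub (X.res ρ) (S i) (hS i) k (E u) := by
    intro i
    let p : V →ₗ[ℂ] S i := LinearMap.proj i ∘ₗ e.toLinearMap
    have hp : p ∈ Hm (X.res ρ) (sub (X.res ρ) (S i) (hS i)) := fun g v => he g v i
    have hp0 : p ≠ 0 := by
      intro hp0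
      obtain ⟨x, hx⟩ := @exists_ne (S i) (hirr i).1 0
      classical
      apply hx
      have := LinearMap.congr_fun hp0 (e.symm (Pi.single i x))
      simpa [p] using this
    have : ∃ g, p ∘ₗ (ρ g) ∘ₗ φ ≠ 0 := by
      by_contra! hn
      apply hp0
      obtain ⟨u, hu⟩ : ∃ u, φ u ≠ 0 := by
        by_contra! hu
        exact h0 (LinearMap.ext hu)
      have hsp := span_translates hρ (Set.range φ) (φ u) ⟨u, rfl⟩ hu
      rw [← LinearMap.ker_eq_top, eq_top_iff, ← hsp, Submodule.span_le]
      rintro _ ⟨g, _, ⟨u, rfl⟩, rfl⟩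
      exact LinearMap.congr_fun (hn g) u
    obtain ⟨g, hg⟩ := this
    refine ⟨g, iso_of_ne (X.irr_tw hσ g) (hirr i) (φ := p ∘ₗ (ρ g) ∘ₗ φ) ?_ hg⟩
    intro k u
    have h1 := X.comp_mem h g k u
    simp only [LinearMap.comp_apply] at h1 ⊢
    rw [h1]
    exact hp k _
  choose γ hγ using hex
  exact ⟨γ, hγ⟩

lemma mem_inertia_of_tw {σ : Representation ℂ K U} {g h : G} (E : U ≃ₗ[ℂ] U)
    (hE : ∀ k u, E (X.tw σ g k u) = X.tw σ h k (E u)) : h⁻¹ * g ∈ X.inertia σ := by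
  refine ⟨E, fun k u => ?_⟩
  have := hE (X.c g k) u
  simp only [tw_apply, c_inv_c] at this
  rw [this, c_mul]

/-- K1: degree formula -/
lemma degree_formula [Finite G] [Finite K] [FiniteDimensional ℂ V] [FiniteDimensional ℂ U]
    {σ : Representation ℂ K U} (hσ : Irr σ) {ρ : Representation ℂ G V} (hρ : Irr ρ)
    {φ : U →ₗ[ℂ] V} (h : φ ∈ Hm σ (X.res ρ)) (h0 : φ ≠ 0) :
    Module.finrank ℂ V = (X.inertia σ).index * Module.finrank ℂ (Hm σ (X.res ρ)) *
      Module.finrank ℂ U := by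
  classical
  obtain ⟨ι, _, S, hS, hirr, ⟨e, he⟩, γ, hγ⟩ := X.clifford_decomp hσ hρ h h0
  have hdim : Module.finrank ℂ V = Fintype.card ι * Module.finrank ℂ U := by
    rw [e.finrank_eq, Module.finrank_pi_fintype]
    rw [Finset.sum_congr rfl (fun i _ => ?_), Finset.sum_const, Finset.card_univ, smul_eq_mul]
    obtain ⟨E, -⟩ := hγ i
    exact E.finrank_eq.symm
  have hone : ∀ g i, Module.finrank ℂ (Hm (X.tw σ g) (sub (X.res ρ) (S i) (hS i))) =
      if (γ i : G ⧸ X.inertia σ) = g then 1 else 0 := by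
    intro g i
    obtain ⟨E, hE⟩ := hγ i
    split_ifs with hi
    · rw [QuotientGroup.eq] at hi
      obtain ⟨A, hA⟩ := hi
      refine finrank_Hm_irr (X.irr_tw hσ g) (hirr i) (φ := (A.trans E).toLinearMap) ?_ ?_
      · intro k u
        simp only [LinearEquiv.coe_coe, LinearEquiv.trans_apply, tw_apply]
        rw [hA, c_mul, c_c_inv, ← hE, tw_apply]
      · intro h1
        obtain ⟨x, hx⟩ := @exists_ne U hσ.1 0
        apply hx
        apply (A.trans E).injective
        rw [map_zero]
        exact LinearMap.congr_fun h1 x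
    · by_contra hne
      obtain ⟨ψ, hψ, hψ0⟩ := exists_ne_of_finrank hne
      obtain ⟨E', hE'⟩ := iso_of_ne (X.irr_tw hσ g) (hirr i) hψ hψ0
      apply hi
      rw [QuotientGroup.eq]
      refine X.mem_inertia_of_tw (E'.trans E.symm) fun k u => ?_
      simp only [LinearEquiv.trans_apply]
      rw [hE', LinearEquiv.symm_apply_eq, hE]; simp
  have hcount : ∀ q : G ⧸ X.inertia σ,
      (Finset.univ.filter (fun i => (γ i : G ⧸ X.inertia σ) = q)).card =
        Module.finrank ℂ (Hm σ (X.res ρ)) := by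
    intro q
    obtain ⟨g, rfl⟩ := QuotientGroup.mk_surjective q
    rw [← X.finrank_tw σ ρ g, finrank_Hm_pi_right (X.tw σ g) (X.res ρ) _ e he]
    simp only [hone]
    rw [Finset.card_filter]
  rw [hdim]
  congr 1
  have := Fintype.ofFinite (G ⧸ X.inertia σ)
  rw [← Finset.card_univ, Finset.card_eq_sum_card_fiberwise (f := fun i => (γ i : G ⧸ X.inertia σ))
    (t := Finset.univ) (fun _ _ => Finset.mem_coe.2 (Finset.mem_univ _))]
  rw [Finset.sum_congr rfl (fun q _ => hcount q), Finset.sum_const, smul_eq_mul, Finset.card_univ,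
    Subgroup.index, Nat.card_eq_fintype_card]

/-- K1b -/
lemma hom_res [Finite K] [FiniteDimensional ℂ V] [FiniteDimensional ℂ U]
    [FiniteDimensional ℂ W]
    {σ : Representation ℂ K U} (hσ : Irr σ) {ρ : Representation ℂ G V} (hρ : Irr ρ)
    {φ : U →ₗ[ℂ] V} (h : φ ∈ Hm σ (X.res ρ)) (h0 : φ ≠ 0) (hI : X.inertia σ = ⊤)
    (τ : Representation ℂ K W) :
    Module.finrank ℂ (Hm (X.res ρ) τ) * Module.finrank ℂ U =
      Module.finrank ℂ V * Module.finrank ℂ (Hm σ τ) := by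
  classical
  obtain ⟨ι, _, S, hS, hirr, ⟨e, he⟩, γ, hγ⟩ := X.clifford_decomp hσ hρ h h0
  have hdim : Module.finrank ℂ V = Fintype.card ι * Module.finrank ℂ U := by
    rw [e.finrank_eq, Module.finrank_pi_fintype]
    rw [Finset.sum_congr rfl (fun i _ => ?_), Finset.sum_const, Finset.card_univ, smul_eq_mul]
    obtain ⟨E, -⟩ := hγ i
    exact E.finrank_eq.symm
  rw [finrank_Hm_pi_left τ (X.res ρ) _ e he]
  have hone : ∀ i, Module.finrank ℂ (Hm (sub (X.res ρ) (S i) (hS i)) τ) =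
      Module.finrank ℂ (Hm σ τ) := by
    intro i
    obtain ⟨E, hE⟩ := hγ i
    have hi : (γ i)⁻¹ ∈ X.inertia σ := by rw [hI]; trivial
    obtain ⟨A, hA⟩ := hi
    symm
    refine finrank_Hm_congr_left (A.trans E) fun k u => ?_
    simp only [LinearEquiv.trans_apply]
    rw [hA, ← hE, tw_apply]
  rw [Finset.sum_congr rfl (fun i _ => hone i), Finset.sum_const, smul_eq_mul, Finset.card_univ,
    hdim]
  ring

/-- the operator on the multiplicity space -/
noncomputable def bop {σ : Representation ℂ K U} (ρ : Representation ℂ G V) (g : G) (A : U ≃ₗ[ℂ] U)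
    (hA : ∀ k u, A (σ k u) = σ (X.c g k) (A u)) : Hm σ (X.res ρ) ≃ₗ[ℂ] Hm σ (X.res ρ) where
  toFun φ := ⟨(ρ g) ∘ₗ φ.1 ∘ₗ A.symm.toLinearMap, fun k u => by
    have h1 : A.symm (σ k u) = σ (X.c g⁻¹ k) (A.symm u) := by
      rw [LinearEquiv.symm_apply_eq, hA, X.c_c_inv]; simp
    have := X.comp_mem φ.2 g k (A.symm u)
    simp only [LinearMap.comp_apply, LinearEquiv.coe_coe, tw_apply] at this ⊢
    rw [h1, this]⟩
  invFun φ := ⟨(ρ g⁻¹) ∘ₗ φ.1 ∘ₗ A.toLinearMap, fun k u => by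
    have := X.comp_mem φ.2 g⁻¹ k (A u)
    simp only [LinearMap.comp_apply, LinearEquiv.coe_coe, tw_apply, inv_inv] at this ⊢
    rw [hA, this]⟩
  map_add' a b := by ext; simp
  map_smul' a b := by ext; simp
  left_inv a := by ext; simp
  right_inv a := by ext; simp

lemma bop_apply {σ : Representation ℂ K U} (ρ : Representation ℂ G V) (g : G) (A : U ≃ₗ[ℂ] U)
    (hA : ∀ k u, A (σ k u) = σ (X.c g k) (A u)) (φ : Hm σ (X.res ρ)) (u : U) :
    (X.bop ρ g A hA φ).1 u = ρ g (φ.1 (A.symm u)) := rfl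

lemma bop_apply' {σ : Representation ℂ K U} (ρ : Representation ℂ G V) (g : G) (A : U ≃ₗ[ℂ] U)
    (hA : ∀ k u, A (σ k u) = σ (X.c g k) (A u)) (φ : Hm σ (X.res ρ)) (u : U) :
    (X.bop ρ g A hA φ).1 (A u) = ρ g (φ.1 u) := by simp [bop_apply]

/-- two intertwiners for the same element differ by a scalar -/
lemma scalar_unique [FiniteDimensional ℂ U] {σ : Representation ℂ K U} (hσ : Irr σ) {g : G}
    (A B : U ≃ₗ[ℂ] U)
    (hA : ∀ k u, A (σ k u) = σ (X.c g k) (A u)) (hB : ∀ k u, B (σ k u) = σ (X.c g k) (B u)) :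
    ∃ x : ℂ, x ≠ 0 ∧ ∀ u, A u = x • B u := by
  obtain ⟨x, hx⟩ := schur hσ (f := B.symm.toLinearMap ∘ₗ A.toLinearMap) (by
    intro k u
    simp only [LinearMap.comp_apply, LinearEquiv.coe_coe]
    rw [hA, LinearEquiv.symm_apply_eq, hB]; simp)
  have hx' : ∀ u, A u = x • B u := by
    intro u
    have := hx u
    simp only [LinearMap.comp_apply, LinearEquiv.coe_coe] at this
    rw [LinearEquiv.symm_apply_eq, map_smul] at this
    exact this
  refine ⟨x, ?_, hx'⟩
  rintro rfl
  obtain ⟨u, hu⟩ := @exists_ne U hσ.1 0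
  apply hu; apply A.injective; rw [hx']; simp

lemma bop_scalar {σ : Representation ℂ K U} (ρ : Representation ℂ G V) (g : G) (A B : U ≃ₗ[ℂ] U)
    (hA : ∀ k u, A (σ k u) = σ (X.c g k) (A u)) (hB : ∀ k u, B (σ k u) = σ (X.c g k) (B u))
    (x : ℂ) (hx : ∀ u, A u = x • B u) (φ : Hm σ (X.res ρ)) :
    X.bop ρ g B hB φ = x • X.bop ρ g A hA φ := by
  apply Subtype.ext
  apply LinearMap.ext
  intro u
  obtain ⟨w, rfl⟩ := A.surjective u
  simp only [Submodule.coe_smul, LinearMap.smul_apply]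
  rw [bop_apply', hx, map_smul, bop_apply']

lemma bop_mul {σ : Representation ℂ K U} (ρ : Representation ℂ G V) (g h : G) (A B C : U ≃ₗ[ℂ] U)
    (hA : ∀ k u, A (σ k u) = σ (X.c g k) (A u)) (hB : ∀ k u, B (σ k u) = σ (X.c h k) (B u))
    (hC : ∀ k u, C (σ k u) = σ (X.c (g * h) k) (C u))
    (x : ℂ) (hx : ∀ u, A (B u) = x • C u) (φ : Hm σ (X.res ρ)) :
    X.bop ρ (g * h) C hC φ = x • X.bop ρ g A hA (X.bop ρ h B hB φ) := by
  apply Subtype.ext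
  apply LinearMap.ext
  intro u
  obtain ⟨w, rfl⟩ := (B.trans A).surjective u
  simp only [LinearEquiv.trans_apply]
  simp only [Submodule.coe_smul, LinearMap.smul_apply]
  rw [bop_apply', bop_apply', hx, map_smul, bop_apply', rmul]

/-- K2 -/
lemma index_dvd [Finite G] [Finite K] [FiniteDimensional ℂ V] [FiniteDimensional ℂ U]
    {σ : Representation ℂ K U} (hσ : Irr σ) {ρ : Representation ℂ G V} (hρ : Irr ρ)
    {φ : U →ₗ[ℂ] V} (h : φ ∈ Hm σ (X.res ρ)) (h0 : φ ≠ 0) :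
    (X.inertia σ).index * Module.finrank ℂ (Hm σ (X.res ρ)) ∣ X.i.range.index := by
  classical
  have hdeg := X.degree_formula hσ hρ h h0
  have hθ : 0 < Module.finrank ℂ U := @Module.finrank_pos _ _ _ _ _ _ _ _ _ hσ.1
  rw [← Subgroup.relIndex_mul_index (X.range_le_inertia σ), mul_comm]
  refine Nat.mul_dvd_mul_right ?_ _
  have hnt : Nontrivial (Hm σ (X.res ρ)) :=
    ⟨⟨φ, h⟩, 0, fun h1 => h0 (congrArg Subtype.val h1)⟩
  have hA := fun g : X.inertia σ => X.mem_inertia.1 g.2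
  choose A hA using hA
  have hmulx : ∀ g h : X.inertia σ, ∃ x : ℂ, x ≠ 0 ∧ ∀ u, A g (A h u) = x • A (g * h) u := by
    intro g h
    refine X.scalar_unique hσ (g := (g * h : G)) ((A h).trans (A g)) (A (g * h)) ?_ (hA (g * h))
    intro k u
    simp [hA]
  refine proj_dvd (X.i.range.subgroupOf (X.inertia σ)) (fun g => X.bop ρ g (A g) (hA g)) ?_ ?_ ?_
  · intro g h
    obtain ⟨x, hx0, hx⟩ := hmulx g h
    refine ⟨x⁻¹, fun φ => ?_⟩
    have := X.bop_mul ρ g h (A g) (A h) (A (g * h)) (hA g) (hA h) (hA (g * h)) x hx φ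
    rw [show X.bop ρ (g * h : X.inertia σ) (A (g * h)) (hA (g * h)) φ = _ from this, smul_smul,
      inv_mul_cancel₀ hx0, one_smul]
  · intro n hn
    obtain ⟨k, hk⟩ := hn
    have hk' : (n : G) = X.i k := hk.symm
    -- compare with σ k
    have hs : ∃ x : ℂ, x ≠ 0 ∧ ∀ u, A n u = x • σ k u := by
      obtain ⟨B, hB⟩ : ∃ B : U ≃ₗ[ℂ] U, ∀ u, B u = σ k u :=
        ⟨LinearEquiv.ofLinearMap (σ k) (σ k⁻¹) (by ext; simp) (by ext; simp), fun u => rfl⟩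
      obtain ⟨x, hx0, hx⟩ := X.scalar_unique hσ (g := (n : G)) (A n) B (hA n) (by
        intro l u
        rw [hB, hB, hk', X.c_i, ← rmul, ← rmul]; simp)
      exact ⟨x, hx0, fun u => by rw [hx, hB]⟩
    obtain ⟨x, hx0, hx⟩ := hs
    refine ⟨x⁻¹, fun ψ => ?_⟩
    apply Subtype.ext
    apply LinearMap.ext
    intro u
    obtain ⟨w, rfl⟩ := (A n).surjective u
    rw [bop_apply']
    simp only [Submodule.coe_smul, LinearMap.smul_apply]
    rw [hx, map_smul, smul_smul, inv_mul_cancel₀ hx0, one_smul, ψ.2 k w, hk']; rfl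
  · intro S hS
    by_cases hS0 : S = ⊥
    · exact Or.inl hS0
    right
    obtain ⟨ψ, hψS, hψ0⟩ := Submodule.exists_mem_ne_zero_of_ne_bot hS0
    obtain ⟨u0, hu0⟩ : ∃ u, ψ.1 u ≠ 0 := by
      by_contra! hu
      exact hψ0 (Subtype.ext (LinearMap.ext hu))
    have hsp := span_translates hρ {v | ∃ χ ∈ S, ∃ u, v = χ.1 u} (ψ.1 u0) ⟨ψ, hψS, u0, rfl⟩ hu0
    have := Fintype.ofFinite (G ⧸ X.inertia σ)
    -- the evaluation map
    let ev : TensorProduct ℂ S U →ₗ[ℂ] V :=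
      TensorProduct.lift ((Hm σ (X.res ρ)).subtype ∘ₗ S.subtype)
    have hev : ∀ (χ : S) u, ev (χ ⊗ₜ u) = χ.1.1 u := fun χ u => by simp [ev]
    let T : ((G ⧸ X.inertia σ) → TensorProduct ℂ S U) →ₗ[ℂ] V :=
      ∑ q, (ρ q.out) ∘ₗ ev ∘ₗ LinearMap.proj q
    have hT : LinearMap.range T = ⊤ := by
      rw [eq_top_iff, ← hsp, Submodule.span_le]
      rintro _ ⟨g, _, ⟨χ, hχ, u, rfl⟩, rfl⟩
      let q : G ⧸ X.inertia σ := g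
      have hq : q.out⁻¹ * g ∈ X.inertia σ := by
        rw [← QuotientGroup.eq]; simp [q]
      let y : X.inertia σ := ⟨_, hq⟩
      refine ⟨Pi.single q ((⟨_, hS y χ hχ⟩ : S) ⊗ₜ (A y u)), ?_⟩
      simp only [T, LinearMap.sum_apply, LinearMap.comp_apply, LinearMap.proj_apply]
      rw [Finset.sum_eq_single q]
      · rw [Pi.single_eq_same, hev]
        rw [bop_apply', ← rmul]
        simp [y]
      · intro b _ hb
        rw [Pi.single_eq_of_ne hb]; simp
      · simp
    have h1 : Module.finrank ℂ V ≤ (X.inertia σ).index *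
        (Module.finrank ℂ S * Module.finrank ℂ U) := by
      have hle := LinearMap.finrank_range_le T
      rw [hT, finrank_top, Module.finrank_pi_fintype] at hle
      have : Module.Free ℂ S := Module.Free.of_divisionRing ℂ S
      have h3 : Module.finrank ℂ (TensorProduct ℂ S U) = Module.finrank ℂ S * Module.finrank ℂ U :=
        Module.finrank_tensorProduct
      rw [← h3]
      simpa [Subgroup.index, Nat.card_eq_fintype_card, Module.finrank_tensorProduct] using hle
    have h2 : Module.finrank ℂ (Hm σ (X.res ρ)) ≤ Module.finrank ℂ S := by
      rw [hdeg, mul_assoc] at h1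
      have hi : 0 < (X.inertia σ).index := Nat.pos_of_ne_zero Subgroup.index_ne_zero_of_finite
      exact Nat.le_of_mul_le_mul_right (Nat.le_of_mul_le_mul_left h1 hi) hθ
    exact Submodule.eq_top_of_finrank_eq (le_antisymm (Submodule.finrank_le _) h2)

end CX

end clifford
end CDB

namespace CDB

section regular

variable {K G : Type} [Group K] [Group G] {U V W : Type} [AddCommGroup U] [Module ℂ U]
  [AddCommGroup V] [Module ℂ V] [AddCommGroup W] [Module ℂ W]

/-- the regular representation on functions -/
def reg (G : Type) [Group G] : Representation ℂ G (G → ℂ) where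
  toFun g := LinearMap.funLeft ℂ ℂ (fun x => g⁻¹ * x)
  map_one' := by ext f x; simp [LinearMap.funLeft_apply]
  map_mul' g h := by ext f x; simp [LinearMap.funLeft_apply, mul_assoc]

@[simp] lemma reg_apply (g : G) (f : G → ℂ) (x : G) : reg G g f x = f (g⁻¹ * x) := rfl

lemma finrank_Hm_comm [Finite K] [FiniteDimensional ℂ U] [FiniteDimensional ℂ V]
    {σ : Representation ℂ K U} (hσ : Irr σ) (ρ : Representation ℂ K V) :
    Module.finrank ℂ (Hm ρ σ) = Module.finrank ℂ (Hm σ ρ) := by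
  obtain ⟨ι, _, S, hS, hirr, e, he⟩ := exists_decomp ρ
  rw [finrank_Hm_pi_right σ ρ _ e he, finrank_Hm_pi_left σ ρ _ e he]
  refine Finset.sum_congr rfl fun i _ => ?_
  by_cases h1 : Module.finrank ℂ (Hm (sub ρ (S i) (hS i)) σ) = 0
  · by_contra h2
    obtain ⟨φ, hφ, h0⟩ := exists_ne_of_finrank (fun h => h2 (h1.trans h.symm))
    obtain ⟨E, hE⟩ := iso_of_ne hσ (hirr i) hφ h0
    rw [← finrank_Hm_congr_left E hE, finrank_Hm_self hσ] at h1
    exact one_ne_zero h1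
  · obtain ⟨φ, hφ, h0⟩ := exists_ne_of_finrank h1
    obtain ⟨E, hE⟩ := iso_of_ne (hirr i) hσ hφ h0
    rw [finrank_Hm_congr_left E hE, finrank_Hm_congr_right E hE]

namespace CX
variable (X : CX K G)

lemma range_normal : X.i.range.Normal := by
  constructor
  rintro _ ⟨k, rfl⟩ g
  exact ⟨X.c g k, X.hc g k⟩

/-- the basic intertwiner into the regular representation -/
noncomputable def phi (σ : Representation ℂ K U) (l : Module.Dual ℂ U) : U →ₗ[ℂ] (G → ℂ) :=
  open Classical in
  LinearMap.pi fun x => if h : ∃ k, X.i k = x then l ∘ₗ σ (h.choose)⁻¹ else 0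

lemma phi_i (σ : Representation ℂ K U) (l : Module.Dual ℂ U) (u : U) (k : K) :
    X.phi σ l u (X.i k) = l (σ k⁻¹ u) := by
  classical
  have h : ∃ k', X.i k' = X.i k := ⟨k, rfl⟩
  have h1 : h.choose = k := X.inj h.choose_spec
  simp only [phi, LinearMap.pi_apply]
  rw [dif_pos h, h1]; rfl

lemma phi_not (σ : Representation ℂ K U) (l : Module.Dual ℂ U) (u : U) (x : G)
    (hx : x ∉ X.i.range) : X.phi σ l u x = 0 := by
  classical
  simp only [phi, LinearMap.pi_apply]
  rw [dif_neg (by rintro ⟨k, hk⟩; exact hx ⟨k, hk⟩)]; rfl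

lemma phi_mem (σ : Representation ℂ K U) (l : Module.Dual ℂ U) :
    X.phi σ l ∈ Hm σ (X.res (reg G)) := by
  intro k u
  ext x
  rw [res_apply, reg_apply]
  by_cases hx : x ∈ X.i.range
  · obtain ⟨m, rfl⟩ := hx
    rw [← map_inv, ← map_mul, phi_i, phi_i, ← rmul]
    simp
  · rw [phi_not _ _ _ _ _ hx, phi_not]
    intro h
    apply hx
    have := X.i.range.mul_mem (⟨k, rfl⟩ : X.i k ∈ X.i.range) h
    rwa [mul_inv_cancel_left] at this

lemma phi_ne {σ : Representation ℂ K U} {l : Module.Dual ℂ U} {u : U} (h : l u ≠ 0) :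
    X.phi σ l u ≠ 0 := by
  intro h0
  have := congrFun h0 (X.i 1)
  rw [phi_i] at this
  simp at this
  exact h this

lemma exists_over [Finite G] [Finite K] [FiniteDimensional ℂ U] {σ : Representation ℂ K U}
    (hσ : Irr σ) : ∃ (V : Type) (_ : AddCommGroup V) (_ : Module ℂ V) (_ : FiniteDimensional ℂ V)
      (ρ : Representation ℂ G V), Irr ρ ∧ ∃ φ ∈ Hm σ (X.res ρ), φ ≠ 0 := by
  classical
  obtain ⟨u, hu⟩ := @exists_ne U hσ.1 0
  obtain ⟨l, hl⟩ : ∃ l : Module.Dual ℂ U, l u ≠ 0 := by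
    by_contra! h
    exact hu ((Module.forall_dual_apply_eq_zero_iff ℂ u).1 h)
  have h1 := X.phi_ne (σ := σ) hl
  obtain ⟨ι, _, S, hS, hirr, e, he⟩ := exists_decomp (reg G)
  obtain ⟨i, hi⟩ : ∃ i, e (X.phi σ l u) i ≠ 0 := by
    by_contra! h
    apply h1
    apply e.injective
    rw [map_zero]; ext1 i; exact h i
  refine ⟨S i, inferInstance, inferInstance, inferInstance, sub (reg G) (S i) (hS i), hirr i,
    LinearMap.proj i ∘ₗ e.toLinearMap ∘ₗ X.phi σ l, ?_, ?_⟩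
  · intro k u
    simp only [LinearMap.comp_apply, LinearEquiv.coe_coe, LinearMap.proj_apply]
    rw [X.phi_mem σ l k u]
    exact he _ _ _
  · intro h
    exact hi (LinearMap.congr_fun h u)

lemma finrank_reg [Finite G] [FiniteDimensional ℂ U] (σ : Representation ℂ K U) :
    Module.finrank ℂ (Hm σ (X.res (reg G))) = X.i.range.index * Module.finrank ℂ U := by
  classical
  have hnorm := X.range_normal
  have hr : ∀ x : G, ∃ k : K, X.i k = x * ((x : G ⧸ X.i.range).out)⁻¹ := by
    intro x
    have h1 : (x : G ⧸ X.i.range).out⁻¹ * x ∈ X.i.range := by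
      rw [← QuotientGroup.eq]; simp
    have h2 := hnorm.mem_comm h1
    exact h2
  choose r hr using hr
  have hr1 : ∀ x, x = X.i (r x) * (x : G ⧸ X.i.range).out := fun x => by rw [hr]; group
  have hcos : ∀ k x, ((X.i k * x : G) : G ⧸ X.i.range) = x := by
    intro k x
    rw [QuotientGroup.eq]
    exact ⟨X.c x⁻¹ k⁻¹, by rw [X.hc]; simp⟩
  have hrk : ∀ k x, r (X.i k * x) = k * r x := by
    intro k x
    apply X.inj
    rw [hr, map_mul, hr, hcos, mul_assoc]
  have hro : ∀ q : G ⧸ X.i.range, r q.out = 1 := by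
    intro q
    apply X.inj
    rw [hr]; simp
  have := Fintype.ofFinite (G ⧸ X.i.range)
  have hd : Module.finrank ℂ ((G ⧸ X.i.range) → Module.Dual ℂ U) =
      X.i.range.index * Module.finrank ℂ U := by
    rw [Module.finrank_pi_fintype]
    simp [Subgroup.index, Nat.card_eq_fintype_card, Subspace.dual_finrank_eq]
  rw [← hd]
  refine LinearEquiv.finrank_eq
    { toFun := fun φ q => LinearMap.proj q.out ∘ₗ φ.1
      invFun := fun f => ⟨LinearMap.pi fun x => f x ∘ₗ σ (r x)⁻¹, fun k u => ?_⟩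
      map_add' := fun a b => by ext; simp
      map_smul' := fun a b => by ext; simp
      left_inv := fun φ => ?_
      right_inv := fun f => ?_ }
  · ext x
    simp only [LinearMap.pi_apply, LinearMap.comp_apply, res_apply, reg_apply]
    rw [← map_inv, hcos, hrk, ← rmul]; simp
  · ext u x
    simp only [LinearMap.pi_apply, LinearMap.comp_apply, LinearMap.proj_apply]
    rw [φ.2, res_apply, reg_apply]
    conv_rhs => rw [hr1 x]
    simp
  · ext q u
    simp only [LinearMap.pi_apply, LinearMap.comp_apply, LinearMap.proj_apply]
    rw [hro]; simp

/-- if all multiplicities over `σ` are one then the inertia quotient is abelian -/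
lemma comm_mem [Finite G] [Finite K] [FiniteDimensional ℂ U] {σ : Representation ℂ K U}
    (hσ : Irr σ)
    (hone : ∀ (V : Type) (_ : AddCommGroup V) (_ : Module ℂ V) (_ : FiniteDimensional ℂ V)
      (ρ : Representation ℂ G V), Irr ρ → Module.finrank ℂ (Hm σ (X.res ρ)) ≤ 1)
    {x y : G} (hx : x ∈ X.inertia σ) (hy : y ∈ X.inertia σ) :
    (x * y)⁻¹ * (y * x) ∈ X.i.range := by
  classical
  obtain ⟨A, hA⟩ := hx
  obtain ⟨B, hB⟩ := hy
  obtain ⟨u, hu⟩ := @exists_ne U hσ.1 0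
  obtain ⟨l, hl⟩ : ∃ l : Module.Dual ℂ U, l u ≠ 0 := by
    by_contra! h
    exact hu ((Module.forall_dual_apply_eq_zero_iff ℂ u).1 h)
  let ψ : Hm σ (X.res (reg G)) := ⟨X.phi σ l, X.phi_mem σ l⟩
  have hcomm : X.bop (reg G) x A hA (X.bop (reg G) y B hB ψ) =
      X.bop (reg G) y B hB (X.bop (reg G) x A hA ψ) := by
    obtain ⟨ι, _, S, hS, hirr, e, he⟩ := exists_decomp (reg G)
    apply Subtype.ext
    apply LinearMap.ext
    intro w
    apply e.injective
    ext1 i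
    let p : (G → ℂ) →ₗ[ℂ] S i := LinearMap.proj i ∘ₗ e.toLinearMap
    have hp : ∀ g v, p (reg G g v) = sub (reg G) (S i) (hS i) g (p v) := fun g v => he g v i
    let P : Hm σ (X.res (reg G)) → Hm σ (X.res (sub (reg G) (S i) (hS i))) := fun φ =>
      ⟨p ∘ₗ φ.1, fun k u => by
        simp only [LinearMap.comp_apply]
        rw [φ.2]; exact hp _ _⟩
    have hPB : ∀ g A hA φ, P (X.bop (reg G) g A hA φ) =
        X.bop (sub (reg G) (S i) (hS i)) g A hA (P φ) := by
      intro g A hA φ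
      apply Subtype.ext
      apply LinearMap.ext
      intro w
      exact hp _ _
    have hle := hone _ inferInstance inferInstance inferInstance (sub (reg G) (S i) (hS i))
      (hirr i)
    have hsc : ∀ f : Hm σ (X.res (sub (reg G) (S i) (hS i))) ≃ₗ[ℂ]
        Hm σ (X.res (sub (reg G) (S i) (hS i))), ∃ c : ℂ, ∀ v, f v = c • v := by
      intro f
      rw [finrank_le_one_iff] at hle
      obtain ⟨v, hv⟩ := hle
      obtain ⟨c, hc⟩ := hv (f v)
      refine ⟨c, fun w => ?_⟩
      obtain ⟨d, rfl⟩ := hv w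
      rw [map_smul, ← hc, smul_comm]
    have hfin : P (X.bop (reg G) x A hA (X.bop (reg G) y B hB ψ)) =
      P (X.bop (reg G) y B hB (X.bop (reg G) x A hA ψ)) := by
      rw [hPB, hPB, hPB, hPB]
      obtain ⟨c, hc⟩ := hsc (X.bop (sub (reg G) (S i) (hS i)) x A hA)
      obtain ⟨d, hd⟩ := hsc (X.bop (sub (reg G) (S i) (hS i)) y B hB)
      rw [hc, hd, hd, hc, smul_comm]
    exact LinearMap.congr_fun (congrArg Subtype.val hfin) w
  have h1 := LinearMap.congr_fun (congrArg Subtype.val hcomm) (A (B u))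
  rw [bop_apply', bop_apply', bop_apply, bop_apply] at h1
  have h2 := congrFun h1 (x * y)
  simp only [reg_apply] at h2
  have h3 : y⁻¹ * (x⁻¹ * (x * y)) = X.i 1 := by simp
  have h4 : X.phi σ l u (X.i 1) ≠ 0 := by rw [phi_i]; simpa using hl
  rw [h3] at h2
  change X.phi σ l u (X.i 1) = _ at h2
  rw [h2] at h4
  by_contra hn
  apply h4
  apply phi_not
  intro h5
  apply hn
  have := X.i.range.inv_mem h5
  convert this using 1
  group

end CX

/-- the identity pair -/
def idCX (G : Type) [Group G] : CX G G where
  i := MonoidHom.id G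
  c := MulAut.conj
  hc g k := by simp
  inj := fun _ _ h => h

lemma finrank_reg_self [Finite G] [FiniteDimensional ℂ U] (σ : Representation ℂ G U) :
    Module.finrank ℂ (Hm σ (reg G)) = Module.finrank ℂ U := by
  have h1 : (idCX G).i.range.index = 1 := by
    rw [Subgroup.index_eq_one]
    exact MonoidHom.range_eq_top.2 fun x => ⟨x, rfl⟩
  have := (idCX G).finrank_reg σ
  rw [h1, one_mul] at this
  exact this

/-- if `r` divides all multiplicities then `r²` divides the index -/
lemma CX.sq_dvd_index (X : CX K G) [Finite G] [Finite K] [FiniteDimensional ℂ U]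
    {σ : Representation ℂ K U} (hσ : Irr σ) (hI : X.inertia σ = ⊤) (r : ℕ)
    (hr : ∀ (V : Type) (_ : AddCommGroup V) (_ : Module ℂ V) (_ : FiniteDimensional ℂ V)
      (ρ : Representation ℂ G V), r ∣ Module.finrank ℂ (Hm σ (X.res ρ))) :
    r ^ 2 ∣ X.i.range.index := by
  classical
  have hθ : 0 < Module.finrank ℂ U := @Module.finrank_pos _ _ _ _ _ _ _ _ _ hσ.1
  obtain ⟨ι, _, S, hS, hirr, e, he⟩ := exists_decomp (reg G)
  let m : ι → ℕ := fun j => Module.finrank ℂ (Hm σ (X.res (sub (reg G) (S j) (hS j))))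
  have hsum : ∑ j, m j = X.i.range.index * Module.finrank ℂ U := by
    rw [← X.finrank_reg σ]
    symm
    exact finrank_Hm_pi_right σ (X.res (reg G)) (fun j => X.res (sub (reg G) (S j) (hS j))) e
      (fun g v i => he _ _ _)
  let st : Setoid ι :=
    { r := fun j k => ∃ E : S j ≃ₗ[ℂ] S k, ∀ g u, E (sub (reg G) (S j) (hS j) g u) =
        sub (reg G) (S k) (hS k) g (E u)
      iseqv := ⟨fun j => ⟨LinearEquiv.refl ℂ _, fun g u => rfl⟩,
        fun {j k} ⟨E, hE⟩ => ⟨E.symm, fun g u => by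
          rw [LinearEquiv.symm_apply_eq, hE]; simp⟩,
        fun {j k l} ⟨E, hE⟩ ⟨E', hE'⟩ => ⟨E.trans E', fun g u => by
          simp [LinearEquiv.trans_apply, hE, hE']⟩⟩ }
  have hm : ∀ j k, st.r j k → m j = m k := by
    rintro j k ⟨E, hE⟩
    exact finrank_Hm_congr_right E (fun g u => hE _ _)
  have hcard : ∀ j, (Finset.univ.filter (fun k => st.r k j)).card = Module.finrank ℂ (S j) := by
    intro j
    rw [← finrank_reg_self (sub (reg G) (S j) (hS j)),
      finrank_Hm_pi_right (sub (reg G) (S j) (hS j)) (reg G) _ e he, Finset.card_filter]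
    refine Finset.sum_congr rfl fun k _ => ?_
    split_ifs with h
    · obtain ⟨E, hE⟩ := st.iseqv.symm h
      rw [← finrank_Hm_congr_right E hE, finrank_Hm_self (hirr j)]
    · by_contra hne
      obtain ⟨ψ, hψ, hψ0⟩ := exists_ne_of_finrank (fun h => hne h.symm)
      exact h (st.iseqv.symm (iso_of_ne (hirr j) (hirr k) hψ hψ0))
  have hdim : ∀ j, m j ≠ 0 → Module.finrank ℂ (S j) = m j * Module.finrank ℂ U := by
    intro j hj
    obtain ⟨φ, hφ, h0⟩ := exists_ne_of_finrank hj
    have := X.degree_formula hσ (hirr j) hφ h0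
    rw [hI, Subgroup.index_top, one_mul] at this
    exact this
  have hdvd : r ^ 2 * Module.finrank ℂ U ∣ ∑ j, m j := by
    rw [← Finset.sum_fiberwise Finset.univ (fun j => (Quotient.mk st j)) m]
    refine Finset.dvd_sum fun q _ => ?_
    obtain ⟨j, rfl⟩ := Quotient.exists_rep q
    have h1 : (Finset.univ.filter (fun k => (Quotient.mk st k) = Quotient.mk st j)) =
        Finset.univ.filter (fun k => st.r k j) := by
      ext k
      simp only [Finset.mem_filter, Finset.mem_univ, true_and]
      exact Quotient.eq
    rw [h1, Finset.sum_congr rfl (g := fun _ => m j)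
      (fun k hk => hm k j (Finset.mem_filter.1 hk).2), Finset.sum_const, smul_eq_mul, hcard]
    by_cases hj : m j = 0
    · rw [hj, mul_zero]; exact dvd_zero _
    · rw [hdim j hj]
      obtain ⟨a, ha⟩ := hr _ inferInstance inferInstance inferInstance (sub (reg G) (S j) (hS j))
      have ha' : m j = r * a := ha
      rw [ha']
      exact ⟨a ^ 2, by ring⟩
  rw [hsum] at hdvd
  exact Nat.dvd_of_mul_dvd_mul_right hθ hdvd

end regular
end CDB

namespace CDB

section tensor

variable {K G : Type} [Group K] [Group G] {U V E : Type} [AddCommGroup U] [Module ℂ U]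
  [AddCommGroup V] [Module ℂ V] [AddCommGroup E] [Module ℂ E]

namespace CX
variable (X : CX K G)

/-- evaluation lemma -/
lemma exists_in_hom [Finite G] [FiniteDimensional ℂ E] [FiniteDimensional ℂ V]
    {ρ : Representation ℂ G V} (hρ : Irr ρ) {β : Representation ℂ G E} (hβ : Irr β)
    (htriv : ∀ k x, β (X.i k) x = x) :
    ∃ (S : Type) (_ : AddCommGroup S) (_ : Module ℂ S) (_ : FiniteDimensional ℂ S)
      (κ : Representation ℂ G S), Irr κ ∧
      Module.finrank ℂ S ≤ Module.finrank ℂ E * Module.finrank ℂ V ∧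
      Module.finrank ℂ E ≤ Module.finrank ℂ (Hm (X.res κ) (X.res ρ)) := by
  have hE := hβ.1
  have hV := hρ.1
  let L := Representation.linHom β ρ
  have hL : ∀ g f x, L g f x = ρ g (f (β g⁻¹ x)) := fun g f x => rfl
  have hdimL : Module.finrank ℂ (E →ₗ[ℂ] V) = Module.finrank ℂ E * Module.finrank ℂ V :=
    Module.finrank_linearMap ℂ ℂ E V
  have hpos : 0 < Module.finrank ℂ (E →ₗ[ℂ] V) := by
    rw [hdimL]; exact Nat.mul_pos Module.finrank_pos Module.finrank_pos
  have hne : (⊤ : Submodule ℂ (E →ₗ[ℂ] V)) ≠ ⊥ := by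
    intro h
    rw [← finrank_top, h, finrank_bot] at hpos
    exact lt_irrefl _ hpos
  obtain ⟨T, hT, -, hirr⟩ := exists_irr_sub L ⊤ (fun g v _ => trivial) hne
  refine ⟨T, inferInstance, inferInstance, inferInstance, sub L T hT, hirr, ?_, ?_⟩
  · rw [← hdimL]; exact Submodule.finrank_le T
  · let ev : E →ₗ[ℂ] Hm (X.res (sub L T hT)) (X.res ρ) :=
      { toFun := fun x => ⟨(LinearMap.applyₗ x) ∘ₗ T.subtype, fun k s => by
          simp only [LinearMap.comp_apply, Submodule.subtype_apply, LinearMap.applyₗ_apply_apply,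
            res_apply, sub_apply]
          rw [hL, ← map_inv, htriv]⟩
        map_add' := fun x y => by ext; simp
        map_smul' := fun c x => by ext; simp }
    have hev : ∀ x (s : T), (ev x).1 s = s.1 x := fun x s => rfl
    apply LinearMap.finrank_le_finrank_of_injective (f := ev)
    rw [← LinearMap.ker_eq_bot]
    have hker : Stab β (LinearMap.ker ev) := by
      intro g x hx
      rw [LinearMap.mem_ker] at hx ⊢
      apply Subtype.ext
      apply LinearMap.ext
      intro s
      rw [hev]
      have h1 := hev x (sub L T hT g⁻¹ s)
      rw [hx, sub_apply, hL, inv_inv] at h1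
      have h2 := congrArg (ρ g) h1.symm
      rw [rinv'] at h2
      rw [h2]
      simp
    rcases hβ.2 _ hker with h | h
    · exact h
    · exfalso
      obtain ⟨s, hs⟩ := @exists_ne T hirr.1 0
      apply hs
      apply Subtype.ext
      apply LinearMap.ext
      intro x
      have hx : x ∈ LinearMap.ker ev := by rw [h]; trivial
      rw [LinearMap.mem_ker] at hx
      rw [← hev, hx]; rfl

lemma inertia_res (τ : Representation ℂ G U) : X.inertia (X.res τ) = ⊤ := by
  rw [eq_top_iff]
  intro g _
  refine ⟨LinearEquiv.ofLinearMap (τ g) (τ g⁻¹) (by ext; simp) (by ext; simp), fun k u => ?_⟩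
  simp only [LinearEquiv.coe_ofLinearMap, res_apply, X.hc, ← rmul]
  congr 2; group

/-- Lemma X1: the tensor product of an extension and an irreducible of the quotient -/
lemma exists_tensor [Finite G] [Finite K] [FiniteDimensional ℂ E] [FiniteDimensional ℂ U]
    {τ : Representation ℂ G U} (hτ : Irr (X.res τ)) {β : Representation ℂ G E} (hβ : Irr β)
    (htriv : ∀ k x, β (X.i k) x = x) :
    ∃ (S : Type) (_ : AddCommGroup S) (_ : Module ℂ S) (_ : FiniteDimensional ℂ S)
      (κ : Representation ℂ G S), Irr κ ∧
      Module.finrank ℂ S = Module.finrank ℂ E * Module.finrank ℂ U := by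
  have hτ' : Irr τ := ⟨hτ.1, fun S hS => hτ.2 S fun k v hv => hS _ v hv⟩
  have hE := hβ.1
  obtain ⟨S, _, _, _, κ, hκ, h1, h2⟩ := X.exists_in_hom hτ' hβ htriv
  refine ⟨S, inferInstance, inferInstance, inferInstance, κ, hκ, le_antisymm h1 ?_⟩
  have h3 : Module.finrank ℂ (Hm (X.res τ) (X.res κ)) ≠ 0 := by
    rw [← finrank_Hm_comm hτ]
    have : 0 < Module.finrank ℂ E := Module.finrank_pos
    omega
  obtain ⟨φ, hφ, h0⟩ := exists_ne_of_finrank h3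
  have h4 := X.hom_res hτ hκ hφ h0 (X.inertia_res τ) (X.res τ)
  rw [finrank_Hm_self hτ, mul_one] at h4
  rw [← h4]
  exact Nat.mul_le_mul_right _ h2

/-- Lemma R4 -/
lemma exists_mult [Finite G] [Finite K] [FiniteDimensional ℂ E] [FiniteDimensional ℂ U]
    [FiniteDimensional ℂ V] {σ : Representation ℂ K U} (hσ : Irr σ) (hI : X.inertia σ = ⊤)
    {ρ : Representation ℂ G V} (hρ : Irr ρ)
    {φ : U →ₗ[ℂ] V} (h : φ ∈ Hm σ (X.res ρ)) (h0 : φ ≠ 0)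
    {β : Representation ℂ G E} (hβ : Irr β) (htriv : ∀ k x, β (X.i k) x = x) :
    ∃ (S : Type) (_ : AddCommGroup S) (_ : Module ℂ S) (_ : FiniteDimensional ℂ S)
      (κ : Representation ℂ G S), Irr κ ∧ Module.finrank ℂ (Hm σ (X.res κ)) ≠ 0 ∧
      Module.finrank ℂ E ≤ Module.finrank ℂ (Hm σ (X.res κ)) *
        Module.finrank ℂ (Hm σ (X.res ρ)) := by
  have hE := hβ.1
  have hθ : 0 < Module.finrank ℂ U := @Module.finrank_pos _ _ _ _ _ _ _ _ _ hσ.1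
  obtain ⟨S, _, _, _, κ, hκ, h1, h2⟩ := X.exists_in_hom hρ hβ htriv
  have hpos : 0 < Module.finrank ℂ E := Module.finrank_pos
  -- multiplicity of σ in κ is nonzero
  have hne : Module.finrank ℂ (Hm σ (X.res κ)) ≠ 0 := by
    intro hz
    obtain ⟨ι, _, T, hT, hirr, ⟨e, he⟩, γ, hγ⟩ := X.clifford_decomp hσ hρ h h0
    rw [finrank_Hm_pi_right (X.res κ) (X.res ρ) _ e he, Finset.sum_eq_zero] at h2
    · omega
    · intro i _
      rw [finrank_Hm_comm (hirr i)]
      obtain ⟨E', hE'⟩ := hγ i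
      have hi : (γ i)⁻¹ ∈ X.inertia σ := by rw [hI]; trivial
      obtain ⟨A, hA⟩ := hi
      rw [← hz]
      symm
      refine finrank_Hm_congr_left (A.trans E') fun k u => ?_
      simp only [LinearEquiv.trans_apply]
      rw [hA, ← hE', tw_apply]
  refine ⟨S, inferInstance, inferInstance, inferInstance, κ, hκ, hne, h2.trans ?_⟩
  obtain ⟨ψ, hψ, hψ0⟩ := exists_ne_of_finrank hne
  have h4 := X.hom_res hσ hκ hψ hψ0 hI (X.res ρ)
  have h5 := X.degree_formula hσ hκ hψ hψ0
  rw [hI, Subgroup.index_top, one_mul] at h5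
  rw [h5] at h4
  apply le_of_eq
  apply Nat.eq_of_mul_eq_mul_right hθ
  rw [h4]; ring

/-- Lemma Y -/
lemma extend_or_prime [FiniteDimensional ℂ U] {σ : Representation ℂ K U} (hσ : Irr σ)
    (hI : X.inertia σ = ⊤) :
    (∃ τ : Representation ℂ G U, Irr (X.res τ)) ∨
    ∃ r : ℕ, r.Prime ∧ r ∣ Module.finrank ℂ U ∧
      ∀ (V : Type) (_ : AddCommGroup V) (_ : Module ℂ V) (_ : FiniteDimensional ℂ V)
      (ρ : Representation ℂ G V), r ∣ Module.finrank ℂ (Hm σ (X.res ρ)) := by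
  have hU := hσ.1
  have hA : ∀ g : G, ∃ A : U ≃ₗ[ℂ] U, ∀ k u, A (σ k u) = σ (X.c g k) (A u) := by
    intro g
    have : g ∈ X.inertia σ := by rw [hI]; trivial
    exact this
  choose A hA using hA
  have hmulx : ∀ g h : G, ∃ x : ℂˣ, ∀ u, A g (A h u) = (x : ℂ) • A (g * h) u := by
    intro g h
    obtain ⟨x, hx0, hx⟩ := X.scalar_unique hσ (g := g * h) ((A h).trans (A g)) (A (g * h))
      (by intro k u; simp [hA]) (hA (g * h))
    exact ⟨Units.mk0 x hx0, hx⟩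
  choose α hα using hmulx
  let D : AddSubgroup ℤ :=
    { carrier := {d | ∃ δ : G → ℂˣ, ∀ g h, δ g * δ h = α g h ^ d * δ (g * h)}
      zero_mem' := ⟨fun _ => 1, by simp⟩
      add_mem' := by
        rintro a b ⟨δ, hδ⟩ ⟨ε, hε⟩
        refine ⟨fun g => δ g * ε g, fun g h => ?_⟩
        rw [zpow_add, mul_mul_mul_comm, hδ, hε, mul_mul_mul_comm]
      neg_mem' := by
        rintro a ⟨δ, hδ⟩
        refine ⟨fun g => (δ g)⁻¹, fun g h => ?_⟩
        rw [zpow_neg, ← mul_inv, ← mul_inv, hδ] }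
  have hD : ∀ d, d ∈ D ↔ ∃ δ : G → ℂˣ, ∀ g h, δ g * δ h = α g h ^ d * δ (g * h) :=
    fun d => Iff.rfl
  have hθ : (Module.finrank ℂ U : ℤ) ∈ D := by
    refine ⟨fun g => LinearEquiv.det (A g), fun g h => ?_⟩
    apply Units.ext
    have h1 : (A g : U →ₗ[ℂ] U) * (A h : U →ₗ[ℂ] U) =
        (α g h : ℂ) • (A (g * h) : U →ₗ[ℂ] U) := by
      ext u; exact hα g h u
    have h2 := congrArg LinearMap.det h1
    rw [map_mul, LinearMap.det_smul] at h2
    simpa using h2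
  have hm : ∀ (V : Type) (_ : AddCommGroup V) (_ : Module ℂ V) (_ : FiniteDimensional ℂ V)
      (ρ : Representation ℂ G V), (Module.finrank ℂ (Hm σ (X.res ρ)) : ℤ) ∈ D := by
    intro V _ _ _ ρ
    rw [← neg_mem_iff]
    refine ⟨fun g => LinearEquiv.det (X.bop ρ g (A g) (hA g)), fun g h => ?_⟩
    apply Units.ext
    have h1 : (X.bop ρ (g * h) (A (g * h)) (hA (g * h)) :
        Hm σ (X.res ρ) →ₗ[ℂ] Hm σ (X.res ρ)) = (α g h : ℂ) •
        ((X.bop ρ g (A g) (hA g) : Hm σ (X.res ρ) →ₗ[ℂ] Hm σ (X.res ρ)) *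
        (X.bop ρ h (A h) (hA h) : Hm σ (X.res ρ) →ₗ[ℂ] Hm σ (X.res ρ))) := by
      apply LinearMap.ext
      intro φ
      exact X.bop_mul ρ g h (A g) (A h) (A (g * h)) (hA g) (hA h) (hA (g * h)) (α g h) (hα g h) φ
    have h2 := congrArg LinearMap.det h1
    rw [LinearMap.det_smul, map_mul] at h2
    have h3 : (α g h : ℂ) ≠ 0 := (α g h).ne_zero
    simp only [Units.val_mul, LinearEquiv.coe_det]
    rw [h2, zpow_neg, zpow_natCast, Units.val_inv_eq_inv_val, Units.val_pow_eq_pow_val,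
      ← mul_assoc, inv_mul_cancel₀ (pow_ne_zero _ h3), one_mul]
  obtain ⟨a, ha⟩ := Int.subgroup_cyclic D
  rw [← AddSubgroup.zmultiples_eq_closure] at ha
  by_cases ha1 : a.natAbs = 1
  · left
    have h1 : (1 : ℤ) ∈ D := by
      rw [ha, Int.mem_zmultiples_iff, ← Int.natAbs_dvd, ha1]; simp
    obtain ⟨δ, hδ⟩ := h1
    have hmul : ∀ g h u, ((δ g)⁻¹ : ℂ) • A g (((δ h)⁻¹ : ℂ) • A h u) =
        ((δ (g * h))⁻¹ : ℂ) • A (g * h) u := by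
      intro g h u
      rw [map_smul, hα, smul_smul, smul_smul]
      congr 1
      have h2 := congrArg Units.val (hδ g h)
      simp only [Units.val_mul, zpow_one] at h2
      have h3 := (δ g).ne_zero
      have h4 := (δ h).ne_zero
      have h5 := (δ (g * h)).ne_zero
      field_simp
      rw [h2]
    let C : G → U →ₗ[ℂ] U := fun g => ((δ g)⁻¹ : ℂ) • (A g : U →ₗ[ℂ] U)
    have hC : ∀ g u, C g u = ((δ g)⁻¹ : ℂ) • A g u := fun g u => rfl
    have hCmul : ∀ g h, C (g * h) = C g * C h := by
      intro g h
      apply LinearMap.ext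
      intro u
      rw [Module.End.mul_apply, hC, hC, hC, hmul]
    have hCinj : ∀ g, Function.Injective (C g) := by
      intro g u v h
      rw [hC, hC] at h
      exact (A g).injective (smul_right_injective U (inv_ne_zero (δ g).ne_zero) h)
    have hC1 : C 1 = 1 := by
      apply LinearMap.ext
      intro u
      apply hCinj 1
      have := hCmul 1 1
      rw [mul_one] at this
      conv_rhs => rw [this]
      rfl
    let τ : Representation ℂ G U := { toFun := C, map_one' := hC1, map_mul' := hCmul }
    refine ⟨τ, hσ.1, fun S hS => hσ.2 S fun k v hv => ?_⟩
    obtain ⟨B, hB⟩ : ∃ B : U ≃ₗ[ℂ] U, ∀ u, B u = σ k u :=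
      ⟨LinearEquiv.ofLinearMap (σ k) (σ k⁻¹) (by ext; simp) (by ext; simp), fun u => rfl⟩
    obtain ⟨x, hx0, hx⟩ := X.scalar_unique hσ (g := X.i k) B (A (X.i k)) (by
      intro l u
      rw [hB, hB, X.c_i, ← rmul, ← rmul]; simp) (hA (X.i k))
    have h6 : σ k v = (x * δ (X.i k)) • X.res τ k v := by
      rw [← hB, hx]
      show _ = _ • C (X.i k) v
      rw [hC, smul_smul, mul_assoc, mul_inv_cancel₀ (δ (X.i k)).ne_zero, mul_one]
    rw [h6]
    exact S.smul_mem _ (hS k v hv)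
  · right
    have hdvd : ∀ d : ℕ, (d : ℤ) ∈ D → a.natAbs.minFac ∣ d := by
      intro d hd
      rw [ha, Int.mem_zmultiples_iff] at hd
      exact (Nat.minFac_dvd _).trans (Int.natAbs_dvd_natAbs.2 hd)
    exact ⟨a.natAbs.minFac, Nat.minFac_prime ha1, hdvd _ hθ,
      fun V _ _ hV ρ => hdvd _ (hm V _ _ hV ρ)⟩

end CX

end tensor
end CDB

namespace CDB

section fieldnine

variable (F : Type) [Field F] [Fintype F]

lemma three_eq (hF : Fintype.card F = 9) : (3 : F) = 0 := by
  have h := FiniteField.cast_card_eq_zero F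
  rw [hF] at h
  have : (3 : F) * 3 = 0 := by norm_num; exact_mod_cast h
  simpa using this

lemma pow_nine (hF : Fintype.card F = 9) (x : F) : x ^ 9 = x := by
  have := FiniteField.pow_card x
  rwa [hF] at this

lemma pow_eight (hF : Fintype.card F = 9) (x : F) (hx : x ≠ 0) : x ^ 8 = 1 := by
  have := pow_nine F hF x
  have h : x * (x ^ 8 - 1) = 0 := by linear_combination this
  rcases mul_eq_zero.1 h with h | h
  · exact absurd h hx
  · linear_combination h

lemma two_ne (hF : Fintype.card F = 9) : (2 : F) ≠ 0 := by
  intro h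
  have := three_eq F hF
  have : (1 : F) = 0 := by linear_combination this - h
  exact one_ne_zero this

lemma exists_tau (hF : Fintype.card F = 9) : ∃ t : F, t ^ 4 = -1 := by
  have hr : ringChar F ≠ 2 := by
    intro h
    have := ringChar.Nat.cast_ringChar (R := F)
    rw [h] at this
    exact two_ne F hF (by exact_mod_cast this)
  have h1 : IsSquare (-1 : F) := by
    rw [FiniteField.isSquare_iff hr (neg_ne_zero.2 one_ne_zero), hF]; norm_num
  obtain ⟨j, hj⟩ := h1
  have hj0 : j ≠ 0 := by rintro rfl; simp at hj
  have h2 : IsSquare j := by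
    rw [FiniteField.isSquare_iff hr hj0, hF]
    norm_num
    linear_combination (1 - j * j) * hj
  obtain ⟨t, ht⟩ := h2
  exact ⟨t, by rw [hj, ht]; ring⟩

end fieldnine

section sl2

open Matrix

variable {F : Type} [Field F]

/-- explicit elements of `SL₂` -/
def mt (a b c d : F) (h : a * d - b * c = 1) : SpecialLinearGroup (Fin 2) F :=
  ⟨!![a, b; c, d], by rw [Matrix.det_fin_two_of, h]⟩

lemma mt_surj (A : SpecialLinearGroup (Fin 2) F) : ∃ a b c d h, A = mt a b c d h := by
  refine ⟨A.1 0 0, A.1 0 1, A.1 1 0, A.1 1 1, ?_, ?_⟩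
  · have := A.2
    rwa [Matrix.det_fin_two] at this
  · apply Subtype.ext
    exact Matrix.eta_fin_two A.1

lemma mt_mul (a b c d h a' b' c' d' h') :
    (mt a b c d h * mt a' b' c' d' h' : SpecialLinearGroup (Fin 2) F) =
    mt (a * a' + b * c') (a * b' + b * d') (c * a' + d * c') (c * b' + d * d')
      (by linear_combination (a' * d' - b' * c') * h + h') := by
  apply Subtype.ext
  show !![a, b; c, d] * !![a', b'; c', d'] = _
  rw [Matrix.mul_fin_two]; rfl

lemma mt_inv (a b c d h) : (mt a b c d h : SpecialLinearGroup (Fin 2) F)⁻¹ =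
    mt d (-b) (-c) a (by linear_combination h) := by
  apply Subtype.ext
  rw [SpecialLinearGroup.SL2_inv_expl]; rfl

lemma mt_one : (1 : SpecialLinearGroup (Fin 2) F) = mt 1 0 0 1 (by ring) := by
  apply Subtype.ext
  show (1 : Matrix (Fin 2) (Fin 2) F) = _
  rw [Matrix.one_fin_two]; rfl

lemma mt_neg (a b c d h) : -(mt a b c d h : SpecialLinearGroup (Fin 2) F) =
    mt (-a) (-b) (-c) (-d) (by linear_combination h) := by
  apply Subtype.ext
  show -(!![a, b; c, d] : Matrix (Fin 2) (Fin 2) F) = !![-a, -b; -c, -d]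
  ext i j
  fin_cases i <;> fin_cases j <;> simp

lemma mt_eq_iff (a b c d h a' b' c' d' h') :
    (mt a b c d h : SpecialLinearGroup (Fin 2) F) = mt a' b' c' d' h' ↔
    a = a' ∧ b = b' ∧ c = c' ∧ d = d' := by
  constructor
  · intro e
    have e1 := congrArg Subtype.val e
    have e2 : !![a, b; c, d] = !![a', b'; c', d'] := e1
    refine ⟨?_, ?_, ?_, ?_⟩
    · simpa using congrFun (congrFun e2 0) 0
    · simpa using congrFun (congrFun e2 0) 1
    · simpa using congrFun (congrFun e2 1) 0
    · simpa using congrFun (congrFun e2 1) 1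
  · rintro ⟨rfl, rfl, rfl, rfl⟩; rfl

lemma mem_center (A : SpecialLinearGroup (Fin 2) F) :
    A ∈ Subgroup.center (SpecialLinearGroup (Fin 2) F) ↔ A = 1 ∨ A = -1 := by
  constructor
  · intro hA
    obtain ⟨a, b, c, d, h, rfl⟩ := mt_surj A
    rw [Subgroup.mem_center_iff] at hA
    have h1 := hA (mt 1 1 0 1 (by ring))
    have h2 := hA (mt 1 0 1 1 (by ring))
    rw [mt_mul, mt_mul, mt_eq_iff] at h1 h2
    have hc : c = 0 := by linear_combination h1.1
    have hb : b = 0 := by linear_combination -h2.1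
    have hd : d = a := by linear_combination h1.2.1
    subst hc hb hd
    have h3 : (d - 1) * (d + 1) = 0 := by linear_combination h
    rcases mul_eq_zero.1 h3 with h4 | h4
    · left
      rw [mt_one, mt_eq_iff]
      exact ⟨by linear_combination h4, rfl, rfl, by linear_combination h4⟩
    · right
      rw [mt_one, mt_neg, mt_eq_iff]
      exact ⟨by linear_combination h4, by simp, by simp, by linear_combination h4⟩
  · rintro (rfl | rfl)
    · exact Subgroup.one_mem _
    · rw [Subgroup.mem_center_iff]; intro g; simp

/-- the projection to `PSL₂` -/
abbrev pr : SpecialLinearGroup (Fin 2) F →* PSL2 F :=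
  QuotientGroup.mk' (Subgroup.center (SpecialLinearGroup (Fin 2) F))

lemma pr_surj : Function.Surjective (pr (F := F)) := QuotientGroup.mk'_surjective _

lemma pr_eq_one (A : SpecialLinearGroup (Fin 2) F) : pr A = 1 ↔ A = 1 ∨ A = -1 := by
  rw [← mem_center]; exact QuotientGroup.eq_one_iff A

lemma pr_eq (A B : SpecialLinearGroup (Fin 2) F) : pr A = pr B ↔ A = B ∨ A = -B := by
  rw [← inv_mul_eq_one, ← map_inv, ← map_mul, pr_eq_one, inv_mul_eq_one]
  constructor
  · rintro (h | h)
    · exact Or.inl h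
    · right
      have : B = -A := by
        rw [inv_mul_eq_iff_eq_mul] at h
        rw [h]; simp
      rw [this]; simp
  · rintro (h | h)
    · exact Or.inl h
    · right; rw [h, inv_mul_eq_iff_eq_mul]; simp

lemma neg_one_ne [Fintype F] (hF : Fintype.card F = 9) :
    (-1 : SpecialLinearGroup (Fin 2) F) ≠ 1 := by
  intro h
  rw [mt_one, mt_neg, mt_eq_iff] at h
  exact two_ne F hF (by linear_combination -h.1)

lemma card_SL [Fintype F] (hF : Fintype.card F = 9) :
    Nat.card (SpecialLinearGroup (Fin 2) F) = 720 := by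
  classical
  have h1 := Matrix.card_GL_field (𝔽 := F) 2
  rw [hF] at h1
  simp [Finset.prod] at h1
  let det : GL (Fin 2) F →* Fˣ := Matrix.GeneralLinearGroup.det
  have hsurj : Function.Surjective det := by
    intro x
    refine ⟨Matrix.GeneralLinearGroup.mkOfDetNeZero !![(x : F), 0; 0, 1] (by simp), ?_⟩
    apply Units.ext
    simp [det, Matrix.GeneralLinearGroup.mkOfDetNeZero]
  have h2 : det.ker.index = 8 := by
    rw [Subgroup.index_ker, MonoidHom.range_eq_top.2 hsurj]
    rw [Subgroup.card_top, Nat.card_eq_fintype_card, Fintype.card_units, hF]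
  have h3 := Subgroup.card_mul_index det.ker
  rw [h2, Nat.card_eq_fintype_card (α := GL (Fin 2) F), h1] at h3
  have h4 : Nat.card (SpecialLinearGroup (Fin 2) F) = Nat.card det.ker := by
    refine Nat.card_congr (Equiv.ofBijective
      (fun A => ⟨SpecialLinearGroup.toGL A, ?_⟩) ⟨?_, ?_⟩)
    · rw [MonoidHom.mem_ker]
      apply Units.ext
      exact A.2
    · intro A B hAB
      have := congrArg (fun x : det.ker => (x.1 : Matrix (Fin 2) (Fin 2) F)) hAB
      exact Subtype.ext this
    · rintro ⟨g, hg⟩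
      refine ⟨⟨g, ?_⟩, ?_⟩
      · exact congrArg Units.val hg
      · apply Subtype.ext; apply Units.ext; rfl
  rw [h4]
  omega

lemma card_PSL [Fintype F] (hF : Fintype.card F = 9) : Nat.card (PSL2 F) = 360 := by
  classical
  have h1 := Subgroup.card_mul_index (Subgroup.center (SpecialLinearGroup (Fin 2) F))
  have h2 : Nat.card (Subgroup.center (SpecialLinearGroup (Fin 2) F)) = 2 := by
    have : (Subgroup.center (SpecialLinearGroup (Fin 2) F) : Set (SpecialLinearGroup (Fin 2) F)) =
        {1, -1} := by
      ext A; exact mem_center A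
    rw [← SetLike.coe_sort_coe, this, Nat.card_coe_set_eq, Set.ncard_pair (neg_one_ne hF).symm]
  rw [h2, card_SL hF] at h1
  have : (Subgroup.center (SpecialLinearGroup (Fin 2) F)).index = 360 := by omega
  exact this

lemma no_small_index [Fintype F] (hF : Fintype.card F = 9) (H : Subgroup (PSL2 F))
    (h1 : H.index ≠ 1) : 6 ≤ H.index := by
  classical
  have hs : IsSimpleGroup (PSL2 F) :=
    Matrix.ProjectiveSpecialLinearGroup.rank_two_simple (by rw [Nat.card_eq_fintype_card, hF]; simp)
  have h0 : H.index ≠ 0 := by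
    have : Finite (PSL2 F) := Nat.finite_of_card_ne_zero (by rw [card_PSL hF]; simp)
    exact Subgroup.index_ne_zero_of_finite
  have hnc : H.normalCore = ⊥ := by
    rcases (Subgroup.normalCore_normal H).eq_bot_or_eq_top with h | h
    · exact h
    · exfalso
      apply h1
      rw [Subgroup.index_eq_one, eq_top_iff, ← h]
      exact Subgroup.normalCore_le H
  have hinj : Function.Injective (MulAction.toPermHom (PSL2 F) (PSL2 F ⧸ H)) := by
    rw [← MonoidHom.ker_eq_bot_iff, ← Subgroup.normalCore_eq_ker, hnc]
  have h2 := Subgroup.card_dvd_of_injective _ hinj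
  rw [card_PSL hF, Nat.card_perm] at h2
  change 360 ∣ H.index.factorial at h2
  by_contra hlt
  have : H.index < 6 := by omega
  interval_cases H.index <;> revert h2 <;> simp_all <;> decide

end sl2
end CDB

namespace CDB

section fact3

open Matrix

variable {F : Type} [Field F]

lemma trace_zero_of_sq {A : SpecialLinearGroup (Fin 2) F} (h2 : (2 : F) ≠ 0)
    (h1 : pr A ^ 2 = 1) (hne : pr A ≠ 1) : ∃ a b c h, A = mt a b c (-a) h := by
  obtain ⟨a, b, c, d, h, rfl⟩ := mt_surj A
  rw [← map_pow, pr_eq_one, pow_two] at h1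
  rw [Ne, pr_eq_one] at hne
  rcases h1 with h1 | h1
  · exfalso
    rw [mul_eq_one_iff_eq_inv, mt_inv, mt_eq_iff] at h1
    obtain ⟨e1, e2, e3, e4⟩ := h1
    have hb : b = 0 := by
      have : (2 : F) * b = 0 := by linear_combination e2
      exact (mul_eq_zero.1 this).resolve_left h2
    have hc : c = 0 := by
      have : (2 : F) * c = 0 := by linear_combination e3
      exact (mul_eq_zero.1 this).resolve_left h2
    subst e1 hb hc
    apply hne
    have h3 : (a - 1) * (a + 1) = 0 := by linear_combination h
    rcases mul_eq_zero.1 h3 with h4 | h4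
    · left
      rw [mt_one, mt_eq_iff]
      exact ⟨by linear_combination h4, rfl, rfl, by linear_combination h4⟩
    · right
      rw [mt_one, mt_neg, mt_eq_iff]
      exact ⟨by linear_combination h4, by simp, by simp, by linear_combination h4⟩
  · have h3 : mt a b c d h = (-(mt a b c d h))⁻¹ := by
      rw [eq_inv_iff_mul_eq_one, mul_neg, h1, neg_neg]
    rw [mt_neg, mt_inv, mt_eq_iff] at h3
    obtain ⟨e1, e2, e3, e4⟩ := h3
    subst e4
    exact ⟨a, b, c, h, rfl⟩

lemma comm_form {a b c : F} (h) {p q r s : F} (h') (h2 : (2 : F) ≠ 0)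
    (hc : mt a b c (-a) h * mt p q r s h' = mt p q r s h' * mt a b c (-a) h) :
    ∃ α β : F, !![p, q; r, s] = α • (1 : Matrix (Fin 2) (Fin 2) F) + β • !![a, b; c, -a] := by
  rw [mt_mul, mt_mul, mt_eq_iff] at hc
  obtain ⟨e1, e2, e3, e4⟩ := hc
  suffices H : ∃ α β : F, p = α + β * a ∧ q = β * b ∧ r = β * c ∧ s = α - β * a by
    obtain ⟨α, β, rfl, rfl, rfl, rfl⟩ := H
    refine ⟨α, β, ?_⟩
    ext i j
    fin_cases i <;> fin_cases j <;> simp [sub_eq_add_neg]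
  by_cases hb : b = 0
  · by_cases hcc : c = 0
    · subst hb hcc
      have ha : a ≠ 0 := by rintro rfl; simp at h
      have hq : q = 0 := by
        have : (2 : F) * (a * q) = 0 := by linear_combination e2
        have := (mul_eq_zero.1 this).resolve_left h2
        exact (mul_eq_zero.1 this).resolve_left ha
      have hr : r = 0 := by
        have : (2 : F) * (a * r) = 0 := by linear_combination -e3
        have := (mul_eq_zero.1 this).resolve_left h2
        exact (mul_eq_zero.1 this).resolve_left ha
      refine ⟨(p + s) / 2, (p - s) / (2 * a), ?_, by simp [hq], by simp [hr], ?_⟩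
      · field_simp; ring
      · field_simp; ring
    · refine ⟨p - r / c * a, r / c, by ring, ?_, by field_simp, ?_⟩
      · field_simp; linear_combination -e1
      · field_simp; linear_combination -e3
  · refine ⟨p - q / b * a, q / b, by ring, by field_simp, ?_, ?_⟩
    · field_simp; linear_combination e1
    · field_simp; linear_combination e2

lemma comm_pow [Fintype F] (hF : Fintype.card F = 9) {a b c : F} (h) (C : SpecialLinearGroup (Fin 2) F)
    (hc : mt a b c (-a) h * C = C * mt a b c (-a) h) : C ^ 8 = 1 := by
  obtain ⟨p, q, r, s, h', rfl⟩ := mt_surj C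
  obtain ⟨α, β, e⟩ := comm_form h h' (two_ne F hF) hc
  have h3 := three_eq F hF
  have hA : !![a, b; c, -a] * !![a, b; c, -a] = (-1 : Matrix (Fin 2) (Fin 2) F) := by
    rw [Matrix.mul_fin_two, Matrix.one_fin_two]
    ext i j
    fin_cases i <;> fin_cases j <;> simp
    · linear_combination -h
    · ring
    · ring
    · linear_combination -h
  have hcub : ∀ x y : F, (x • (1 : Matrix (Fin 2) (Fin 2) F) + y • !![a, b; c, -a]) ^ 3 =
      (x ^ 3) • (1 : Matrix (Fin 2) (Fin 2) F) + (-y ^ 3) • !![a, b; c, -a] := by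
    intro x y
    generalize !![a, b; c, -a] = A at hA
    have e3 : (3 : F) = 0 := h3
    have : (x • (1 : Matrix (Fin 2) (Fin 2) F) + y • A) ^ 3 =
      (x ^ 3) • (1 : Matrix (Fin 2) (Fin 2) F) + (3 * x ^ 2 * y) • A + (3 * x * y ^ 2) • (A * A)
        + (y ^ 3) • (A * A * A) := by
      simp only [pow_succ, pow_zero, one_mul, add_mul, mul_add, smul_mul_assoc, mul_smul_comm,
        mul_one, smul_smul, mul_assoc, smul_add]
      module
    rw [this, e3, hA]
    simp
  have h9 : (!![p, q; r, s] : Matrix (Fin 2) (Fin 2) F) ^ 9 = !![p, q; r, s] := by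
    rw [e, show 9 = 3 * 3 from rfl, pow_mul, hcub, hcub]
    congr 2
    · rw [← pow_mul]; exact pow_nine F hF α
    · rw [Odd.neg_pow (by decide), neg_neg, ← pow_mul]; exact pow_nine F hF β
  have h10 : (mt p q r s h') ^ 9 = mt p q r s h' := by
    apply Subtype.ext
    exact (Matrix.SpecialLinearGroup.coe_pow (mt p q r s h') 9).trans h9
  rw [pow_succ] at h10
  exact mul_eq_right.1 h10

lemma no_comm [Fintype F] (hF : Fintype.card F = 9) (x y : PSL2 F) (hx : x ^ 2 = 1) (hx1 : x ≠ 1)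
    (n : ℕ) (hn : Nat.Coprime 16 n) (hy : y ^ n = 1) (hxy : x * y = y * x) : y = 1 := by
  obtain ⟨A, rfl⟩ := pr_surj x
  obtain ⟨B, rfl⟩ := pr_surj y
  obtain ⟨a, b, c, h, rfl⟩ := trace_zero_of_sq (two_ne F hF) hx hx1
  have hc : mt a b c (-a) h * B ^ 2 = B ^ 2 * mt a b c (-a) h := by
    rw [← map_mul, ← map_mul, pr_eq] at hxy
    generalize mt a b c (-a) h = A at *
    rcases hxy with h | h
    · rw [pow_two, ← mul_assoc, h, mul_assoc, h, mul_assoc]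
    · rw [pow_two, ← mul_assoc, h, neg_mul, mul_assoc, h, mul_neg, neg_neg, mul_assoc]
  have h8 := comm_pow hF h _ hc
  have h16 : pr B ^ 16 = 1 := by
    rw [← map_pow, show 16 = 2 * 8 from rfl, pow_mul, h8, map_one]
  have := pow_gcd_eq_one.2 ⟨h16, hy⟩
  rw [Nat.Coprime] at hn
  rw [hn] at this
  simpa using this

lemma no_abelian [Fintype F] (hF : Fintype.card F = 9) (H : Subgroup (PSL2 F))
    (hc : ∀ x ∈ H, ∀ y ∈ H, x * y = y * x) (h2 : 2 ∣ Nat.card H) (p : ℕ) (hp : p.Prime)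
    (hp2 : p ≠ 2) (hpH : p ∣ Nat.card H) : False := by
  have : Finite (PSL2 F) := Nat.finite_of_card_ne_zero (by rw [card_PSL hF]; simp)
  have := Fact.mk hp
  obtain ⟨x, hx⟩ := exists_prime_orderOf_dvd_card' 2 h2
  obtain ⟨y, hy⟩ := exists_prime_orderOf_dvd_card' p hpH
  have hy1 : (y : PSL2 F) = 1 := by
    refine no_comm hF x y ?_ ?_ p ?_ ?_ (hc _ x.2 _ y.2)
    · have := pow_orderOf_eq_one x
      rw [hx] at this
      exact congrArg Subtype.val this
    · intro h
      have : x = 1 := Subtype.ext h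
      rw [this, orderOf_one] at hx
      omega
    · rw [show 16 = 2 ^ 4 from rfl]
      exact Nat.Coprime.pow_left _ ((Nat.coprime_primes Nat.prime_two hp).2 hp2.symm)
    · have := pow_orderOf_eq_one y
      rw [hy] at this
      exact congrArg Subtype.val this
  have : y = 1 := Subtype.ext hy1
  rw [this, orderOf_one] at hy
  exact hp.one_lt.ne hy

end fact3
end CDB

namespace CDB

section fact4

open Matrix

variable {F : Type} [Field F]

lemma descend {V : Type} [AddCommGroup V] [Module ℂ V]
    (ρ : Representation ℂ (SpecialLinearGroup (Fin 2) F) V) (hρ : Irr ρ) (h : ρ (-1) = 1) :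
    ∃ ρ' : Representation ℂ (PSL2 F) V, Irr ρ' := by
  refine ⟨QuotientGroup.lift (Subgroup.center (SpecialLinearGroup (Fin 2) F)) ρ ?_, hρ.1, ?_⟩
  · intro x hx
    rcases (mem_center x).1 hx with rfl | rfl
    · exact map_one ρ
    · exact h
  · intro S hS
    exact hρ.2 S fun g v hv => hS (pr g) v hv

/-- unipotent elements -/
def un (b : F) : SpecialLinearGroup (Fin 2) F := mt 1 b 0 1 (by ring)

/-- diagonal elements -/
def dg (s : Fˣ) : SpecialLinearGroup (Fin 2) F := mt s 0 0 (s⁻¹ : Fˣ) (by simp)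

/-- the Weyl element -/
def wl : SpecialLinearGroup (Fin 2) F := mt 0 (-1) 1 0 (by ring)

lemma un_inv (b : F) : (un b)⁻¹ = un (-b) := by
  rw [un, mt_inv, un, mt_eq_iff]; simp

lemma dg_mul (s t : Fˣ) : dg (s * t) = dg s * dg t := by
  rw [dg, dg, dg, mt_mul, mt_eq_iff]; simp [mul_comm]

lemma dg_one : dg (1 : Fˣ) = 1 := by
  rw [dg, mt_one, mt_eq_iff]; simp

lemma dg_neg_one : dg (-1 : Fˣ) = -1 := by
  rw [dg, mt_one, mt_neg, mt_eq_iff]; simp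

lemma wl_sq : (wl : SpecialLinearGroup (Fin 2) F) * wl = -1 := by
  rw [wl, mt_mul, mt_one, mt_neg, mt_eq_iff]; simp

lemma wl_dg (s : Fˣ) : wl * dg s = dg s⁻¹ * wl := by
  rw [wl, dg, dg, mt_mul, mt_mul, mt_eq_iff]; simp

lemma un_dg (b : F) (s : Fˣ) : un b * dg s * (un b)⁻¹ = dg s * un (((s⁻¹ : Fˣ) ^ 2 - 1 : F) * b) := by
  rw [un_inv, un, dg, un, un, mt_mul, mt_mul, mt_mul, mt_eq_iff]
  have : (s : F) * ((s⁻¹ : Fˣ) : F) = 1 := by simp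
  refine ⟨by ring, ?_, by ring, by ring⟩
  linear_combination (-b * ((s⁻¹ : Fˣ) : F)) * this

lemma anti_conj (s j : Fˣ) (hj : (j : F) ^ 2 = -1) (h3 : (3 : F) = 0) :
    ∃ C : SpecialLinearGroup (Fin 2) F, dg s * wl = C * dg j * C⁻¹ := by
  have e1 : (s : F) * ((s⁻¹ : Fˣ) : F) = 1 := by simp
  have e2 : (j : F) * ((j⁻¹ : Fˣ) : F) = 1 := by simp
  have e3 : ((j⁻¹ : Fˣ) : F) = - (j : F) := by
    linear_combination (-(j : F)) * e2 + ((j⁻¹ : Fˣ) : F) * hj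
  refine ⟨mt (s : F) (-(s : F) * (((s⁻¹ : Fˣ) : F) * ((j⁻¹ : Fˣ) : F))) (-(j : F))
    (-(j : F) * (((s⁻¹ : Fˣ) : F) * ((j⁻¹ : Fˣ) : F))) ?_, ?_⟩
  · linear_combination (-2 * (j : F) * ((j⁻¹ : Fˣ) : F)) * e1 - 2 * e2 - h3
  · rw [eq_mul_inv_iff_mul_eq, dg, dg, wl, mt_mul, mt_mul, mt_mul, mt_eq_iff, e3]
    refine ⟨?_, ?_, ?_, ?_⟩
    · ring
    · ring
    · linear_combination e1 + hj
    · linear_combination ((j : F) * ((s⁻¹ : Fˣ) : F)) * e1 + ((j : F) * ((s⁻¹ : Fˣ) : F)) * hj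


lemma trace_conj {G V : Type} [Group G] [AddCommGroup V] [Module ℂ V] [FiniteDimensional ℂ V]
    (ρ : Representation ℂ G V) (g h : G) :
    LinearMap.trace ℂ V (ρ (g * h * g⁻¹)) = LinearMap.trace ℂ V (ρ h) := by
  rw [map_mul, LinearMap.trace_mul_comm, ← map_mul, inv_mul_cancel_left]

lemma trace_dg [Fintype F] {V : Type} [AddCommGroup V] [Module ℂ V] [FiniteDimensional ℂ V]
    (ρ : Representation ℂ (SpecialLinearGroup (Fin 2) F) V) (hu : ∑ b : F, ρ (un b) = 0)
    (s : Fˣ) (hs : s ^ 2 ≠ 1) : LinearMap.trace ℂ V (ρ (dg s)) = 0 := by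
  have hk : ((s⁻¹ : Fˣ) ^ 2 - 1 : F) ≠ 0 := by
    intro h
    apply hs
    rw [← _root_.inv_inj, ← inv_pow, inv_one]
    apply Units.ext
    rw [Units.val_pow_eq_pow_val, Units.val_one]
    linear_combination h
  have h1 : ∑ b : F, LinearMap.trace ℂ V (ρ (un b * dg s * (un b)⁻¹)) = 0 := by
    simp_rw [un_dg]
    refine (Equiv.sum_comp (Equiv.mulLeft₀ _ hk) (fun c => LinearMap.trace ℂ V (ρ (dg s * un c)))).trans ?_
    simp_rw [map_mul]
    rw [← map_sum, ← Finset.mul_sum, hu, mul_zero, map_zero]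
  simp_rw [trace_conj] at h1
  rw [Finset.sum_const, nsmul_eq_mul] at h1
  refine (mul_eq_zero.1 h1).resolve_left ?_
  rw [Finset.card_univ]
  exact_mod_cast Fintype.card_ne_zero

lemma eight_dvd [Fintype F] (hF : Fintype.card F = 9) {V : Type} [AddCommGroup V] [Module ℂ V]
    [FiniteDimensional ℂ V] (ρ : Representation ℂ (SpecialLinearGroup (Fin 2) F) V)
    (hu : ∑ b : F, ρ (un b) = 0) (h1 : ρ (-1) = 1) : 8 ∣ Module.finrank ℂ V := by
  classical
  obtain ⟨t, ht⟩ := exists_tau F hF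
  have h2 := two_ne F hF
  have ht0 : t ≠ 0 := by rintro rfl; simp at ht
  let j : Fˣ := Units.mk0 t ht0 ^ 2
  have hj : (j : F) ^ 2 = -1 := by
    simp only [j, Units.val_pow_eq_pow_val, Units.val_mk0]; rw [← pow_mul, ht]
  have hj2 : j ^ 2 ≠ 1 := by
    intro h
    have := congrArg Units.val h
    push_cast at this
    rw [hj] at this
    exact h2 (by linear_combination -this)
  have hneg : (-1 : Fˣ) ≠ 1 := by
    intro h
    have := congrArg Units.val h
    push_cast at this
    exact h2 (by linear_combination -this)
  set Q : V →ₗ[ℂ] V := ∑ s : Fˣ, ρ (dg s) with hQ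
  set W : V →ₗ[ℂ] V := ρ wl with hW
  have hWW : W * W = 1 := by rw [hW, ← map_mul, wl_sq, h1]
  have hdQ : ∀ s, ρ (dg s) * Q = Q := by
    intro s
    rw [hQ, Finset.mul_sum]
    simp_rw [← map_mul, ← dg_mul]
    exact Equiv.sum_comp (Equiv.mulLeft s) (fun c => ρ (dg c))
  have hcard : Fintype.card Fˣ = 8 := by rw [Fintype.card_units, hF]
  have hQQ : Q * Q = (8 : ℂ) • Q := by
    conv_lhs => rw [hQ]
    rw [Finset.sum_mul]
    simp_rw [← hQ, hdQ]
    rw [Finset.sum_const, Finset.card_univ, hcard, ← Nat.cast_smul_eq_nsmul ℂ]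
    norm_num
  have hWQ : W * Q = Q * W := by
    rw [hQ, Finset.mul_sum, Finset.sum_mul, hW]
    simp_rw [← map_mul, wl_dg]
    exact Equiv.sum_comp (Equiv.inv Fˣ) (fun c => ρ (dg c * wl))
  set P : V →ₗ[ℂ] V := Q + Q * W with hP
  have hPP : P * P = (16 : ℂ) • P := by
    have e1 : Q * (Q * W) = (8 : ℂ) • (Q * W) := by rw [← mul_assoc, hQQ, smul_mul_assoc]
    have e2 : Q * W * Q = (8 : ℂ) • (Q * W) := by rw [mul_assoc, hWQ, e1]
    have e3 : Q * W * (Q * W) = (8 : ℂ) • Q := by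
      rw [← mul_assoc, e2, smul_mul_assoc, mul_assoc, hWW, mul_one]
    rw [hP, mul_add, add_mul, add_mul, e1, e2, e3, hQQ]
    module
  have htQ : LinearMap.trace ℂ V Q = 2 * Module.finrank ℂ V := by
    rw [hQ, map_sum, Finset.sum_eq_add (1 : Fˣ) (-1) hneg.symm]
    · rw [dg_one, dg_neg_one, h1, map_one, LinearMap.trace_one]; ring
    · intro c _ hc
      apply trace_dg ρ hu
      intro h
      have h' : (c : F) ^ 2 = 1 := by rw [← Units.val_pow_eq_pow_val, h, Units.val_one]
      rcases (mul_eq_zero.1 (by linear_combination h' : ((c : F) - 1) * (c + 1) = 0)) with h | h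
      · exact hc.1 (Units.ext (by push_cast; linear_combination h))
      · exact hc.2 (Units.ext (by push_cast; linear_combination h))
    · simp
    · simp
  have htQW : LinearMap.trace ℂ V (Q * W) = 0 := by
    rw [hQ, Finset.sum_mul, map_sum]
    apply Finset.sum_eq_zero
    intro s _
    obtain ⟨C, hC⟩ := anti_conj s j hj (three_eq F hF)
    rw [hW, ← map_mul, hC, trace_conj]
    exact trace_dg ρ hu j hj2
  set E : V →ₗ[ℂ] V := (1 / 16 : ℂ) • P with hE
  have hidem : IsIdempotentElem E := by
    show E * E = E
    rw [hE, smul_mul_smul_comm, hPP, smul_smul]; norm_num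
  have htr := (LinearMap.isProj_range_iff_isIdempotentElem E).2 hidem |>.trace
  rw [hE, map_smul, hP, map_add, htQ, htQW] at htr
  refine ⟨Module.finrank ℂ (LinearMap.range E), ?_⟩
  have : (Module.finrank ℂ V : ℂ) = 8 * (Module.finrank ℂ (LinearMap.range E) : ℂ) := by
    rw [hE, hP, ← htr]; simp; ring
  exact_mod_cast this


/-- a class function on the field -/
noncomputable def phf (j x : F) : ℂ := by
  classical
  exact if x ^ 2 = j then 1 else if x ^ 2 = -j then -1 else 0

lemma phf_neg (j x : F) : phf j (-x) = phf j x := by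
  unfold phf; rw [neg_sq]

lemma phf_mul (j x : F) (hj : j ^ 2 = -1) (h2 : (2 : F) ≠ 0) : phf j (j * x) = - phf j x := by
  unfold phf
  have hj0 : j ≠ 0 := by rintro rfl; simp at hj
  have hne : j ≠ -j := by
    intro h
    have : 2 * j = 0 := by linear_combination h
    rcases mul_eq_zero.1 this with h | h
    · exact h2 h
    · exact hj0 h
  have e : (j * x) ^ 2 = -x ^ 2 := by rw [mul_pow, hj]; ring
  rw [e]
  by_cases h1 : x ^ 2 = j
  · rw [h1]; simp [hne, hne.symm]
  · by_cases h3 : x ^ 2 = -j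
    · rw [h3]; simp [hne.symm]
    · have : -x ^ 2 ≠ j := fun h => h3 (by rw [← h]; ring)
      simp [h1, h3, this]

lemma phf_sum [Fintype F] (j : F) (hj : j ^ 2 = -1) (h2 : (2 : F) ≠ 0) : ∑ x, phf j x = 0 := by
  have hj0 : j ≠ 0 := by rintro rfl; simp at hj
  have h := Equiv.sum_comp (Equiv.mulLeft₀ j hj0) (phf j)
  have h' : ∑ x, phf j (j * x) = ∑ x, phf j x := h
  simp_rw [phf_mul j _ hj h2] at h'
  rw [Finset.sum_neg_distrib] at h'
  linear_combination (-1/2 : ℂ) * h'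

lemma phf_add [Fintype F] (hF : Fintype.card F = 9) (j p s : F) (hj : j ^ 2 = -1) (hps : p * s = 1) :
    phf j (p + s) = 0 := by
  have h2 := two_ne F hF
  have h3 := three_eq F hF
  have hp : p ≠ 0 := by rintro rfl; simp at hps
  have hw : (p + s) ^ 4 ≠ -1 := by
    intro hw
    have e : (p + s) ^ 4 = p ^ 4 + s ^ 4 + p ^ 2 + s ^ 2 := by
      linear_combination (4 * p ^ 2 + 4 * s ^ 2 + 6 * p * s + 6) * hps + (p ^ 2 + s ^ 2 + 2) * h3
    rw [e] at hw
    have h8 := pow_eight F hF p hp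
    have hs4 : p ^ 4 * s ^ 4 = 1 := by rw [← mul_pow, hps, one_pow]
    have hs2 : p ^ 2 * s ^ 2 = 1 := by rw [← mul_pow, hps, one_pow]
    have h84 : (p ^ 4 - 1) * (p ^ 4 + 1) = 0 := by linear_combination h8
    rcases mul_eq_zero.1 h84 with h4 | h4
    · have s4 : s ^ 4 = 1 := by linear_combination hs4 - s ^ 4 * h4
      have h42 : (p ^ 2 - 1) * (p ^ 2 + 1) = 0 := by linear_combination h4
      rcases mul_eq_zero.1 h42 with h5 | h5
      · have s2 : s ^ 2 = 1 := by linear_combination hs2 - s ^ 2 * h5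
        exact h2 (by linear_combination hw - h4 - s4 - h5 - s2 - h3)
      · have s2 : s ^ 2 = -1 := by linear_combination -hs2 + s ^ 2 * h5
        exact one_ne_zero (α := F) (by linear_combination hw - h4 - s4 - h5 - s2)
    · have s4 : s ^ 4 = -1 := by linear_combination -hs4 + s ^ 4 * h4
      have s2 : s ^ 2 = -p ^ 2 := by linear_combination -p ^ 2 * hs2 + s ^ 2 * h4
      exact one_ne_zero (α := F) (by linear_combination -hw + h4 + s4 + s2)
  unfold phf
  rw [if_neg, if_neg]
  · intro h; apply hw
    linear_combination ((p + s) ^ 2 - j) * h + hj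
  · intro h; apply hw
    linear_combination ((p + s) ^ 2 + j) * h + hj

/-- the subspace of cuspidal functions -/
def cusp (F : Type) [Field F] [Fintype F] : Submodule ℂ (SpecialLinearGroup (Fin 2) F → ℂ) where
  carrier := {f | (∀ x, f (-x) = f x) ∧ ∀ x y, ∑ b : F, f (x * un b * y) = 0}
  add_mem' := by
    rintro f g ⟨h1, h2⟩ ⟨h3, h4⟩
    refine ⟨fun x => by simp [h1, h3], fun x y => ?_⟩
    simp only [Pi.add_apply]
    rw [Finset.sum_add_distrib, h2, h4, add_zero]
  zero_mem' := ⟨fun x => rfl, fun x y => by simp⟩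
  smul_mem' := by
    rintro c f ⟨h1, h2⟩
    refine ⟨fun x => by simp [h1], fun x y => ?_⟩
    simp only [Pi.smul_apply]
    rw [← Finset.smul_sum, h2, smul_zero]

lemma exists_eight [Fintype F] (hF : Fintype.card F = 9) :
    ∃ (V : Type) (_ : AddCommGroup V) (_ : Module ℂ V) (_ : FiniteDimensional ℂ V)
      (ρ : Representation ℂ (PSL2 F) V), Irr ρ ∧ 8 ∣ Module.finrank ℂ V := by
  classical
  have h2 := two_ne F hF
  obtain ⟨t, ht⟩ := exists_tau F hF
  have hj : (t ^ 2) ^ 2 = -1 := by rw [← pow_mul, ht]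
  have hst : Stab (reg (SpecialLinearGroup (Fin 2) F)) (cusp F) := by
    rintro g f ⟨h1, h2⟩
    refine ⟨fun x => ?_, fun x y => ?_⟩
    · rw [reg_apply, reg_apply, mul_neg, h1]
    · simp only [reg_apply]
      have := h2 (g⁻¹ * x) y
      simpa only [mul_assoc] using this
  let f : SpecialLinearGroup (Fin 2) F → ℂ := fun A => phf (t ^ 2) (A.1 0 0 + A.1 1 1)
  have hf' : ∀ a b c d h, f (mt a b c d h) = phf (t ^ 2) (a + d) := by
    intro a b c d h
    simp [f, mt]
  have hf : f ∈ cusp F := by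
    refine ⟨fun x => ?_, fun x y => ?_⟩
    · obtain ⟨a, b, c, d, h, rfl⟩ := mt_surj x
      rw [mt_neg, hf', hf', ← phf_neg]; congr 1; ring
    · obtain ⟨a, b, c, d, h, rfl⟩ := mt_surj x
      obtain ⟨a', b', c', d', h', rfl⟩ := mt_surj y
      simp only [un, mt_mul, hf']
      have e : ∀ z : F, (a * 1 + b * 0) * a' + (a * z + b * 1) * c' +
          ((c * 1 + d * 0) * b' + (c * z + d * 1) * d') =
          (a * a' + b * c' + c * b' + d * d') + (a * c' + c * d') * z := by intro z; ring
      simp_rw [e]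
      by_cases hr : a * c' + c * d' = 0
      · rw [hr]
        simp only [zero_mul, add_zero]
        have := phf_add hF (t ^ 2) (a * a' + c * b') (b * c' + d * d') hj (by
          linear_combination (a' * d' - b' * c') * h + h' + (b * a' + d * b') * hr)
        rw [Finset.sum_eq_zero]
        intro z _
        rw [← this]; congr 1; ring
      · have h5 := Equiv.sum_comp ((Equiv.mulLeft₀ _ hr).trans
          (Equiv.addLeft (a * a' + b * c' + c * b' + d * d'))) (phf (t ^ 2))
        rw [phf_sum (t ^ 2) hj h2] at h5
        exact h5
  have hne : cusp F ≠ ⊥ := by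
    intro h
    rw [h, Submodule.mem_bot] at hf
    have h6 := congrFun hf (mt t (-1) 1 0 (by ring))
    rw [hf'] at h6
    simp [phf] at h6
  obtain ⟨T, hT, hTle, hirr⟩ := exists_irr_sub (reg (SpecialLinearGroup (Fin 2) F)) (cusp F) hst hne
  have h1 : sub _ T hT (-1) = 1 := by
    ext v x
    have := (hTle v.2).1 x
    simpa using this
  obtain ⟨ρ', hρ'⟩ := descend _ hirr h1
  refine ⟨T, inferInstance, inferInstance, inferInstance, ρ', hρ', ?_⟩
  refine eight_dvd hF (sub _ T hT) ?_ h1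
  ext v x
  have h7 := (hTle v.2).2 1 x
  have h8 := Equiv.sum_comp (Equiv.neg F) (fun b => v.1 (1 * un b * x))
  rw [h7] at h8
  simp only [Equiv.neg_apply, ← un_inv, one_mul] at h8
  simpa [LinearMap.sum_apply, Finset.sum_apply] using h8

end fact4
end CDB

namespace CDB

section fact5

open Matrix

variable {F : Type} [Field F]

/-- upper triangular elements -/
def bt (p : Fˣ) (q : F) : SpecialLinearGroup (Fin 2) F := mt p q 0 (p⁻¹ : Fˣ) (by simp)

lemma bt_mul (p s : Fˣ) (q y : F) : bt p q * bt s y = bt (p * s) (p * y + q * (s⁻¹ : Fˣ)) := by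
  rw [bt, bt, bt, mt_mul, mt_eq_iff]; simp [mul_comm]

lemma bt_comm (s : Fˣ) {p q r t : F} (h) (hr : r ≠ 0) :
    ∃ y y', bt s y * mt p q r t h = mt p q r t h * bt s⁻¹ y' := by
  refine ⟨p * (((s⁻¹ : Fˣ) : F) - s) / r, t * (((s⁻¹ : Fˣ) : F) - s) / r, ?_⟩
  rw [bt, bt, mt_mul, mt_mul, mt_eq_iff]
  refine ⟨?_, ?_, ?_, ?_⟩
  · field_simp; ring
  · simp; ring
  · ring
  · rw [inv_inv]; field_simp; ring

lemma exists_char [Fintype F] (hF : Fintype.card F = 9) :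
    ∃ χ : MulChar F ℂ, χ (-1) = 1 ∧ ∃ s : Fˣ, χ s ^ 2 ≠ 1 := by
  obtain ⟨χ, hχ⟩ := MulChar.exists_mulChar_orderOf F (n := 4) (R := ℂ) (ζ := Complex.I)
    (by rw [hF]; norm_num) Complex.isPrimitiveRoot_I
  refine ⟨χ, ?_, ?_⟩
  · obtain ⟨t, ht⟩ := exists_tau F hF
    have ht0 : t ≠ 0 := by rintro rfl; simp at ht
    have h4 : χ ^ 4 = 1 := by rw [← hχ]; exact pow_orderOf_eq_one χ
    rw [← ht, map_pow]
    have := MulChar.pow_apply_coe χ 4 (Units.mk0 t ht0)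
    rw [h4, MulChar.one_apply_coe] at this
    exact this.symm
  · by_contra! hn
    have : χ ^ 2 = 1 := by
      apply MulChar.ext
      intro a
      rw [MulChar.pow_apply_coe, hn, MulChar.one_apply_coe]
    have := orderOf_dvd_of_pow_eq_one this
    rw [hχ] at this
    revert this; decide

lemma ten_le [Fintype F] (hF : Fintype.card F = 9) (χ : MulChar F ℂ) (s : Fˣ) (hs : χ s ^ 2 ≠ 1)
    {V : Type} [AddCommGroup V] [Module ℂ V]
    [FiniteDimensional ℂ V] (ρ : Representation ℂ (SpecialLinearGroup (Fin 2) F) V)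
    (v : V) (hv0 : v ≠ 0) (hv : ∀ p q, ρ (bt p q) v = χ p • v) : 10 ≤ Module.finrank ℂ V := by
  classical
  have hχi : ∀ p : Fˣ, χ p * χ (p⁻¹ : Fˣ) = 1 := by
    intro p; rw [← map_mul]; simp
  let E : V →ₗ[ℂ] V := ∑ p : Fˣ, ∑ q : F, χ (p⁻¹ : Fˣ) • ρ (bt p q)
  have hEb : ∀ s y, E * ρ (bt s y) = χ s • E := by
    intro s y
    simp only [E]
    rw [Finset.sum_mul, Finset.smul_sum]
    rw [← Equiv.sum_comp (Equiv.mulRight s) (fun p : Fˣ => χ (s : F) • ∑ q : F, χ (p⁻¹ : Fˣ) • ρ (bt p q))]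
    apply Finset.sum_congr rfl
    intro p _
    rw [Finset.sum_mul, Finset.smul_sum]
    rw [← Equiv.sum_comp ((Equiv.mulRight₀ ((s⁻¹ : Fˣ) : F) (Units.ne_zero _)).trans
      (Equiv.addLeft ((p : F) * y))) (fun q => χ (s : F) • χ (((Equiv.mulRight s p)⁻¹ : Fˣ) : F) •
        ρ (bt (Equiv.mulRight s p) q))]
    apply Finset.sum_congr rfl
    intro q _
    simp only [Equiv.coe_mulRight, Equiv.trans_apply, Equiv.coe_addLeft, Equiv.mulRight₀_apply]
    rw [smul_mul_assoc, ← map_mul, bt_mul, smul_smul]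
    congr 1
    rw [mul_inv, Units.val_mul, map_mul]
    linear_combination (-χ (p⁻¹ : Fˣ)) * hχi s
  have hEv : E v = (72 : ℂ) • v := by
    simp only [E, LinearMap.sum_apply, LinearMap.smul_apply, hv, smul_smul]
    simp_rw [mul_comm, hχi]
    rw [Finset.sum_const, Finset.sum_const, Finset.card_univ, Finset.card_univ, hF,
      Fintype.card_units, hF, one_smul]
    rw [smul_smul, ← Nat.cast_smul_eq_nsmul ℂ]; norm_num
  have hEx : ∀ p q r t h, r ≠ 0 → E (ρ (mt p q r t h) v) = 0 := by
    intro p q r t h hr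
    obtain ⟨y, y', e⟩ := bt_comm s h hr
    have e1 : E (ρ (bt s y) (ρ (mt p q r t h) v)) = χ s • E (ρ (mt p q r t h) v) := by
      rw [← LinearMap.smul_apply, ← hEb s y]; rfl
    rw [← rmul, e, rmul, hv, map_smul, map_smul] at e1
    have e2 : (χ s - χ (s⁻¹ : Fˣ)) • E (ρ (mt p q r t h) v) = 0 := by
      rw [sub_smul, e1, sub_self]
    refine (smul_eq_zero.1 e2).resolve_left fun h0 => hs ?_
    linear_combination χ s * h0 + hχi s
  let g : Option F → SpecialLinearGroup (Fin 2) F := fun a =>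
    a.elim 1 (fun a => mt a (-1) 1 0 (by ring))
  have hg : ∀ i k, i ≠ k → E (ρ ((g i)⁻¹ * g k) v) = 0 := by
    intro i k hik
    rcases i with _ | a <;> rcases k with _ | b
    · exact absurd rfl hik
    · show E (ρ (1⁻¹ * mt b (-1) 1 0 (by ring)) v) = 0
      rw [inv_one, one_mul]; exact hEx _ _ _ _ _ one_ne_zero
    · show E (ρ ((mt a (-1) 1 0 (by ring))⁻¹ * 1) v) = 0
      rw [mul_one, mt_inv]; exact hEx _ _ _ _ _ (by simp)
    · show E (ρ ((mt a (-1) 1 0 (by ring))⁻¹ * mt b (-1) 1 0 (by ring)) v) = 0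
      rw [mt_inv, mt_mul]
      apply hEx
      intro h
      apply hik
      congr 1
      linear_combination h
  have hli : LinearIndependent ℂ (fun i => ρ (g i) v) := by
    rw [Fintype.linearIndependent_iff]
    intro c hc i
    have h1 := congrArg (fun x => E (ρ (g i)⁻¹ x)) hc
    simp only [map_sum, map_smul, map_zero] at h1
    rw [Finset.sum_eq_single i] at h1
    · rw [rinv, hEv, smul_smul] at h1
      have := (smul_eq_zero.1 h1).resolve_right hv0
      simpa using this
    · intro k _ hk
      rw [← rmul, hg i k hk.symm, smul_zero]
    · simp
  have := hli.fintype_card_le_finrank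
  rwa [Fintype.card_option, hF] at this

lemma exists_ten [Fintype F] (hF : Fintype.card F = 9) :
    ∃ (V : Type) (_ : AddCommGroup V) (_ : Module ℂ V) (_ : FiniteDimensional ℂ V)
      (ρ : Representation ℂ (PSL2 F) V), Irr ρ ∧ 10 ≤ Module.finrank ℂ V := by
  classical
  obtain ⟨χ, hχ1, s, hs⟩ := exists_char hF
  have : Finite (SpecialLinearGroup (Fin 2) F) :=
    Nat.finite_of_card_ne_zero (by rw [card_SL hF]; simp)
  let f : SpecialLinearGroup (Fin 2) F → ℂ := fun A => if A.1 1 0 = 0 then χ (A.1 1 1) else 0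
  have hf : ∀ a b c d h, f (mt a b c d h) = if c = 0 then χ d else 0 := by
    intro a b c d h
    simp [f, mt]
  have hfb : ∀ p q, reg _ (bt p q) f = χ p • f := by
    intro p q
    ext x
    obtain ⟨a, b, c, d, h, rfl⟩ := mt_surj x
    rw [reg_apply, bt, mt_inv, mt_mul, Pi.smul_apply, hf, hf]
    by_cases hc : c = 0
    · simp [hc]
    · simp [hc]
  have hf0 : f ≠ 0 := by
    intro h
    have h1 := congrFun h 1
    rw [mt_one, hf] at h1
    simp at h1
  obtain ⟨ι, _, S, hS, hirr, e, he⟩ := exists_decomp (reg (SpecialLinearGroup (Fin 2) F))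
  have hex : ∃ i, e f i ≠ 0 := by
    by_contra! hn
    apply hf0
    rw [← map_eq_zero_iff e e.injective]
    ext1 i
    exact hn i
  obtain ⟨i, hi⟩ := hex
  have hv : ∀ p q, sub _ (S i) (hS i) (bt p q) (e f i) = χ p • e f i := by
    intro p q
    rw [← he, hfb, map_smul]; rfl
  set σ := sub _ (S i) (hS i) with hσ
  have h1 : σ (-1) = 1 := by
    have hst : Stab σ (LinearMap.ker (σ (-1) - 1)) := by
      intro g x hx
      rw [LinearMap.mem_ker, LinearMap.sub_apply, sub_eq_zero, Module.End.one_apply] at hx ⊢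
      rw [← rmul, neg_one_mul, ← mul_neg_one, rmul, hx]
    rcases (hirr i).2 _ hst with h | h
    · exfalso
      apply hi
      rw [← Submodule.mem_bot ℂ, ← h, LinearMap.mem_ker, LinearMap.sub_apply, sub_eq_zero]
      have h3 : (-1 : SpecialLinearGroup (Fin 2) F) = bt (-1) 0 := by
        rw [mt_one, mt_neg, bt, mt_eq_iff]; simp
      rw [h3, hv]
      simp [hχ1]
    · rw [LinearMap.ker_eq_top] at h
      exact sub_eq_zero.1 h
  obtain ⟨ρ', hρ'⟩ := descend _ (hirr i) h1
  exact ⟨S i, inferInstance, inferInstance, inferInstance, ρ', hρ', ten_le hF χ s hs σ _ hi hv⟩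

end fact5
end CDB

namespace CDB

section fact6

open Matrix

variable {F : Type} [Field F]

lemma un_add (a b : F) : un (a + b) = un a * un b := by
  rw [un, un, un, mt_mul, mt_eq_iff]; simp [add_comm]

lemma un_inj {a b : F} (h : un a = un b) : a = b := by
  rw [un, un, mt_eq_iff] at h; exact h.2.1

lemma dg_un (s : Fˣ) (b : F) : dg s * un b * (dg s)⁻¹ = un (s ^ 2 * b) := by
  rw [mul_inv_eq_iff_eq_mul, dg, un, un, mt_mul, mt_mul, mt_eq_iff]
  have : (s : F) * ((s⁻¹ : Fˣ) : F) = 1 := by simp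
  refine ⟨by ring, ?_, by ring, by ring⟩
  linear_combination (-b * (s : F)) * this

lemma wl_un (b : F) : wl * un b * wl⁻¹ = mt 1 0 (-b) 1 (by ring) := by
  rw [mul_inv_eq_iff_eq_mul, wl, un, mt_mul, mt_mul, mt_eq_iff]
  refine ⟨by ring, by ring, by ring, by ring⟩

/-- `SL₂` is generated by unipotents and the Weyl element -/
lemma gen_SL (H : Subgroup (SpecialLinearGroup (Fin 2) F)) (hu : ∀ b, un b ∈ H) (hw : wl ∈ H) :
    H = ⊤ := by
  have hlow : ∀ b, mt 1 0 b 1 (by ring) ∈ H := by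
    intro b
    have := H.mul_mem (H.mul_mem hw (hu (-b))) (H.inv_mem hw)
    rw [wl_un] at this
    simpa using this
  have key : ∀ p q r s h, r ≠ 0 → mt p q r s h ∈ H := by
    intro p q r s h hr
    have e : mt p q r s h = un ((p - 1) / r) * mt 1 0 r 1 (by ring) * un ((s - 1) / r) := by
      rw [un, un, mt_mul, mt_mul, mt_eq_iff]
      refine ⟨by field_simp; ring, ?_, by ring, by field_simp; ring⟩
      field_simp
      linear_combination -h
    rw [e]
    exact H.mul_mem (H.mul_mem (hu _) (hlow _)) (hu _)
  rw [eq_top_iff]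
  intro A _
  obtain ⟨p, q, r, s, h, rfl⟩ := mt_surj A
  by_cases hr : r = 0
  · subst hr
    have hp : p ≠ 0 := by rintro rfl; simp at h
    have h1 : wl * mt p q 0 s h ∈ H := by
      rw [wl, mt_mul]
      apply key
      intro h0
      apply hp
      linear_combination h0
    exact (H.mul_mem_cancel_left hw).1 h1
  · exact key _ _ _ _ _ hr

/-- `p ^ 4 = -1` gives generators -/
lemma add_closed [Fintype F] (hF : Fintype.card F = 9) (A : AddSubgroup F) (k b : F) (hk : k ^ 2 = -1)
    (hb : b ≠ 0) (h1 : b ∈ A) (h2 : k * b ∈ A) : A = ⊤ := by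
  classical
  have h20 := two_ne F hF
  have h1' : Nat.card A * A.index = 9 := by
    rw [AddSubgroup.card_mul_index, Nat.card_eq_fintype_card, hF]
  have h3 : 4 ≤ Nat.card A := by
    have hsub : (({0, b, -b, k * b} : Finset F) : Set F) ⊆ (A : Set F) := by
      intro x hx
      simp only [Finset.coe_insert, Finset.coe_singleton, Set.mem_insert_iff,
        Set.mem_singleton_iff] at hx
      rcases hx with rfl | rfl | rfl | rfl
      · exact A.zero_mem
      · exact h1
      · exact A.neg_mem h1
      · exact h2
    have h4 := Set.ncard_le_ncard hsub (Set.toFinite _)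
    rw [Set.ncard_coe_finset] at h4
    have hk0 : k ≠ 0 := by rintro rfl; simp at hk
    have hk1 : k ≠ 1 := by
      rintro rfl; exact h20 (by linear_combination hk)
    have hk2 : k ≠ -1 := by
      rintro rfl; exact h20 (by linear_combination hk)
    have e1 : b ≠ -b := by
      intro h
      rcases mul_eq_zero.1 (by linear_combination h : (2 : F) * b = 0) with h | h
      · exact h20 h
      · exact hb h
    have e2 : b ≠ k * b := by
      intro h
      rcases mul_eq_zero.1 (by linear_combination -h : (k - 1) * b = 0) with h | h
      · exact hk1 (by linear_combination h)
      · exact hb h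
    have e3 : -b ≠ k * b := by
      intro h
      rcases mul_eq_zero.1 (by linear_combination -h : (k + 1) * b = 0) with h | h
      · exact hk2 (by linear_combination h)
      · exact hb h
    have e4 : 0 ≠ k * b := (mul_ne_zero hk0 hb).symm
    have e5 : 0 ≠ -b := (neg_ne_zero.2 hb).symm
    rw [Finset.card_insert_of_notMem, Finset.card_insert_of_notMem, Finset.card_insert_of_notMem,
      Finset.card_singleton] at h4
    · exact h4
    · simp [e3]
    · simp [e1, e2]
    · simp [hb.symm, e4, hb]
  rw [← AddSubgroup.index_eq_one]
  have : A.index ∣ 9 := ⟨_, by rw [mul_comm]; exact h1'.symm⟩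
  have h5 : A.index ≤ 2 := by nlinarith
  have h6 : A.index ≠ 0 := by intro h; rw [h] at h1'; omega
  interval_cases A.index <;> omega


lemma grp_aux {G : Type} [Group G] {v w t : G} (hw : w * t = t⁻¹ * w) (hv : v * t = t⁻¹ * v) :
    v * w⁻¹ * t = t * (v * w⁻¹) := by
  have e1 : w⁻¹ * t = t⁻¹ * w⁻¹ := by
    rw [inv_mul_eq_iff_eq_mul, ← mul_assoc, eq_mul_inv_iff_mul_eq]
    rw [eq_mul_inv_iff_mul_eq, mul_assoc, hw]
    group
  have e2 : v * t⁻¹ = t * v := by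
    rw [mul_inv_eq_iff_eq_mul, mul_assoc, hv]; group
  rw [mul_assoc, e1, ← mul_assoc, e2, mul_assoc]

lemma cube_aux (y : SpecialLinearGroup (Fin 2) F) (h : y ^ 3 = 1 ∨ y ^ 3 = -1) :
    y * y = y⁻¹ ∨ y * y = - y⁻¹ := by
  rw [pow_succ, pow_two] at h
  rcases h with h | h
  · left; rw [eq_inv_iff_mul_eq_one, h]
  · right
    have : -(y * y) = y⁻¹ := by
      rw [eq_inv_iff_mul_eq_one, neg_mul, h, neg_neg]
    rw [← this, neg_neg]

lemma wl_cube (a e : F) (hdet) (h : (mt a 0 0 e hdet * wl * un 1) ^ 3 = 1 ∨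
    (mt a 0 0 e hdet * wl * un 1) ^ 3 = -1) : (e - 1) * (e + 1) = 0 := by
  have hM : mt a 0 0 e hdet * wl * un 1 = mt 0 (-a) e e (by linear_combination hdet) := by
    rw [wl, un, mt_mul, mt_mul, mt_eq_iff]
    refine ⟨by ring, by ring, by ring, by ring⟩
  rw [hM] at h
  have k1 := cube_aux _ h
  rw [mt_mul, mt_inv, mt_neg, mt_eq_iff, mt_eq_iff] at k1
  rcases k1 with ⟨l1, -, -, l4⟩ | ⟨l1, -, -, l4⟩
  · linear_combination l4 + hdet
  · linear_combination l4 + hdet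

/-- an automorphism fixing two explicit elements is trivial -/
lemma rigid [Fintype F] (hF : Fintype.card F = 9) (α : PSL2 F ≃* PSL2 F) (p : Fˣ) (b : F)
    (hp : (p : F) ^ 4 = -1) (hb : b ≠ 0) (h1 : α (pr (dg p)) = pr (dg p))
    (h2 : α (pr (un b)) = pr (un b)) : ∀ x, α x = x := by
  have h20 := two_ne F hF
  have hpi : (p : F) * ((p⁻¹ : Fˣ) : F) = 1 := by simp
  have hp2 : (p : F) ^ 2 ≠ 1 := fun h => h20 (by linear_combination hp - (p ^ 2 + 1 : F) * h)
  have hp2' : (p : F) ^ 2 ≠ -1 := fun h => h20 (by linear_combination hp - (p ^ 2 - 1 : F) * h)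
  let A : AddSubgroup F :=
    { carrier := {c | α (pr (un c)) = pr (un c)}
      add_mem' := by
        intro x y hx hy
        simp only [Set.mem_ofPred_eq] at *
        rw [un_add, map_mul, map_mul, hx, hy]
      zero_mem' := by
        have : un (0 : F) = 1 := by rw [un, mt_one]
        simp only [Set.mem_ofPred_eq]
        rw [this, map_one, map_one]
      neg_mem' := by
        intro x hx
        simp only [Set.mem_ofPred_eq] at *
        rw [← un_inv, map_inv, map_inv, hx] }
  have hA : A = ⊤ := by
    refine add_closed hF A ((p : F) ^ 2) b (by rw [← pow_mul]; exact hp) hb h2 ?_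
    show α (pr (un _)) = pr (un _)
    rw [← dg_un, map_mul, map_mul, map_mul, map_mul, map_inv, map_inv, h1, h2]
  have hu : ∀ c, α (pr (un c)) = pr (un c) := by
    intro c
    have : c ∈ A := by rw [hA]; trivial
    exact this
  -- the Weyl element
  obtain ⟨X, hX⟩ := pr_surj (α (pr wl) * (pr wl)⁻¹)
  have hwt : pr wl * pr (dg p) = (pr (dg p))⁻¹ * pr wl := by
    rw [eq_inv_mul_iff_mul_eq, ← map_mul, ← map_mul, wl_dg, ← mul_assoc,
      ← dg_mul, mul_inv_cancel, dg_one, one_mul]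
  have hcomm : pr X * pr (dg p) = pr (dg p) * pr X := by
    rw [hX]
    apply grp_aux hwt
    have e1 := congrArg α hwt
    rwa [map_mul, map_mul, map_inv, h1] at e1
  obtain ⟨a, c, d, e, hdet, rfl⟩ := mt_surj X
  have hw3 : (pr (wl (F := F)) * pr (un 1)) ^ 3 = 1 := by
    rw [← map_mul, ← map_pow, pr_eq_one]
    right
    rw [pow_succ, pow_two, wl, un, mt_mul, mt_mul, mt_mul, mt_one, mt_neg, mt_eq_iff]
    refine ⟨by ring, by ring, by ring, by ring⟩
  have hform : c = 0 ∧ d = 0 := by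
    rw [← map_mul, ← map_mul, pr_eq, dg, mt_mul, mt_mul, mt_neg, mt_eq_iff, mt_eq_iff] at hcomm
    rcases hcomm with ⟨-, k2, k3, -⟩ | ⟨k1, k2, k3, k4⟩
    · have l2 : c * (p ^ 2 - 1 : F) = 0 := by linear_combination (-p : F) * k2 + c * hpi
      have l3 : d * (p ^ 2 - 1 : F) = 0 := by linear_combination (p : F) * k3 + d * hpi
      have hne : (p ^ 2 - 1 : F) ≠ 0 := sub_ne_zero.2 hp2
      exact ⟨(mul_eq_zero.1 l2).resolve_right hne, (mul_eq_zero.1 l3).resolve_right hne⟩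
    · have l2 : c * (p ^ 2 + 1 : F) = 0 := by linear_combination (p : F) * k2 - c * hpi
      have l3 : d * (p ^ 2 + 1 : F) = 0 := by linear_combination (p : F) * k3 - d * hpi
      have hne : (p ^ 2 + 1 : F) ≠ 0 := fun h => hp2' (by linear_combination h)
      exact ⟨(mul_eq_zero.1 l2).resolve_right hne, (mul_eq_zero.1 l3).resolve_right hne⟩
  obtain ⟨rfl, rfl⟩ := hform
  have hw3' : (pr (mt a 0 0 e hdet) * pr wl * pr (un 1)) ^ 3 = 1 := by
    have e1 := congrArg α hw3
    rw [map_pow, map_mul, map_one, hu] at e1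
    rw [hX, inv_mul_cancel_right]; exact e1
  have hfix : pr (mt a 0 0 e hdet) = 1 := by
    rw [← map_mul, ← map_mul, ← map_pow, pr_eq_one] at hw3'
    have he := wl_cube a e hdet hw3'
    rw [pr_eq_one, mt_one, mt_neg, mt_eq_iff, mt_eq_iff]
    rcases mul_eq_zero.1 he with h | h
    · left
      have he : e = 1 := by linear_combination h
      subst he
      exact ⟨by linear_combination hdet, rfl, rfl, rfl⟩
    · right
      have he : e = -1 := by linear_combination h
      subst he
      exact ⟨by linear_combination -hdet, by simp, by simp, rfl⟩
  have hw : α (pr wl) = pr wl := by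
    rw [hfix] at hX
    exact (mul_inv_eq_one.1 hX.symm)
  let H : Subgroup (SpecialLinearGroup (Fin 2) F) :=
    ((α.toMonoidHom.comp pr).eqLocus pr)
  have hH : H = ⊤ := gen_SL H hu hw
  intro x
  obtain ⟨Y, rfl⟩ := pr_surj x
  have : Y ∈ H := by rw [hH]; trivial
  exact this

end fact6
end CDB

namespace CDB

section fact6b

open Matrix

variable {F : Type} [Field F]

lemma unip (h3 : (3 : F) = 0) (U : SpecialLinearGroup (Fin 2) F) (hU : U ^ 3 = 1) (hne : U ≠ 1) :
    ∃ C b, b ≠ 0 ∧ U = C * un b * C⁻¹ := by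
  obtain ⟨p, q, r, s, h, rfl⟩ := mt_surj U
  have hU' : mt p q r s h * mt p q r s h = (mt p q r s h)⁻¹ := by
    rw [eq_inv_iff_mul_eq_one, ← hU, pow_succ, pow_two]
  rw [mt_mul, mt_inv, mt_eq_iff] at hU'
  obtain ⟨k1, k2, k3, k4⟩ := hU'
  by_cases hr : r = 0
  · subst hr
    have hp3 : (p - 1) ^ 3 = 0 := by
      linear_combination p * k1 + h + (-p ^ 2 + p) * h3
    have hp : p = 1 := sub_eq_zero.1 (pow_eq_zero_iff (by norm_num) |>.1 hp3)
    subst hp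
    have hs : s = 1 := by linear_combination h
    subst hs
    refine ⟨1, q, ?_, ?_⟩
    · rintro rfl; apply hne; rw [mt_one]
    · rw [one_mul, inv_one, mul_one, un]
  · have htr : p + s = -1 := by
      have : r * (p + s + 1) = 0 := by linear_combination k3
      have := (mul_eq_zero.1 this).resolve_left hr
      linear_combination this
    refine ⟨mt (p - 1) (-r⁻¹) r 0 (by field_simp; ring), -r⁻¹, by simpa using hr, ?_⟩
    rw [eq_mul_inv_iff_mul_eq, un, mt_mul, mt_mul, mt_eq_iff]
    refine ⟨?_, ?_, ?_, ?_⟩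
    · linear_combination p * htr - h - p * h3 + h3 * 0
    · field_simp; ring
    · linear_combination r * htr - r * h3
    · field_simp; ring

lemma sq_class [Fintype F] (hF : Fintype.card F = 9) (t : F) (ht : t ^ 4 = -1) (b : F) (hb : b ≠ 0) :
    ∃ s : Fˣ, b = s ^ 2 * 1 ∨ b = s ^ 2 * t := by
  have h2 := two_ne F hF
  have hr : ringChar F ≠ 2 := by
    intro h
    have := ringChar.Nat.cast_ringChar (R := F)
    rw [h] at this
    exact h2 (by exact_mod_cast this)
  have ht0 : t ≠ 0 := by rintro rfl; simp at ht
  have key : ∀ x : F, x ≠ 0 → x ^ 4 = 1 → ∃ s : Fˣ, x = s ^ 2 := by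
    intro x hx h4
    have h1 : IsSquare x := by
      rw [FiniteField.isSquare_iff hr hx, hF]; norm_num; exact h4
    obtain ⟨y, hy⟩ := h1
    have hy0 : y ≠ 0 := by rintro rfl; apply hx; simpa using hy
    exact ⟨Units.mk0 y hy0, by rw [hy, Units.val_mk0]; ring⟩
  have h8 := pow_eight F hF b hb
  have h84 : (b ^ 4 - 1) * (b ^ 4 + 1) = 0 := by linear_combination h8
  rcases mul_eq_zero.1 h84 with h4 | h4
  · obtain ⟨s, hs⟩ := key b hb (by linear_combination h4)
    exact ⟨s, Or.inl (by rw [hs, mul_one])⟩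
  · obtain ⟨s, hs⟩ := key (b / t) (div_ne_zero hb ht0) (by
      rw [div_pow, ht]; linear_combination -h4)
    refine ⟨s, Or.inr ?_⟩
    rw [← hs]; field_simp

/-- lift commutation -/
lemma lift_un (h2 : (2 : F) ≠ 0) (T : SpecialLinearGroup (Fin 2) F) (b b' : F) (hb : b ≠ 0)
    (h : pr (T * un b * T⁻¹) = pr (un b')) : ∃ p q, T = bt p q ∧ b' = p ^ 2 * b := by
  obtain ⟨p, q, r, s, hd, rfl⟩ := mt_surj T
  rw [pr_eq, mul_inv_eq_iff_eq_mul, mul_inv_eq_iff_eq_mul, un, un, mt_neg, mt_mul, mt_mul, mt_mul, mt_eq_iff,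
    mt_eq_iff] at h
  have hr : r = 0 ∧ p * b = b' * s := by
    rcases h with ⟨k1, k2, k3, k4⟩ | ⟨k1, k2, k3, k4⟩
    · have : r * b = 0 := by linear_combination k4
      have hr := (mul_eq_zero.1 this).resolve_right hb
      subst hr
      exact ⟨rfl, by linear_combination k2⟩
    · exfalso
      have hr : r = 0 := by
        have : (2 : F) * r = 0 := by linear_combination k3
        exact (mul_eq_zero.1 this).resolve_left h2
      subst hr
      have hp : p = 0 := by
        have : (2 : F) * p = 0 := by linear_combination k1
        exact (mul_eq_zero.1 this).resolve_left h2
      subst hp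
      simp at hd
  obtain ⟨rfl, h5⟩ := hr
  have hps : p * s = 1 := by linear_combination hd
  have hp : p ≠ 0 := by rintro rfl; simp at hps
  refine ⟨Units.mk0 p hp, q, ?_, ?_⟩
  · rw [bt, mt_eq_iff]
    refine ⟨rfl, rfl, rfl, ?_⟩
    rw [Units.val_inv_eq_inv_val, Units.val_mk0]
    field_simp; linear_combination hps
  · rw [Units.val_mk0]
    linear_combination (-b') * hps - p * h5

lemma borel [Fintype F] (hF : Fintype.card F = 9) (T : SpecialLinearGroup (Fin 2) F) (b : F)
    (hb : b ≠ 0) (h4 : pr T ^ 4 = 1) (h2 : pr T ^ 2 ≠ 1)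
    (hc : pr (un b) * (pr T * pr (un b) * (pr T)⁻¹) = (pr T * pr (un b) * (pr T)⁻¹) * pr (un b)) :
    ∃ (p : Fˣ) (q : F), T = bt p q ∧ (p : F) ^ 4 = -1 := by
  have h20 := two_ne F hF
  have h3 := three_eq F hF
  obtain ⟨p, q, r, s, hd, rfl⟩ := mt_surj T
  have hr : r = 0 := by
    have e1 : pr ((mt p q r s hd * un b * (mt p q r s hd)⁻¹) * un b *
        (mt p q r s hd * un b * (mt p q r s hd)⁻¹)⁻¹) = pr (un b) := by
      rw [map_mul, map_mul, map_mul, map_mul, map_inv, map_inv, map_mul, map_mul, map_inv, ← hc]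
      group
    obtain ⟨x, y, e2, -⟩ := lift_un h20 _ _ _ hb e1
    rw [mt_inv, un, mt_mul, mt_mul, bt, mt_eq_iff] at e2
    have : r * r * b = 0 := by linear_combination -e2.2.2.1
    have := (mul_eq_zero.1 this).resolve_right hb
    exact mul_self_eq_zero.1 this
  subst hr
  have hps : p * s = 1 := by linear_combination hd
  have hp : p ≠ 0 := by rintro rfl; simp at hps
  refine ⟨Units.mk0 p hp, q, ?_, ?_⟩
  · rw [bt, mt_eq_iff]
    refine ⟨rfl, rfl, rfl, ?_⟩
    rw [Units.val_inv_eq_inv_val, Units.val_mk0]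
    field_simp; linear_combination hps
  rw [Units.val_mk0]
  have h8 := pow_eight F hF p hp
  have h84 : (p ^ 4 - 1) * (p ^ 4 + 1) = 0 := by linear_combination h8
  rcases mul_eq_zero.1 h84 with h5 | h5
  · exfalso
    have h42 : (p ^ 2 - 1) * (p ^ 2 + 1) = 0 := by linear_combination h5
    rw [← map_pow, show 4 = 2 * 2 from rfl, pow_mul, pow_two, pow_two, mt_mul, mt_mul, pr_eq_one,
      mt_one, mt_neg, mt_eq_iff, mt_eq_iff] at h4
    rw [← map_pow, pow_two, mt_mul, Ne, pr_eq_one,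
      mt_one, mt_neg, mt_eq_iff, mt_eq_iff] at h2
    rcases mul_eq_zero.1 h42 with h6 | h6
    · have hs : s = p := by linear_combination p * hps - s * h6
      subst hs
      have hq : s * q = 0 := by
        rcases h4 with ⟨-, k2, -, -⟩ | ⟨-, k2, -, -⟩
        · linear_combination k2 - s * q * h3 - 4 * s * q * h6
        · linear_combination k2 - s * q * h3 - 4 * s * q * h6
      apply h2
      left
      refine ⟨by linear_combination h6, by linear_combination 2 * hq, by ring, by linear_combination h6⟩
    · have hs : s = -p := by linear_combination -p * hps + s * h6
      subst hs
      apply h2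
      right
      refine ⟨by linear_combination h6, by ring, by ring, by linear_combination h6⟩
  · linear_combination h5


lemma bt_eq (p : Fˣ) (q c : F) (h : q = c * ((p⁻¹ : Fˣ) - p : F)) :
    bt p q = un c * dg p * (un c)⁻¹ := by
  rw [un_inv, un, un, dg, bt, mt_mul, mt_mul, mt_eq_iff]
  refine ⟨by ring, ?_, by ring, by ring⟩
  rw [h]; ring

/-- representatives for the torus element -/
def rT (t : Fˣ) (e : Bool) : Fˣ := if e then t else t⁻¹

/-- representatives for the unipotent element -/
def rU (t : Fˣ) (e : Bool) : F := if e then 1 else t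

lemma rT_four (t : Fˣ) (ht : (t : F) ^ 4 = -1) (e : Bool) : (rT t e : F) ^ 4 = -1 := by
  cases e
  · show ((t⁻¹ : Fˣ) : F) ^ 4 = -1
    rw [Units.val_inv_eq_inv_val, inv_pow, ht, inv_neg, inv_one]
  · exact ht

lemma rU_ne (t : Fˣ) (e : Bool) : rU t e ≠ 0 := by
  cases e
  · exact t.ne_zero
  · exact one_ne_zero

lemma bt_form [Fintype F] (hF : Fintype.card F = 9) (t : Fˣ) (ht : (t : F) ^ 4 = -1) (p : Fˣ) (q : F)
    (hp : (p : F) ^ 4 = -1) : ∃ c e, pr (bt p q) = pr (un c * dg (rT t e) * (un c)⁻¹) := by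
  have h20 := two_ne F hF
  have hti : (t : F) * ((t⁻¹ : Fˣ) : F) = 1 := by simp
  have hpi : (p : F) * ((p⁻¹ : Fˣ) : F) = 1 := by simp
  have hp2 : (p : F) ^ 2 ≠ 1 := fun h => h20 (by linear_combination hp - (p ^ 2 + 1 : F) * h)
  have hne : ((p⁻¹ : Fˣ) - p : F) ≠ 0 := by
    intro h
    apply hp2
    linear_combination hpi - (p : F) * h
  refine ⟨q / ((p⁻¹ : Fˣ) - p : F), ?_⟩
  rw [bt_eq p q (q / ((p⁻¹ : Fˣ) - p : F)) (by rw [div_mul_cancel₀ _ hne])]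
  generalize q / ((p⁻¹ : Fˣ) - p : F) = c
  have h1 : ∃ e, p = rT t e ∨ p = - rT t e := by
    have : ((p : F) - t) * (((p : F) + t) * (((p : F) - (t⁻¹ : Fˣ)) * ((p : F) + (t⁻¹ : Fˣ)))) = 0 := by
      have e2 : ((t⁻¹ : Fˣ) : F) ^ 2 = - t ^ 2 := by
        linear_combination (-(t : F) ^ 2 * ((t : F) * ((t⁻¹ : Fˣ) : F) + 1)) * hti
          + ((t⁻¹ : Fˣ) : F) ^ 2 * ht
      linear_combination hp - ht - ((p : F) ^ 2 - t ^ 2) * e2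
    rcases mul_eq_zero.1 this with h | h
    · exact ⟨true, Or.inl (Units.ext (sub_eq_zero.1 h))⟩
    rcases mul_eq_zero.1 h with h | h
    · exact ⟨true, Or.inr (Units.ext (by rw [Units.val_neg]; exact eq_neg_of_add_eq_zero_left h))⟩
    rcases mul_eq_zero.1 h with h | h
    · exact ⟨false, Or.inl (Units.ext (sub_eq_zero.1 h))⟩
    · exact ⟨false, Or.inr (Units.ext (by rw [Units.val_neg]; exact eq_neg_of_add_eq_zero_left h))⟩
  obtain ⟨e, h | h⟩ := h1
  · exact ⟨e, by rw [h]⟩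
  · refine ⟨e, ?_⟩
    rw [pr_eq]
    right
    have : dg (-rT t e) = - dg (rT t e) := by
      rw [← neg_one_mul, dg_mul, dg_neg_one, neg_one_mul]
    rw [h, this, mul_neg, neg_mul]

/-- the relevant pairs -/
def SS (F : Type) [Field F] : Set (PSL2 F × PSL2 F) :=
  {x | x.1 ^ 4 = 1 ∧ x.1 ^ 2 ≠ 1 ∧ x.2 ^ 3 = 1 ∧ x.2 ≠ 1 ∧
    x.2 * (x.1 * x.2 * x.1⁻¹) = (x.1 * x.2 * x.1⁻¹) * x.2}

lemma SS_conj {x : PSL2 F × PSL2 F} (hx : x ∈ SS F) (α : PSL2 F ≃* PSL2 F) :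
    (α x.1, α x.2) ∈ SS F := by
  obtain ⟨h1, h2, h3, h4, h5⟩ := hx
  refine ⟨?_, ?_, ?_, ?_, ?_⟩
  · show α x.1 ^ 4 = 1
    rw [← map_pow, h1, map_one]
  · show α x.1 ^ 2 ≠ 1
    rw [← map_pow]
    intro h; apply h2; exact (map_eq_one_iff α α.injective).1 h
  · show α x.2 ^ 3 = 1
    rw [← map_pow, h3, map_one]
  · show α x.2 ≠ 1
    intro h; apply h4; exact (map_eq_one_iff α α.injective).1 h
  · have := congrArg α h5
    simpa only [map_mul, map_inv] using this

lemma SS_surj [Fintype F] (hF : Fintype.card F = 9) (t : Fˣ) (ht : (t : F) ^ 4 = -1)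
    (x : PSL2 F × PSL2 F) (hx : x ∈ SS F) :
    ∃ (g : PSL2 F) (e d : Bool), x = (g * pr (dg (rT t e)) * g⁻¹, g * pr (un (rU t d)) * g⁻¹) := by
  obtain ⟨y, u⟩ := x
  have hx0 := hx
  obtain ⟨-, -, h3, h4, -⟩ := hx
  simp only at h3 h4
  have hU : ∃ U : SpecialLinearGroup (Fin 2) F, pr U = u ∧ U ^ 3 = 1 := by
    obtain ⟨U, rfl⟩ := pr_surj u
    rw [← map_pow, pr_eq_one] at h3
    rcases h3 with h | h
    · exact ⟨U, rfl, h⟩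
    · refine ⟨-U, by rw [pr_eq]; right; rfl, ?_⟩
      rw [Odd.neg_pow (by decide), h, neg_neg]
  obtain ⟨U, rfl, hU3⟩ := hU
  obtain ⟨C, b, hb, rfl⟩ := unip (three_eq F hF) U hU3 (by
    rintro rfl; exact h4 (map_one _))
  obtain ⟨s, hs⟩ := sq_class hF (t : F) ht b hb
  have hd : ∃ d, b = s ^ 2 * rU t d := by
    rcases hs with h | h
    · exact ⟨true, h⟩
    · exact ⟨false, h⟩
  obtain ⟨d, hd⟩ := hd
  have hub : C * un b * C⁻¹ = (C * dg s) * un (rU t d) * (C * dg s)⁻¹ := by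
    rw [hd, ← dg_un]; group
  rw [hub] at hx0 ⊢
  generalize C * dg s = D at hx0 ⊢
  obtain ⟨Y, hY⟩ := pr_surj ((pr D)⁻¹ * y * pr D)
  have hx1 := SS_conj hx0 (MulAut.conj (pr D)⁻¹)
  have ey : (MulAut.conj (pr D)⁻¹) y = pr Y := by
    rw [hY, MulAut.conj_apply, inv_inv]
  have eu : (MulAut.conj (pr D)⁻¹) (pr (D * un (rU t d) * D⁻¹)) = pr (un (rU t d)) := by
    rw [MulAut.conj_apply, inv_inv, map_mul, map_mul, map_inv]; group
  rw [ey, eu] at hx1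
  obtain ⟨k1, k2, -, -, k5⟩ := hx1
  obtain ⟨p, q, rfl, hp⟩ := borel hF Y (rU t d) (rU_ne t d) k1 k2 k5
  obtain ⟨c, e, hce⟩ := bt_form hF t ht p q hp
  refine ⟨pr D * pr (un c), e, d, ?_⟩
  rw [hce] at hY
  rw [Prod.mk.injEq]
  constructor
  · have : y = pr D * ((pr D)⁻¹ * y * pr D) * (pr D)⁻¹ := by group
    rw [this, ← hY, map_mul, map_mul, map_inv]; group
  · have : un c * un (rU t d) * (un c)⁻¹ = un (rU t d) := by
      rw [mul_inv_eq_iff_eq_mul, ← un_add, ← un_add, add_comm]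
    conv_lhs => rw [← this]
    simp only [map_mul, map_inv]; group

end fact6b
end CDB

namespace CDB

section fact6c

open Matrix

variable {F : Type} [Field F]

lemma rep_mem [Fintype F] (hF : Fintype.card F = 9) (p : Fˣ) (b : F) (hp : (p : F) ^ 4 = -1)
    (hb : b ≠ 0) : (pr (dg p), pr (un b)) ∈ SS F := by
  have h20 := two_ne F hF
  have h3 := three_eq F hF
  have hpi : (p : F) * ((p⁻¹ : Fˣ) : F) = 1 := by simp
  refine ⟨?_, ?_, ?_, ?_, ?_⟩
  · show pr (dg p) ^ 4 = 1
    have : p ^ 4 = -1 := Units.ext (by simpa using hp)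
    rw [← map_pow, pr_eq_one]
    right
    rw [← dg_neg_one, ← this]
    simp only [pow_succ, pow_zero, one_mul, dg_mul]
  · show pr (dg p) ^ 2 ≠ 1
    rw [← map_pow, Ne, pr_eq_one, pow_two, ← dg_mul, dg, mt_one, mt_neg, mt_eq_iff, mt_eq_iff]
    rintro (⟨h, -⟩ | ⟨h, -⟩)
    · apply h20
      rw [Units.val_mul] at h
      linear_combination hp - (p ^ 2 + 1 : F) * h
    · apply h20
      rw [Units.val_mul] at h
      linear_combination hp - (p ^ 2 - 1 : F) * h
  · show pr (un b) ^ 3 = 1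
    rw [← map_pow, pr_eq_one]
    left
    rw [pow_succ, pow_two, ← un_add, ← un_add, un, mt_one, mt_eq_iff]
    exact ⟨rfl, by linear_combination b * h3, rfl, rfl⟩
  · show pr (un b) ≠ 1
    rw [Ne, pr_eq_one, un, mt_one, mt_neg, mt_eq_iff, mt_eq_iff]
    rintro (⟨-, h, -⟩ | ⟨-, h, -⟩)
    · exact hb h
    · exact hb (by simpa using h)
  · show pr (un b) * (pr (dg p) * pr (un b) * (pr (dg p))⁻¹) =
      (pr (dg p) * pr (un b) * (pr (dg p))⁻¹) * pr (un b)
    rw [← map_inv, ← map_mul, ← map_mul, dg_un, ← map_mul, ← map_mul, ← un_add, ← un_add, add_comm]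

lemma rep_inj [Fintype F] (hF : Fintype.card F = 9) (t : Fˣ) (ht : (t : F) ^ 4 = -1)
    (h : PSL2 F) (e e' d d' : Bool)
    (h1 : h * pr (dg (rT t e)) * h⁻¹ = pr (dg (rT t e')))
    (h2 : h * pr (un (rU t d)) * h⁻¹ = pr (un (rU t d'))) : h = 1 ∧ e = e' ∧ d = d' := by
  have h20 := two_ne F hF
  obtain ⟨T, rfl⟩ := pr_surj h
  rw [← map_inv, ← map_mul, ← map_mul] at h1 h2
  obtain ⟨p, q, rfl, hd⟩ := lift_un h20 _ _ _ (rU_ne t d) h2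
  have hs := rT_four t ht e
  have hs' := rT_four t ht e'
  have hti : (t : F) * ((t⁻¹ : Fˣ) : F) = 1 := by simp
  have hsi : (rT t e : F) * ((((rT t e)⁻¹) : Fˣ) : F) = 1 := by simp
  have hee : ∀ a b : Bool, ((rT t a : F) = rT t b ∨ (rT t a : F) = - rT t b) → a = b := by
    have key : ∀ c : F, c ^ 2 = 1 → (t : F) ≠ c * ((t⁻¹ : Fˣ) : F) := by
      intro c hc hh
      apply h20
      have : (t : F) ^ 2 = c := by
        linear_combination (t : F) * hh + c * hti
      linear_combination ht - ((t : F) ^ 2 + c) * this - hc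
    intro a b hab
    cases a <;> cases b
    · rfl
    · exfalso
      simp only [rT, if_true, if_false, Bool.false_eq_true] at hab
      rcases hab with hab | hab
      · exact key 1 (by ring) (by rw [one_mul]; exact hab.symm)
      · exact key (-1) (by ring) (by linear_combination hab)
    · exfalso
      simp only [rT, if_true, if_false, Bool.false_eq_true] at hab
      rcases hab with hab | hab
      · exact key 1 (by ring) (by rw [one_mul]; exact hab)
      · exact key (-1) (by ring) (by linear_combination hab)
    · rfl
  have hp0 : (p : F) ≠ 0 := p.ne_zero
  have h8 : (p : F) ^ 8 = 1 := pow_eight F hF _ hp0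
  have hdd : d = d' := by
    have h4 : (rU t d') ^ 4 = (rU t d) ^ 4 := by
      rw [hd]; linear_combination (rU t d) ^ 4 * h8
    cases d <;> cases d'
    · rfl
    · exfalso
      simp only [rU, if_true, if_false, Bool.false_eq_true] at h4
      exact h20 (by linear_combination h4 + ht)
    · exfalso
      simp only [rU, if_true, if_false, Bool.false_eq_true] at h4
      exact h20 (by linear_combination ht - h4)
    · rfl
  subst hdd
  have hp2 : (p : F) ^ 2 = 1 := by
    have := rU_ne t d
    apply mul_right_cancel₀ this
    rw [one_mul]; exact hd.symm
  have hpp : ((p⁻¹ : Fˣ) : F) = p := by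
    rw [Units.val_inv_eq_inv_val]; field_simp; exact hp2.symm
  rw [pr_eq, mul_inv_eq_iff_eq_mul, mul_inv_eq_iff_eq_mul, bt, dg, dg, mt_neg, mt_mul, mt_mul,
    mt_mul, mt_eq_iff, mt_eq_iff] at h1
  have hq : ∀ c : F, c ^ 2 = 1 → (rT t e : F) = c * rT t e' →
      q * (((rT t e)⁻¹ : Fˣ) : F) = c * rT t e' * q → q = 0 := by
    intro c hc k1 k2
    have hs2 : (1 - (rT t e : F) ^ 2) ≠ 0 := by
      intro hh; apply h20
      linear_combination hs + ((rT t e : F) ^ 2 + 1) * hh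
    have : q * (1 - (rT t e : F) ^ 2) = 0 := by
      linear_combination (rT t e : F) * k2 - q * hsi - (rT t e : F) * q * k1
    exact (mul_eq_zero.1 this).resolve_right hs2
  have hfin : (e = e') ∧ q = 0 := by
    rcases h1 with ⟨k1, k2, -, -⟩ | ⟨k1, k2, -, -⟩
    · have : (rT t e : F) = rT t e' := by
        apply mul_left_cancel₀ hp0; linear_combination k1
      exact ⟨hee _ _ (Or.inl this), hq 1 (by ring) (by rw [this]; ring) (by linear_combination k2)⟩
    · have : (rT t e : F) = - rT t e' := by
        apply mul_left_cancel₀ hp0; linear_combination k1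
      exact ⟨hee _ _ (Or.inr this), hq (-1) (by ring) (by rw [this]; ring)
        (by linear_combination k2)⟩
  obtain ⟨rfl, rfl⟩ := hfin
  refine ⟨?_, rfl, rfl⟩
  rw [pr_eq_one, bt, mt_one, mt_neg, mt_eq_iff, mt_eq_iff]
  have : ((p : F) - 1) * (p + 1) = 0 := by linear_combination hp2
  rcases mul_eq_zero.1 this with k | k
  · left
    refine ⟨by linear_combination k, rfl, rfl, by rw [hpp]; linear_combination k⟩
  · right
    refine ⟨by linear_combination k, by simp, by simp, by rw [hpp]; linear_combination k⟩

lemma card_SS [Fintype F] (hF : Fintype.card F = 9) : Nat.card (SS F) = 1440 := by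
  obtain ⟨t0, ht0⟩ := exists_tau F hF
  have hne : t0 ≠ 0 := by rintro rfl; simp at ht0
  obtain ⟨t, rfl⟩ : ∃ t : Fˣ, (t : F) = t0 := ⟨Units.mk0 t0 hne, rfl⟩
  let f : PSL2 F × Bool × Bool → SS F := fun x =>
    ⟨(x.1 * pr (dg (rT t x.2.1)) * x.1⁻¹, x.1 * pr (un (rU t x.2.2)) * x.1⁻¹),
      SS_conj (rep_mem hF _ _ (rT_four t ht0 x.2.1) (rU_ne t x.2.2)) (MulAut.conj x.1)⟩
  have hf : Function.Bijective f := by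
    constructor
    · rintro ⟨g, e, d⟩ ⟨g', e', d'⟩ h
      have h' := Subtype.ext_iff.1 h
      simp only [f, Prod.mk.injEq] at h'
      obtain ⟨h1, h2⟩ := h'
      have key := rep_inj hF t ht0 (g'⁻¹ * g) e e' d d' (by
        calc g'⁻¹ * g * pr (dg (rT t e)) * (g'⁻¹ * g)⁻¹ = g'⁻¹ * (g * pr (dg (rT t e)) * g⁻¹) * g' := by group
          _ = _ := by rw [h1]; group) (by
        calc g'⁻¹ * g * pr (un (rU t d)) * (g'⁻¹ * g)⁻¹ = g'⁻¹ * (g * pr (un (rU t d)) * g⁻¹) * g' := by group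
          _ = _ := by rw [h2]; group)
      obtain ⟨k1, rfl, rfl⟩ := key
      rw [inv_mul_eq_one] at k1
      rw [k1]
    · rintro ⟨x, hx⟩
      obtain ⟨g, e, d, h⟩ := SS_surj hF t ht0 x hx
      exact ⟨(g, e, d), Subtype.ext h.symm⟩
  rw [← Nat.card_congr (Equiv.ofBijective f hf), Nat.card_prod, Nat.card_prod, card_PSL hF]
  simp

lemma card_aut [Fintype F] (hF : Fintype.card F = 9) : Nat.card (MulAut (PSL2 F)) ∣ 1440 := by
  obtain ⟨t0, ht0⟩ := exists_tau F hF
  have hne : t0 ≠ 0 := by rintro rfl; simp at ht0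
  obtain ⟨t, rfl⟩ : ∃ t : Fˣ, (t : F) = t0 := ⟨Units.mk0 t0 hne, rfl⟩
  let act : MulAction (MulAut (PSL2 F)) (SS F) :=
    { smul := fun α x => ⟨(α x.1.1, α x.1.2), SS_conj x.2 α⟩
      one_smul := fun x => rfl
      mul_smul := fun a b x => rfl }
  have hst : ∀ b : SS F, MulAction.stabilizer (MulAut (PSL2 F)) b = ⊥ := by
    rintro ⟨x, hx⟩
    rw [eq_bot_iff]
    intro α hα
    obtain ⟨g, e, d, rfl⟩ := SS_surj hF t ht0 x hx
    have h := Subtype.ext_iff.1 (MulAction.mem_stabilizer_iff.1 hα)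
    have h1 : α (g * pr (dg (rT t e)) * g⁻¹) = g * pr (dg (rT t e)) * g⁻¹ := congrArg Prod.fst h
    have h2 : α (g * pr (un (rU t d)) * g⁻¹) = g * pr (un (rU t d)) * g⁻¹ := congrArg Prod.snd h
    have key := rigid hF ((MulAut.conj g)⁻¹ * α * MulAut.conj g) (rT t e) (rU t d) (rT_four t ht0 e)
      (rU_ne t d) (by
        show (MulAut.conj g)⁻¹ (α (MulAut.conj g (pr (dg (rT t e))))) = _
        rw [MulAut.conj_apply, h1, MulAut.conj_inv_apply]; group) (by
        show (MulAut.conj g)⁻¹ (α (MulAut.conj g (pr (un (rU t d))))) = _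
        rw [MulAut.conj_apply, h2, MulAut.conj_inv_apply]; group)
    rw [Subgroup.mem_bot]
    have h3 : (MulAut.conj g)⁻¹ * α * MulAut.conj g = 1 := MulEquiv.ext key
    have h4 : α = MulAut.conj g * ((MulAut.conj g)⁻¹ * α * MulAut.conj g) * (MulAut.conj g)⁻¹ := by group
    rw [h4, h3]; group
  have := Nat.card_congr (MulAction.selfEquivOrbitsQuotientProd hst)
  rw [card_SS hF, Nat.card_prod] at this
  exact ⟨_, by rw [this, mul_comm]⟩

end fact6c
end CDB

namespace CDB

section numeric

/-- number of prime factors -/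
def om (n : ℕ) : ℕ := n.primeFactorsList.length

lemma om_mono {a b : ℕ} (h : a ∣ b) (hb : b ≠ 0) : om a ≤ om b :=
  (Nat.primeFactorsList_sublist_of_dvd h hb).length_le

lemma om_mul {a b : ℕ} (ha : a ≠ 0) (hb : b ≠ 0) : om (a * b) = om a + om b := by
  unfold om
  rw [(Nat.perm_primeFactorsList_mul ha hb).length_eq, List.length_append]

lemma om_pos {a : ℕ} (ha : 2 ≤ a) : 1 ≤ om a := by
  have h1 : a.minFac.Prime := Nat.minFac_prime (by omega)
  have h2 : a.minFac ∈ a.primeFactorsList :=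
    (Nat.mem_primeFactorsList (by omega)).2 ⟨h1, Nat.minFac_dvd a⟩
  exact List.length_pos_of_mem h2

lemma om_three {a b c : ℕ} (ha : 2 ≤ a) (hb : 2 ≤ b) (hc : 2 ≤ c) : 3 ≤ om (a * b * c) := by
  rw [om_mul (Nat.mul_ne_zero (by omega) (by omega)) (by omega), om_mul (by omega) (by omega)]
  have := om_pos ha
  have := om_pos hb
  have := om_pos hc
  omega

variable {G : Type} [Group G]

lemma tp [Finite G] (hG : TwoPrimeHypothesis G) {a b c : ℕ} (ha : a ∈ charDegrees G) (hb : b ∈ charDegrees G)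
    (hc : 3 ≤ om c) (hca : c ∣ a) (hcb : c ∣ b) : a = b := by
  by_contra hne
  have h1 := hG a ha b hb hne
  have ha0 : a ≠ 0 := by
    obtain ⟨V, _, _, _, ρ, hρ, rfl⟩ := (mem_charDegrees_iff a).1 ha
    have := hρ.1
    exact (Module.finrank_pos (R := ℂ) (M := V)).ne'
  have h2 := om_mono (Nat.dvd_gcd hca hcb) (by
    intro h; exact ha0 (Nat.eq_zero_of_gcd_eq_zero_left h))
  unfold om at h2 hc
  omega

/-- exceptional set -/
def LL : Finset ℕ := {1, 2, 3, 4, 5, 6, 9, 10, 15}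

/-- the classes -/
def CC : Finset ℕ := {8, 12, 18, 20, 27, 30, 45}

lemma om_CC : ∀ c ∈ CC, 3 ≤ om c := by
  intro c hc
  simp only [CC, Finset.mem_insert, Finset.mem_singleton] at hc
  rcases hc with rfl | rfl | rfl | rfl | rfl | rfl | rfl
  · exact om_three (a := 2) (b := 2) (c := 2) (by norm_num) (by norm_num) (by norm_num)
  · exact om_three (a := 2) (b := 2) (c := 3) (by norm_num) (by norm_num) (by norm_num)
  · exact om_three (a := 2) (b := 3) (c := 3) (by norm_num) (by norm_num) (by norm_num)
  · exact om_three (a := 2) (b := 2) (c := 5) (by norm_num) (by norm_num) (by norm_num)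
  · exact om_three (a := 3) (b := 3) (c := 3) (by norm_num) (by norm_num) (by norm_num)
  · exact om_three (a := 2) (b := 3) (c := 5) (by norm_num) (by norm_num) (by norm_num)
  · exact om_three (a := 3) (b := 3) (c := 5) (by norm_num) (by norm_num) (by norm_num)

lemma count [Finite G] (hG : TwoPrimeHypothesis G)
    (h : ∀ a ∈ charDegrees G, a ∈ LL ∨ ∃ c ∈ CC, c ∣ a) : (charDegrees G).ncard ≤ 16 := by
  classical
  let A : ℕ → Set ℕ := fun c => {a | a ∈ charDegrees G ∧ c ∣ a}
  have hA : ∀ c ∈ CC, (A c).Subsingleton := fun c hc a ha b hb =>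
    tp hG ha.1 hb.1 (om_CC c hc) ha.2 hb.2
  let B : Finset ℕ := LL ∪ CC.attach.biUnion fun c => (hA c.1 c.2).finite.toFinset
  have hsub : charDegrees G ⊆ (B : Set ℕ) := by
    intro a ha
    rw [Finset.mem_coe, Finset.mem_union]
    rcases h a ha with h1 | ⟨c, hc, hca⟩
    · exact Or.inl h1
    · right
      rw [Finset.mem_biUnion]
      exact ⟨⟨c, hc⟩, Finset.mem_attach _ _, (Set.Finite.mem_toFinset _).2 ⟨ha, hca⟩⟩
  calc (charDegrees G).ncard ≤ (B : Set ℕ).ncard := Set.ncard_le_ncard hsub B.finite_toSet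
    _ = B.card := Set.ncard_coe_finset B
    _ ≤ LL.card + (CC.attach.biUnion fun c => (hA c.1 c.2).finite.toFinset).card :=
        Finset.card_union_le _ _
    _ ≤ 9 + 7 * 1 := by
        refine Nat.add_le_add (by decide) ?_
        refine (Finset.card_biUnion_le_card_mul _ _ 1 ?_).trans ?_
        · intro c _
          rw [Finset.card_le_one]
          intro a ha b hb
          exact hA c.1 c.2 ((Set.Finite.mem_toFinset _).1 ha) ((Set.Finite.mem_toFinset _).1 hb)
        · rw [Finset.card_attach]; decide
    _ = 16 := by norm_num

lemma div_aux : ∀ y ∈ Nat.divisors 32, ∀ z ∈ Nat.divisors 45,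
    y * z ∈ LL ∨ ∃ c ∈ CC, c ∣ y * z := by
  decide

lemma div1440 : ∀ s ∈ Nat.divisors 1440, s ∈ LL ∨ ∃ c ∈ CC, c ∣ s := by
  intro s hs
  have h1 : s ∣ 32 * 45 := (Nat.mem_divisors.1 hs).1
  obtain ⟨y, z, hy, hz, rfl⟩ := (Nat.dvd_mul).1 h1
  exact div_aux y (Nat.mem_divisors.2 ⟨hy, by norm_num⟩) z (Nat.mem_divisors.2 ⟨hz, by norm_num⟩)

lemma LL_small : ∀ s ∈ LL, ∀ θ ∈ ({1, 2, 4} : Finset ℕ), s * θ ∈ LL ∨ ∃ c ∈ CC, c ∣ s * θ := by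
  decide

lemma LL_big : ∀ s ∈ LL, ∀ t ∈ Nat.divisors s, 6 ≤ t →
    t = s ∧ (t = 6 ∨ t = 9 ∨ t = 10 ∨ t = 15) := by
  decide

end numeric

section setup

variable {G : Type} [Group G]

/-- a normal subgroup -/
def cxN (N : Subgroup G) [N.Normal] : CX N G where
  i := N.subtype
  c := MulAut.conjNormal
  hc g k := by simp
  inj := Subtype.val_injective

/-- normal subgroup in an intermediate one -/
def cxM (N M : Subgroup G) [N.Normal] (h : N ≤ M) : CX N M where
  i := Subgroup.inclusion h
  c := (MulAut.conjNormal (H := N)).comp M.subtype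
  hc g k := by apply Subtype.ext; simp
  inj := Subgroup.inclusion_injective h

lemma aut_bound [Finite G] {F : Type} [Field F] [Fintype F] (hF : Fintype.card F = 9)
    (M : Subgroup G) [M.Normal] (e : M ≃* PSL2 F)
    (hc : Subgroup.centralizer (M : Set G) = ⊥) : Nat.card G ∣ 1440 := by
  have hinj : Function.Injective (MulAut.conjNormal (H := M)) := by
    rw [injective_iff_map_eq_one]
    intro g hg
    rw [← Subgroup.mem_bot, ← hc, Subgroup.mem_centralizer_iff]
    intro h hh
    have h1 := congrArg (fun f : MulAut M => ((f ⟨h, hh⟩ : M) : G)) hg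
    simp only [MulAut.conjNormal_apply, MulAut.one_apply] at h1
    rw [mul_inv_eq_iff_eq_mul] at h1
    exact h1.symm
  have hfin : Finite (MulAut (PSL2 F)) := inferInstance
  have := Subgroup.card_dvd_of_injective ((MulAut.congr e).toMonoidHom.comp (MulAut.conjNormal (H := M)))
    ((MulAut.congr e).injective.comp hinj)
  exact this.trans (card_aut hF)

end setup
end CDB

namespace CDB

section main

variable {G : Type} [Group G]

lemma irr_comp {A B : Type} [Group A] [Group B] {V : Type} [AddCommGroup V] [Module ℂ V]
    (q : A →* B) (hq : Function.Surjective q) {ρ : Representation ℂ B V} (hρ : Irr ρ) :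
    Irr (MonoidHom.comp ρ q : Representation ℂ A V) := by
  refine ⟨hρ.1, fun S hS => hρ.2 S ?_⟩
  intro g v hv
  obtain ⟨a, rfl⟩ := hq g
  exact hS a v hv

/-- an irreducible representation of `G` over one of `M` trivial on `N` is trivial on `N` -/
lemma triv_over (N M : Subgroup G) [N.Normal] [M.Normal] (hNM : N ≤ M) {E V : Type} [AddCommGroup E]
    [Module ℂ E] [AddCommGroup V] [Module ℂ V] {β : Representation ℂ M E}
    (hβ : ∀ (k : N) (x : E), β (Subgroup.inclusion hNM k) x = x) {ρ : Representation ℂ G V}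
    (hρ : Irr ρ) {φ : E →ₗ[ℂ] V} (h : φ ∈ Hm β ((cxN M).res ρ)) (h0 : φ ≠ 0) :
    ∀ (k : N) (x : V), ρ k x = x := by
  let S : Submodule ℂ V :=
    { carrier := {v | ∀ k : N, ρ k v = v}
      add_mem' := by intro a b ha hb k; rw [map_add, ha k, hb k]
      zero_mem' := by intro k; rw [map_zero]
      smul_mem' := by intro c a ha k; rw [map_smul, ha k] }
  have hst : Stab ρ S := by
    intro g v hv k
    have h1 : (k : G) * g = g * (g⁻¹ * k * g) := by group
    have hk : g⁻¹ * k * g ∈ N := by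
      have := (inferInstance : N.Normal).conj_mem k k.2 g⁻¹
      simpa using this
    have h2 : ρ (g⁻¹ * k * g) v = v := hv ⟨_, hk⟩
    rw [← Module.End.mul_apply, ← map_mul, h1, map_mul, Module.End.mul_apply, h2]
  have hS : S = ⊤ := by
    rcases hρ.2 S hst with h1 | h1
    · exfalso
      apply h0
      ext x
      have : φ x ∈ S := by
        intro k
        have h2 := h (Subgroup.inclusion hNM k) x
        rw [hβ] at h2
        exact h2.symm
      rw [h1] at this
      simpa using this
    · exact h1
  intro k x
  have : x ∈ S := by rw [hS]; trivial
  exact this k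

lemma cxN_range (N : Subgroup G) [N.Normal] : (cxN N).i.range = N := Subgroup.range_subtype N

lemma relIndex_dvd [Finite G] (I M : Subgroup G) [M.Normal] : I.relIndex M ∣ I.index := by
  have h1 := Subgroup.relIndex_mul_relIndex (I ⊓ M) M (I ⊔ M) inf_le_right le_sup_right
  have h2 := Subgroup.relIndex_mul_relIndex (I ⊓ M) I (I ⊔ M) inf_le_left le_sup_left
  rw [Subgroup.inf_relIndex_right, Subgroup.relIndex_sup_right] at h1
  rw [Subgroup.inf_relIndex_left] at h2
  have h3 : M.relIndex I * I.relIndex M = M.relIndex I * I.relIndex (I ⊔ M) := by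
    rw [h2, ← h1, mul_comm]
  have h0 : 0 < M.relIndex I := Nat.pos_of_ne_zero Subgroup.index_ne_zero_of_finite
  rw [Nat.eq_of_mul_eq_mul_left h0 h3]
  exact Subgroup.relIndex_dvd_index_of_le le_sup_left

lemma classify [Finite G] {F : Type} [Field F] [Fintype F] (hF : Fintype.card F = 9)
    (hG : TwoPrimeHypothesis G) (N M : Subgroup G) [N.Normal] [M.Normal] (hNM : N ≤ M)
    (q : M →* PSL2 F) (hq : Function.Surjective q) (hk : ∀ m : M, q m = 1 ↔ (m : G) ∈ N)
    (hN : N.index ∣ 1440) : ∀ a ∈ charDegrees G, a ∈ LL ∨ ∃ c ∈ CC, c ∣ a := by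
  intro a ha
  have hker : q.ker = N.subgroupOf M := by
    ext m; rw [MonoidHom.mem_ker, Subgroup.mem_subgroupOf, hk]
  have hrel : N.relIndex M = 360 := by
    rw [Subgroup.relIndex, ← hker, Subgroup.index_ker, MonoidHom.range_eq_top.2 hq,
      Subgroup.card_top, card_PSL hF]
  have hM4 : M.index ∣ 4 := by
    have h1 := Subgroup.relIndex_mul_index hNM
    rw [← h1, hrel] at hN
    exact Nat.dvd_of_mul_dvd_mul_left (by norm_num : 0 < 360) hN
  obtain ⟨V, _, _, _, ρ, hρ, hVa⟩ := (mem_charDegrees_iff a).1 ha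
  -- an irreducible constituent of the restriction to N
  have hstT : Stab ((cxN N).res ρ) ⊤ := fun _ _ _ => trivial
  have htop : (⊤ : Submodule ℂ V) ≠ ⊥ := by
    have := hρ.1
    exact top_ne_bot
  obtain ⟨T, hT, -, hσ⟩ := exists_irr_sub ((cxN N).res ρ) ⊤ hstT htop
  have hT0 : T.subtype ≠ 0 := by
    have := hσ.1
    obtain ⟨x, hx⟩ := exists_ne (0 : T)
    intro h
    apply hx
    apply Subtype.ext
    exact LinearMap.congr_fun h x
  have hTm : T.subtype ∈ Hm (sub ((cxN N).res ρ) T hT) ((cxN N).res ρ) := fun g u => rfl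
  revert hσ hTm
  generalize sub ((cxN N).res ρ) T hT = σ
  intro hσ hTm
  set I := (cxN N).inertia σ with hI
  set t := I.index with ht
  set e := Module.finrank ℂ (Hm σ ((cxN N).res ρ)) with he
  set θ := Module.finrank ℂ T with hθ
  have hdeg : a = t * e * θ := by rw [← hVa]; exact (cxN N).degree_formula hσ hρ hTm hT0
  have hs : t * e ∣ 1440 := by
    have := (cxN N).index_dvd hσ hρ hTm hT0
    rw [cxN_range] at this
    exact this.trans hN
  have hθ0 : 0 < θ := by
    have := hσ.1
    exact Module.finrank_pos
  have ht0 : t ≠ 0 := fun h => by rw [h] at hs; simp at hs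
  have he0 : e ≠ 0 := fun h => by rw [h] at hs; simp at hs
  -- general description of the characters over σ
  have hover : ∀ (W : Type) (_ : AddCommGroup W) (_ : Module ℂ W) (_ : FiniteDimensional ℂ W)
      (κ : Representation ℂ G W), Irr κ → Module.finrank ℂ (Hm σ ((cxN N).res κ)) ≠ 0 →
      t * Module.finrank ℂ (Hm σ ((cxN N).res κ)) * θ ∈ charDegrees G := by
    intro W _ _ _ κ hκ hne
    obtain ⟨φ, hφ, hφ0⟩ := exists_ne_of_finrank hne
    rw [mem_charDegrees_iff]
    exact ⟨W, _, _, inferInstance, κ, hκ, (cxN N).degree_formula hσ hκ hφ hφ0⟩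
  rcases div1440 (t * e) (Nat.mem_divisors.2 ⟨hs, by norm_num⟩) with hL | ⟨c, hc, hcs⟩
  swap
  · exact Or.inr ⟨c, hc, by rw [hdeg]; exact hcs.mul_right _⟩
  by_cases hθs : θ ∈ ({1, 2, 4} : Finset ℕ)
  · rw [hdeg]; exact LL_small _ hL _ hθs
  have hθ1 : θ ≠ 1 ∧ θ ≠ 2 ∧ θ ≠ 4 := by
    simp only [Finset.mem_insert, Finset.mem_singleton, not_or] at hθs
    exact hθs
  -- inertia in M
  set J : Subgroup M := I.subgroupOf M with hJ
  have hJI : (cxM N M hNM).inertia σ = J := rfl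
  have hNI : N ≤ I := by
    have := (cxN N).range_le_inertia σ
    rwa [cxN_range] at this
  have hkJ : q.ker ≤ J := by
    rw [hker]; exact Subgroup.comap_mono hNI
  have hJmap : (J.map q).index = J.index := Subgroup.index_map_eq J hq hkJ
  have hJt : J.index ∣ t := relIndex_dvd I M
  by_cases hJ1 : J.index = 1
  swap
  · -- case (i)
    exfalso
    have h6 : 6 ≤ J.index := by
      rw [← hJmap]; exact no_small_index hF _ (by rw [hJmap]; exact hJ1)
    obtain ⟨h1, h2⟩ := LL_big _ hL J.index
      (Nat.mem_divisors.2 ⟨hJt.trans (Dvd.intro _ rfl), Nat.mul_ne_zero ht0 he0⟩) h6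
    have hJle : J.index ≤ t := Nat.le_of_dvd (Nat.pos_of_ne_zero ht0) hJt
    have he1 : e = 1 := by
      by_contra hne
      have : 2 ≤ e := by omega
      have : t * 2 ≤ t * e := Nat.mul_le_mul_left _ this
      omega
    have hJt' : J.index = t := by rw [h1, he1, mul_one]
    have hat : a = t * θ := by rw [hdeg, he1, mul_one]
    have hom : 3 ≤ om (t * θ) := by
      rw [hJt'] at h2
      rcases h2 with h | h | h | h <;> rw [h]
      · exact om_three (a := 2) (b := 3) (by norm_num) (by norm_num) (by omega)
      · exact om_three (a := 3) (b := 3) (by norm_num) (by norm_num) (by omega)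
      · exact om_three (a := 2) (b := 5) (by norm_num) (by norm_num) (by omega)
      · exact om_three (a := 3) (b := 5) (by norm_num) (by norm_num) (by omega)
    have hone : ∀ (W : Type) (_ : AddCommGroup W) (_ : Module ℂ W) (_ : FiniteDimensional ℂ W)
        (κ : Representation ℂ G W), Irr κ → Module.finrank ℂ (Hm σ ((cxN N).res κ)) ≤ 1 := by
      intro W _ _ _ κ hκ
      by_contra hlt
      have hne : Module.finrank ℂ (Hm σ ((cxN N).res κ)) ≠ 0 := by omega
      have hmem := hover W _ _ inferInstance κ hκ hne
      have heq := tp hG ha hmem hom (by rw [hat]) ⟨Module.finrank ℂ (Hm σ ((cxN N).res κ)), by ring⟩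
      rw [hat] at heq
      have h3 : t * θ * 1 = t * θ * Module.finrank ℂ (Hm σ ((cxN N).res κ)) := by
        linarith
      have := Nat.eq_of_mul_eq_mul_left (Nat.mul_pos (Nat.pos_of_ne_zero ht0) hθ0) h3
      omega
    have hab : ∀ x ∈ J.map q, ∀ y ∈ J.map q, x * y = y * x := by
      rintro _ ⟨x, hx, rfl⟩ _ ⟨y, hy, rfl⟩
      have h3 := (cxN N).comm_mem hσ hone (x := (x : G)) (y := (y : G)) hx hy
      rw [cxN_range] at h3
      have h4 : q ((x * y)⁻¹ * (y * x)) = 1 := by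
        rw [hk]; exact h3
      rw [map_mul, map_inv, inv_mul_eq_one, map_mul, map_mul] at h4
      exact h4
    have hcard := Subgroup.card_mul_index (J.map q)
    rw [card_PSL hF, hJmap] at hcard
    rcases h2 with h | h | h | h <;> rw [h] at hcard
    · exact no_abelian hF _ hab (by omega) 3 (by norm_num) (by norm_num) (by omega)
    · exact no_abelian hF _ hab (by omega) 5 (by norm_num) (by norm_num) (by omega)
    · exact no_abelian hF _ hab (by omega) 3 (by norm_num) (by norm_num) (by omega)
    · exact no_abelian hF _ hab (by omega) 3 (by norm_num) (by norm_num) (by omega)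
  -- case (ii)
  have hJtop : J = ⊤ := Subgroup.index_eq_one.1 hJ1
  have hMI : M ≤ I := Subgroup.subgroupOf_eq_top.1 hJtop
  have ht4 : t ∣ 4 := (Subgroup.index_dvd_of_le hMI).trans hM4
  have hpull : ∀ {E : Type} [AddCommGroup E] [Module ℂ E] (β : Representation ℂ (PSL2 F) E)
      (k : N) (x : E), (MonoidHom.comp β q : Representation ℂ M E) (Subgroup.inclusion hNM k) x = x := by
    intro E _ _ β k x
    have : q (Subgroup.inclusion hNM k) = 1 := by rw [hk]; exact k.2
    show β (q (Subgroup.inclusion hNM k)) x = x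
    rw [this, map_one]; rfl
  rcases (cxM N M hNM).extend_or_prime hσ (hJI.trans hJtop) with ⟨τ, hτ⟩ | ⟨r, hr, hrθ, hrall⟩
  · exfalso
    obtain ⟨E, _, _, _, β, hβ, h8⟩ := exists_eight hF
    have hβ' := irr_comp q hq hβ
    obtain ⟨S, _, _, _, κ, hκ, hS⟩ := (cxM N M hNM).exists_tensor hτ hβ' (hpull β)
    obtain ⟨W, _, _, _, χ, hχ, φ, hφ, hφ0⟩ := (cxN M).exists_over hκ
    obtain ⟨W', _, _, _, χ', hχ', φ', hφ', hφ0'⟩ := (cxN M).exists_over hβ'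
    have d1 := (cxN M).degree_formula hκ hχ hφ hφ0
    have d2 := (cxN M).degree_formula hβ' hχ' hφ' hφ0'
    have d3 := (cxN M).index_dvd hβ' hχ' hφ' hφ0'
    rw [cxN_range] at d3
    have d4 := d3.trans hM4
    have m1 : Module.finrank ℂ W ∈ charDegrees G :=
      (mem_charDegrees_iff _).2 ⟨W, _, _, inferInstance, χ, hχ, rfl⟩
    have m2 : Module.finrank ℂ W' ∈ charDegrees G :=
      (mem_charDegrees_iff _).2 ⟨W', _, _, inferInstance, χ', hχ', rfl⟩
    have heq := tp hG m1 m2 (om_CC 8 (by decide))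
      (by rw [d1, hS]; exact (h8.mul_right _).mul_left _) (by rw [d2]; exact h8.mul_left _)
    have hE0 : 0 < Module.finrank ℂ E := by
      have := hβ.1
      exact Module.finrank_pos
    rw [d1, d2, hS] at heq
    have hdv : θ ∣ 4 := by
      refine Dvd.dvd.trans ?_ d4
      refine Nat.dvd_of_mul_dvd_mul_right hE0 ?_
      rw [← heq]
      exact ⟨((cxN M).inertia κ).index * Module.finrank ℂ (Hm κ ((cxN M).res χ)), by ring⟩
    have : θ ≤ 4 := Nat.le_of_dvd (by norm_num) hdv
    obtain ⟨h1, h2, h4⟩ := hθ1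
    have h3 : θ = 3 := by omega
    rw [h3] at hdv
    omega
  -- the prime r
  replace hrθ : r ∣ θ := hrθ
  have hr2 : r ^ 2 ∣ 360 := by
    have h1 := (cxM N M hNM).sq_dvd_index hσ (hJI.trans hJtop) r hrall
    have h2 : (cxM N M hNM).i.range = N.subgroupOf M := by
      ext m
      rw [Subgroup.mem_subgroupOf]
      constructor
      · rintro ⟨k, rfl⟩; exact k.2
      · intro hm; exact ⟨⟨m, hm⟩, rfl⟩
    rw [h2] at h1
    rw [← hrel]; exact h1
  have hr23 : r = 2 ∨ r = 3 := by
    have : r ^ 2 ≤ 360 := Nat.le_of_dvd (by norm_num) hr2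
    have hr18 : r ≤ 18 := by nlinarith
    interval_cases r <;> revert hr2 hr <;> norm_num
  have hre : r ∣ e := hrall V _ _ inferInstance ((cxN M).res ρ)
  have hreall : ∀ (W : Type) (_ : AddCommGroup W) (_ : Module ℂ W) (_ : FiniteDimensional ℂ W)
      (κ : Representation ℂ G W), r ∣ Module.finrank ℂ (Hm σ ((cxN N).res κ)) :=
    fun W _ _ _ κ => hrall W _ _ inferInstance ((cxN M).res κ)
  -- the remaining situation
  have hrem : t = 1 → e = r → θ ≠ r → False := by
    intro ht1 her hm1
    obtain ⟨m, hm⟩ := hrθ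
    have hm2 : 2 ≤ m := by
      rcases Nat.lt_or_ge m 2 with h | h
      · exfalso
        have : m ≠ 0 := by rintro rfl; omega
        exact hm1 (by rw [hm, show m = 1 by omega, mul_one])
      · exact h
    have hom : 3 ≤ om (r * θ) := by
      rw [hm, ← mul_assoc]; exact om_three hr.two_le hr.two_le hm2
    have hIt : I = ⊤ := Subgroup.index_eq_one.1 ht1
    obtain ⟨E, _, _, _, β, hβ, h10⟩ := exists_ten hF
    have hβ' := irr_comp q hq hβ
    obtain ⟨W, _, _, _, χ, hχ, φ, hφ, hφ0⟩ := (cxN M).exists_over hβ'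
    have htr := triv_over N M hNM (hpull β) hχ hφ hφ0
    have hW10 : 10 ≤ Module.finrank ℂ W := by
      have hinj : Function.Injective φ := by
        rw [← LinearMap.ker_eq_bot]
        have hst : Stab (MonoidHom.comp β q : Representation ℂ M E) (LinearMap.ker φ) := stab_ker hφ
        rcases hβ'.2 _ hst with h | h
        · exact h
        · exact absurd (LinearMap.ker_eq_top.1 h) hφ0
      exact h10.trans (LinearMap.finrank_le_finrank_of_injective hinj)
    obtain ⟨S, _, _, _, κ, hκ, hκ0, hle⟩ := (cxN N).exists_mult hσ hIt hρ hTm hT0 hχ htr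
    have hmem := hover S _ _ inferInstance κ hκ hκ0
    have har : a = r * θ := by rw [hdeg, ht1, her, one_mul]
    have heq := tp hG ha hmem hom (by rw [har]) (by
      rw [ht1, one_mul]; exact Nat.mul_dvd_mul_right (hreall S _ _ inferInstance κ) θ)
    rw [har, ht1, one_mul] at heq
    have h3 := Nat.eq_of_mul_eq_mul_right hθ0 heq
    rw [← h3, ← he, her] at hle
    have : r * r ≤ 9 := by rcases hr23 with h | h <;> rw [h] <;> norm_num
    omega
  obtain ⟨m, hm⟩ := hrθ
  obtain ⟨f, hf⟩ := hre
  have ht124 : t = 1 ∨ t = 2 ∨ t = 4 := by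
    have : t ≤ 4 := Nat.le_of_dvd (by norm_num) ht4
    interval_cases t <;> first | omega | simp_all
  rcases ht124 with ht1 | ht2 | ht2
  · rw [ht1, one_mul] at hL hdeg
    simp only [LL, Finset.mem_insert, Finset.mem_singleton] at hL
    rcases hr23 with rfl | rfl
    · have he' : e = 2 ∨ e = 4 ∨ e = 6 ∨ e = 10 := by omega
      rcases he' with h | h | h | h
      · exfalso
        exact hrem ht1 h hθ1.2.1
      · exact Or.inr ⟨8, by decide, m, by rw [hdeg, h, hm]; ring⟩
      · exact Or.inr ⟨12, by decide, m, by rw [hdeg, h, hm]; ring⟩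
      · exact Or.inr ⟨20, by decide, m, by rw [hdeg, h, hm]; ring⟩
    · have he' : e = 3 ∨ e = 6 ∨ e = 9 ∨ e = 15 := by omega
      rcases he' with h | h | h | h
      · by_cases h3 : θ = 3
        · left; rw [hdeg, h, h3]; decide
        · exfalso
          exact hrem ht1 h h3
      · exact Or.inr ⟨18, by decide, m, by rw [hdeg, h, hm]; ring⟩
      · exact Or.inr ⟨27, by decide, m, by rw [hdeg, h, hm]; ring⟩
      · exact Or.inr ⟨45, by decide, m, by rw [hdeg, h, hm]; ring⟩
  · rcases hr23 with rfl | rfl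
    · exact Or.inr ⟨8, by decide, f * m, by rw [hdeg, ht2, hf, hm]; ring⟩
    · exact Or.inr ⟨18, by decide, f * m, by rw [hdeg, ht2, hf, hm]; ring⟩
  · rcases hr23 with rfl | rfl
    · exact Or.inr ⟨8, by decide, 2 * (f * m), by rw [hdeg, ht2, hf, hm]; ring⟩
    · exact Or.inr ⟨18, by decide, 2 * (f * m), by rw [hdeg, ht2, hf, hm]; ring⟩

end main
end CDB

/-- If `G` satisfies the two-prime hypothesis and has normal subgroups `N ≤ M` with
`M/N ≅ PSL₂(9)` and the centralizer of `M/N` in `G/N` trivial, then `|cd(G)| ≤ 16`. -/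
theorem cd_bound_psl2_9
    (F : Type) [Field F] [Fintype F] (hF : Fintype.card F = 9)
    (G : Type) [Group G] [Finite G] (hG : TwoPrimeHypothesis G)
    (N M : Subgroup G) [N.Normal] [M.Normal] (hNM : N ≤ M)
    (hiso : Nonempty ((M.map (QuotientGroup.mk' N)) ≃* PSL2 F))
    (hcent : Subgroup.centralizer ((M.map (QuotientGroup.mk' N)) : Set (G ⧸ N)) = ⊥) :
    (charDegrees G).ncard ≤ 16 := by
  obtain ⟨e⟩ := hiso
  have hnorm : (M.map (QuotientGroup.mk' N)).Normal :=
    Subgroup.Normal.map inferInstance _ (QuotientGroup.mk'_surjective N)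
  have hN : N.index ∣ 1440 := CDB.aut_bound hF _ e hcent
  refine CDB.count hG (CDB.classify hF hG N M hNM
    (e.toMonoidHom.comp ((QuotientGroup.mk' N).subgroupMap M)) ?_ ?_ hN)
  · exact e.surjective.comp ((QuotientGroup.mk' N).subgroupMap_surjective M)
  · intro m
    show e ((QuotientGroup.mk' N).subgroupMap M m) = 1 ↔ _
    rw [map_eq_one_iff e e.injective, ← QuotientGroup.eq_one_iff, ← Subtype.coe_inj]
    rfl
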